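/- arXiv:2408.08445 — 10 statements merged into one kernel-verified Lean document; each statement's English description precedes it below -/
import Mathlib

section
/- Let M be a point process on ℝ^k formed by random points {X_n}, with factorial moment measures μ_n as in the context. Let 𝓘 be a dissecting semi-ring of Borel subsets of ℝ^k: 𝓘 is closed under binary intersections, every difference of two members of 𝓘 is a finite disjoint union of members of 𝓘, every open subset of ℝ^k is a countable union of members of 𝓘, and every bounded Borel set is contained in a finite union of members of 𝓘. Let λ be a locally finite Borel measure on ℝ^k, fix n ≥ 1, and let u_n : (ℝ^k)ⁿ → [0,∞] be measurable and λⁿ-a.e. symmetric (for every permutation σ of {1,…,n}, u_n(x_{σ(1)},…,x_{σ(n)}) = u_n(x₁,…,x_n) for λⁿ-a.e. x). Suppose that for all m ≥ 1, all n₁,…,n_m ∈ ℕ with n₁+⋯+n_m = n, and all pairwise disjoint bounded A₁,…,A_m ∈ 𝓘, E[∏_{j=1}^m M(A_j)!/(M(A_j)−n_j)!] = ∫_{A₁^{n₁}×⋯×A_m^{n_m}} u_n(x₁,…,x_n) λⁿ(dx) < ∞. Then μ_n(A) = ∫_A u_n dλⁿ for every Borel set A ⊆ (ℝ^k)ⁿ.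 -/
open MeasureTheory
open scoped ENNReal

noncomputable section

/-- A point process on `ℝ^k`. -/
def IsPointProcess (k : ℕ) {Ω : Type*} [MeasurableSpace Ω]
    (M : Ω → Measure (Fin k → ℝ)) : Prop :=
  (∀ A : Set (Fin k → ℝ), MeasurableSet A → Measurable fun ω => M ω A) ∧
  (∀ ω, ∀ B : Set (Fin k → ℝ), MeasurableSet B → Bornology.IsBounded B →
    ∃ n : ℕ, M ω B = n)

/-- Measurability of an `ℝ^k ∪ {∂}`-valued map (`∂ = none`). -/
def OptMeasurable {k : ℕ} {Ω : Type*} [MeasurableSpace Ω]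
    (X : Ω → Option (Fin k → ℝ)) : Prop :=
  ∀ A : Set (Fin k → ℝ), MeasurableSet A →
    MeasurableSet {ω | X ω ∈ Option.some '' A}

/-- The sequence `X` forms the point process `M`. -/
def Forms {k : ℕ} {Ω : Type*} [MeasurableSpace Ω]
    (X : ℕ → Ω → Option (Fin k → ℝ)) (M : Ω → Measure (Fin k → ℝ)) : Prop :=
  ∀ ω, ∀ A : Set (Fin k → ℝ), MeasurableSet A →
    M ω A = ∑' n : ℕ, Set.indicator (Option.some '' A) (fun _ => (1 : ℝ≥0∞)) (X n ω)

/-- `μ` is the `n`-th factorial moment measure of the point process formed by `X`: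
`μ(A) = E[∑ 1{(X_{i₁},…,X_{iₙ}) ∈ A}]`, the sum over `n`-tuples of distinct indices. -/
def IsFactorialMomentMeasure {k : ℕ} {Ω : Type*} [MeasurableSpace Ω] (P : Measure Ω)
    (X : ℕ → Ω → Option (Fin k → ℝ)) (n : ℕ) (μ : Measure (Fin n → (Fin k → ℝ))) : Prop :=
  ∀ A : Set (Fin n → (Fin k → ℝ)), MeasurableSet A →
    μ A = ∫⁻ ω, ∑' i : Fin n → ℕ,
      Set.indicator {i : Fin n → ℕ | Function.Injective i ∧
        ∃ y ∈ A, ∀ l, X (i l) ω = Option.some (y l)} (fun _ => (1 : ℝ≥0∞)) i ∂P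

/-- Descending factorial `x (x-1) ⋯ (x-n+1)` in `ℝ≥0∞`. -/
def descFactE (x : ℝ≥0∞) (n : ℕ) : ℝ≥0∞ := ∏ i ∈ Finset.range n, (x - (i : ℝ≥0∞))

/-- A dissecting semi-ring of Borel subsets of `ℝ^k`. -/
def IsDissectingSemiRing (k : ℕ) (I : Set (Set (Fin k → ℝ))) : Prop :=
  (∀ A ∈ I, MeasurableSet A) ∧
  (∀ A ∈ I, ∀ B ∈ I, A ∩ B ∈ I) ∧
  (∀ A ∈ I, ∀ B ∈ I, ∃ s : Finset (Set (Fin k → ℝ)), (↑s : Set (Set (Fin k → ℝ))) ⊆ I ∧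
    (↑s : Set (Set (Fin k → ℝ))).PairwiseDisjoint id ∧ A \ B = ⋃₀ ↑s) ∧
  (∀ G : Set (Fin k → ℝ), IsOpen G →
    ∃ f : ℕ → Set (Fin k → ℝ), (∀ i, f i ∈ I) ∧ G = ⋃ i, f i) ∧
  (∀ B : Set (Fin k → ℝ), MeasurableSet B → Bornology.IsBounded B →
    ∃ s : Finset (Set (Fin k → ℝ)), (↑s : Set (Set (Fin k → ℝ))) ⊆ I ∧ B ⊆ ⋃₀ ↑s)

theorem descFactE_natCast (a b : ℕ) : descFactE (a : ℝ≥0∞) b = (a.descFactorial b : ℕ) := by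
  unfold descFactE
  rw [Nat.descFactorial_eq_prod_range]
  push_cast
  rfl

/-- Counting injective tuples with entries in prescribed disjoint finite sets. -/
theorem card_inj_tuples {n m : ℕ} (β : Fin n → Fin m) (S : Fin m → Set ℕ)
    (hfin : ∀ j, (S j).Finite) (hd : ∀ i j, i ≠ j → Disjoint (S i) (S j)) :
    ({i : Fin n → ℕ | Function.Injective i ∧ ∀ l, i l ∈ S (β l)} : Set _).encard
      = ((∏ j, ((S j).ncard).descFactorial
          ((Finset.univ.filter fun l => β l = j).card) : ℕ) : ℕ∞) := by
  classical
  haveI : ∀ j, Fintype (S j) := fun j => (hfin j).fintype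
  let e : ({i : Fin n → ℕ | Function.Injective i ∧ ∀ l, i l ∈ S (β l)} : Set _) ≃
      (∀ j, {l // β l = j} ↪ S j) :=
    { toFun := fun i j => ⟨fun l => ⟨i.1 l.1, by have := i.2.2 l.1; rwa [l.2] at this⟩, by
        intro l l' h
        have : i.1 l.1 = i.1 l'.1 := by simpa using h
        exact Subtype.ext (i.2.1 this)⟩
      invFun := fun F => ⟨fun l => (F (β l) ⟨l, rfl⟩ : ℕ), by
        refine ⟨?_, fun l => (F (β l) ⟨l, rfl⟩).2⟩
        intro l l' h
        by_cases hl : β l = β l'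
        · have key : ∀ j (h1 : β l = j), (F j ⟨l, h1⟩ : ℕ) = F (β l) ⟨l, rfl⟩ := by
            intro j h1; subst h1; rfl
          have h2 : (F (β l') ⟨l, hl⟩ : ℕ) = F (β l') ⟨l', rfl⟩ := by
            rw [key]; exact h
          have h3 := (F (β l')).injective (Subtype.ext h2)
          exact congrArg Subtype.val h3
        · exfalso
          refine Set.disjoint_left.1 (hd _ _ hl) (F (β l) ⟨l, rfl⟩).2 ?_
          have h' : (F (β l) ⟨l, rfl⟩ : ℕ) = F (β l') ⟨l', rfl⟩ := h
          rw [h']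
          exact (F (β l') ⟨l', rfl⟩).2⟩
      left_inv := fun i => rfl
      right_inv := by
        intro F
        funext j
        ext ⟨l, hl⟩
        subst hl
        rfl }
  rw [Set.encard_congr (t := (Set.univ : Set (∀ j, {l // β l = j} ↪ S j)))
    (e.trans (Equiv.Set.univ _).symm), Set.encard_univ, ENat.card_eq_coe_fintype_card,
    Fintype.card_pi]
  congr 1
  refine Finset.prod_congr rfl fun j _ => ?_
  have h1 : Fintype.card (S j) = (S j).ncard := by
    rw [← Nat.card_eq_fintype_card]
    rfl
  have h2 : Fintype.card {l // β l = j} = (Finset.univ.filter fun l => β l = j).card :=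
    Fintype.card_subtype _
  rw [Fintype.card_embedding_eq, h1, h2]

/-- Pointwise identity. -/
theorem tsum_eq_prod {k n m : ℕ} (x : ℕ → Option (Fin k → ℝ)) (β : Fin n → Fin m)
    (A : Fin m → Set (Fin k → ℝ)) (hd : ∀ i j, i ≠ j → Disjoint (A i) (A j))
    (c : Fin m → ℝ≥0∞) (hc : ∀ j, ∃ a : ℕ, c j = a)
    (hcs : ∀ j, c j = ∑' i : ℕ, Set.indicator (Option.some '' A j) (fun _ => (1 : ℝ≥0∞)) (x i)) :
    ∑' i : Fin n → ℕ, Set.indicator {i : Fin n → ℕ | Function.Injective i ∧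
        ∃ y ∈ {y : Fin n → (Fin k → ℝ) | ∀ l, y l ∈ A (β l)},
          ∀ l, x (i l) = Option.some (y l)} (fun _ => (1 : ℝ≥0∞)) i
      = ∏ j, descFactE (c j) ((Finset.univ.filter fun l => β l = j).card) := by
  let S : Fin m → Set ℕ := fun j => {i | x i ∈ Option.some '' A j}
  have hcS : ∀ j, c j = ((S j).encard : ℝ≥0∞) := by
    intro j
    rw [hcs j, ← ENNReal.tsum_set_one, tsum_subtype (S j) (fun _ => (1 : ℝ≥0∞))]
    rfl
  have hfin : ∀ j, (S j).Finite := by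
    intro j
    obtain ⟨a, ha⟩ := hc j
    rw [← Set.encard_ne_top_iff]
    intro h
    rw [hcS j, h] at ha
    simp at ha
  have hc' : ∀ j, c j = ((S j).ncard : ℝ≥0∞) := by
    intro j
    rw [hcS j, ← (hfin j).cast_ncard_eq]
    simp
  have hset : {i : Fin n → ℕ | Function.Injective i ∧
        ∃ y ∈ {y : Fin n → (Fin k → ℝ) | ∀ l, y l ∈ A (β l)},
          ∀ l, x (i l) = Option.some (y l)}
      = {i : Fin n → ℕ | Function.Injective i ∧ ∀ l, i l ∈ S (β l)} := by
    ext i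
    simp only [Set.mem_ofPred_eq, S, Set.mem_image]
    refine and_congr_right fun _ => ⟨?_, ?_⟩
    · rintro ⟨y, hy, h⟩ l
      exact ⟨y l, hy l, (h l).symm⟩
    · intro h
      choose y hy hy' using h
      exact ⟨y, hy, fun l => (hy' l).symm⟩
  rw [hset, ← tsum_subtype _ (fun _ => (1 : ℝ≥0∞)), ENNReal.tsum_set_one,
    card_inj_tuples β S hfin]
  · simp only [hc', descFactE_natCast]
    rw [ENat.toENNReal_coe]
    push_cast
    rfl
  · intro i j hij
    rw [Set.disjoint_left]
    rintro p ⟨a, ha, hxa⟩ ⟨b, hb, hxb⟩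
    rw [← hxa] at hxb
    obtain rfl := Option.some.inj hxb
    exact Set.disjoint_left.1 (hd i j hij) ha hb

/-- The boxes with equal-or-disjoint sides. -/
def boxSys {k : ℕ} (n : ℕ) (J : Set (Set (Fin k → ℝ))) : Set (Set (Fin n → (Fin k → ℝ))) :=
  {T | ∃ B : Fin n → Set (Fin k → ℝ), (∀ l, B l ∈ J) ∧
    (∀ l l', B l = B l' ∨ Disjoint (B l) (B l')) ∧ T = {x | ∀ l, x l ∈ B l}}

theorem boxSys_pi {k n : ℕ} {J : Set (Set (Fin k → ℝ))} (hJ : ∀ A ∈ J, ∀ B ∈ J, A ∩ B ∈ J) :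
    IsPiSystem (boxSys n J) := by
  rintro _ ⟨B, hB, hBd, rfl⟩ _ ⟨C, hC, hCd, rfl⟩ -
  refine ⟨fun l => B l ∩ C l, fun l => hJ _ (hB l) _ (hC l), ?_, ?_⟩
  · intro l l'
    rcases hBd l l' with h | h
    · rcases hCd l l' with h' | h'
      · left; simp only [h, h']
      · right; exact h'.mono Set.inter_subset_right Set.inter_subset_right
    · right; exact h.mono Set.inter_subset_left Set.inter_subset_left
  · ext x
    simp only [Set.mem_inter_iff, Set.mem_ofPred_eq]
    exact forall_and.symm

theorem boxSys_countable {k n : ℕ} {J : Set (Set (Fin k → ℝ))} (hJ : J.Countable) :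
    (boxSys n J).Countable := by
  have : (Set.pi Set.univ (fun _ : Fin n => J)).Countable :=
    Set.countable_univ_pi fun _ => hJ
  refine (this.image (fun B => {x : Fin n → (Fin k → ℝ) | ∀ l, x l ∈ B l})).mono ?_
  rintro _ ⟨B, hB, -, rfl⟩
  exact ⟨B, fun l _ => hB l, rfl⟩

theorem exists_box {k n : ℕ} {J : Set (Set (Fin k → ℝ))}
    (hJ : ∀ (p : Fin k → ℝ) (ε : ℝ), 0 < ε → ∃ V ∈ J, p ∈ V ∧ V ⊆ Metric.ball p ε)
    (G : Set (Fin n → (Fin k → ℝ))) (hG : IsOpen G) (x : Fin n → (Fin k → ℝ)) (hx : x ∈ G) :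
    ∃ T ∈ boxSys n J, x ∈ T ∧ T ⊆ G := by
  obtain ⟨ε, hε, hball⟩ := Metric.isOpen_iff.1 hG x hx
  have hδ : ∃ δ > 0, ∀ l l', x l ≠ x l' → δ ≤ dist (x l) (x l') / 2 := by
    have h : ∀ᶠ δ in nhdsWithin (0 : ℝ) (Set.Ioi 0), ∀ l l', x l ≠ x l' →
        δ ≤ dist (x l) (x l') / 2 := by
      rw [Filter.eventually_all]
      intro l
      rw [Filter.eventually_all]
      intro l'
      by_cases hl : x l = x l'
      · simp [hl]
      · have : (0 : ℝ) < dist (x l) (x l') / 2 := by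
          have := dist_pos.2 hl
          linarith
        filter_upwards [mem_nhdsWithin_of_mem_nhds (Iic_mem_nhds this)] with δ h _
        exact h
    obtain ⟨δ, h1, h2⟩ := (h.and self_mem_nhdsWithin).exists
    exact ⟨δ, h2, h1⟩
  obtain ⟨δ, hδ0, hδ⟩ := hδ
  choose V hVJ hVm hVs using fun p => hJ p (min ε δ) (lt_min hε hδ0)
  refine ⟨_, ⟨fun l => V (x l), fun l => hVJ _, ?_, rfl⟩, fun l => hVm _, ?_⟩
  · intro l l'
    by_cases hl : x l = x l'
    · left; simp only [hl]
    · right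
      refine Disjoint.mono (hVs _) (hVs _) (Metric.ball_disjoint_ball ?_)
      have := hδ l l' hl
      have := min_le_right ε δ
      linarith
  · intro y hy
    refine hball ?_
    rw [Metric.mem_ball, dist_pi_lt_iff hε]
    intro l
    exact lt_of_lt_of_le (hVs _ (hy l)) (min_le_left _ _)

theorem exists_countable_sub {k : ℕ} {I : Set (Set (Fin k → ℝ))} (hI : IsDissectingSemiRing k I) :
    ∃ J ⊆ {A | A ∈ I ∧ Bornology.IsBounded A}, J.Countable ∧
      ∀ (p : Fin k → ℝ) (ε : ℝ), 0 < ε → ∃ V ∈ J, p ∈ V ∧ V ⊆ Metric.ball p ε := by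
  choose f hfI hfU using hI.2.2.2.1
  let b := TopologicalSpace.countableBasis (Fin k → ℝ)
  have hb := TopologicalSpace.isBasis_countableBasis (Fin k → ℝ)
  have hbc : b.Countable := TopologicalSpace.countable_countableBasis _
  refine ⟨{A | (∃ U, ∃ h : U ∈ b, ∃ i, A = f U (hb.isOpen h) i) ∧ Bornology.IsBounded A},
    ?_, ?_, ?_⟩
  · rintro _ ⟨⟨U, h, i, rfl⟩, hbd⟩
    exact ⟨hfI _ _ _, hbd⟩
  · haveI : Countable b := hbc.to_subtype
    refine (Set.countable_range (fun q : b × ℕ => f q.1.1 (hb.isOpen q.1.2) q.2)).mono ?_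
    rintro _ ⟨⟨U, h, i, rfl⟩, -⟩
    exact ⟨(⟨U, h⟩, i), rfl⟩
  · intro p ε hε
    obtain ⟨U, hU, hpU, hUs⟩ := hb.exists_subset_of_mem_open (Metric.mem_ball_self hε)
      (Metric.isOpen_ball (x := p))
    have hp : p ∈ ⋃ i, f U (hb.isOpen hU) i := by rw [← hfU]; exact hpU
    obtain ⟨i, hi⟩ := Set.mem_iUnion.1 hp
    have hs : f U (hb.isOpen hU) i ⊆ Metric.ball p ε :=
      ((Set.subset_iUnion _ i).trans (hfU U (hb.isOpen hU)).symm.subset).trans hUs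
    exact ⟨_, ⟨⟨U, hU, i, rfl⟩, Metric.isBounded_ball.subset hs⟩, hi, hs⟩

/-- Lemma 2.6 (`Cons`): a symmetric function reproducing the joint factorial
moments on a dissecting semi-ring is the `n`-th correlation function, i.e. the
density of the `n`-th factorial moment measure. -/
theorem stmt6 (k : ℕ) {Ω : Type*} [MeasurableSpace Ω] (P : Measure Ω)
    [IsProbabilityMeasure P]
    (M : Ω → Measure (Fin k → ℝ)) (hpp : IsPointProcess k M)
    (X : ℕ → Ω → Option (Fin k → ℝ)) (hXm : ∀ i, OptMeasurable (X i))
    (hform : Forms X M)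
    (I : Set (Set (Fin k → ℝ))) (hI : IsDissectingSemiRing k I)
    (lam : Measure (Fin k → ℝ)) [IsLocallyFiniteMeasure lam]
    (n₀ : ℕ) (hn₀ : 0 < n₀)
    (μ : Measure (Fin n₀ → (Fin k → ℝ))) (hμ : IsFactorialMomentMeasure P X n₀ μ)
    (u : (Fin n₀ → (Fin k → ℝ)) → ℝ≥0∞) (hu : Measurable u)
    (husym : ∀ σ : Equiv.Perm (Fin n₀),
      ∀ᵐ x ∂(Measure.pi fun _ : Fin n₀ => lam), u (x ∘ σ) = u x)
    (hmom : ∀ (m : ℕ) (A : Fin m → Set (Fin k → ℝ)) (β : Fin n₀ → Fin m),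
      Function.Surjective β →
      (∀ j, A j ∈ I) → (∀ j, Bornology.IsBounded (A j)) →
      (∀ i j, i ≠ j → Disjoint (A i) (A j)) →
      (∫⁻ ω, ∏ j, descFactE (M ω (A j))
          ((Finset.univ.filter fun l => β l = j).card) ∂P)
        = (∫⁻ x in {x : Fin n₀ → (Fin k → ℝ) | ∀ l, x l ∈ A (β l)}, u x
            ∂(Measure.pi fun _ : Fin n₀ => lam)) ∧
      (∫⁻ x in {x : Fin n₀ → (Fin k → ℝ) | ∀ l, x l ∈ A (β l)}, u x
          ∂(Measure.pi fun _ : Fin n₀ => lam)) ≠ ⊤) :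
    ∀ A : Set (Fin n₀ → (Fin k → ℝ)), MeasurableSet A →
      μ A = ∫⁻ x in A, u x ∂(Measure.pi fun _ : Fin n₀ => lam) := by
  let K : Set (Set (Fin k → ℝ)) := {A | A ∈ I ∧ Bornology.IsBounded A}
  have hKm : ∀ T ∈ boxSys n₀ K, MeasurableSet T := by
    rintro _ ⟨B, hB, -, rfl⟩
    rw [Set.ofPred_forall]
    exact MeasurableSet.iInter fun l => measurable_pi_apply l (hI.1 _ (hB l).1)
  have key : ∀ T ∈ boxSys n₀ K,
      μ T = ∫⁻ x in T, u x ∂(Measure.pi fun _ : Fin n₀ => lam) ∧ μ T ≠ ⊤ := by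
    intro T hT
    have hTm := hKm T hT
    obtain ⟨B, hB, hBd, rfl⟩ := hT
    haveI : Finite (Set.range B) := Set.finite_range B
    let e := Finite.equivFin (Set.range B)
    let A : Fin (Nat.card (Set.range B)) → Set (Fin k → ℝ) := fun j => (e.symm j).1
    let β : Fin n₀ → Fin (Nat.card (Set.range B)) := fun l => e ⟨B l, l, rfl⟩
    have hAβ : ∀ l, A (β l) = B l := by 
      intro l
      exact congrArg Subtype.val (e.symm_apply_apply ⟨B l, l, rfl⟩)
    have hβ : Function.Surjective β := by
      intro j
      obtain ⟨l, hl⟩ := (e.symm j).2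
      refine ⟨l, ?_⟩
      apply e.symm.injective
      simp only [β, Equiv.symm_apply_apply]
      exact Subtype.ext hl
    have hAK : ∀ j, A j ∈ K := by
      intro j
      obtain ⟨l, rfl⟩ := hβ j
      rw [hAβ]; exact hB l
    have hAd : ∀ i j, i ≠ j → Disjoint (A i) (A j) := by
      intro i j hij
      obtain ⟨l, rfl⟩ := hβ i
      obtain ⟨l', rfl⟩ := hβ j
      rw [hAβ, hAβ]
      rcases hBd l l' with h | h
      · exfalso; apply hij; simp only [β, h]
      · exact h
    have hset : {x : Fin n₀ → (Fin k → ℝ) | ∀ l, x l ∈ B l} = {x | ∀ l, x l ∈ A (β l)} := by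
      simp only [hAβ]
    rw [hset] at hTm ⊢
    obtain ⟨h1, h2⟩ := hmom _ A β hβ (fun j => (hAK j).1) (fun j => (hAK j).2) hAd
    have h3 : μ {x | ∀ l, x l ∈ A (β l)} =
        ∫⁻ ω, ∏ j, descFactE (M ω (A j))
          ((Finset.univ.filter fun l => β l = j).card) ∂P := by
      rw [hμ _ hTm]
      refine lintegral_congr fun ω => ?_
      exact tsum_eq_prod (fun i => X i ω) β A hAd (fun j => M ω (A j))
        (fun j => hpp.2 ω _ (hI.1 _ (hAK j).1) (hAK j).2)
        (fun j => hform ω _ (hI.1 _ (hAK j).1))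
    exact ⟨h3.trans h1, by rw [h3, h1]; exact h2⟩
  obtain ⟨J, hJK, hJc, hJ⟩ := exists_countable_sub hI
  have hsub : boxSys n₀ J ⊆ boxSys n₀ K := by
    rintro _ ⟨B, hB, hBd, rfl⟩
    exact ⟨B, fun l => hJK (hB l), hBd, rfl⟩
  have hcount : (boxSys n₀ J).Countable := boxSys_countable hJc
  have hgen : (inferInstance : MeasurableSpace (Fin n₀ → (Fin k → ℝ)))
      = MeasurableSpace.generateFrom (boxSys n₀ K) := by
    apply le_antisymm
    · rw [BorelSpace.measurable_eq (α := Fin n₀ → (Fin k → ℝ)), borel]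
      refine MeasurableSpace.generateFrom_le fun G hG => ?_
      have hGU : G = ⋃₀ {T ∈ boxSys n₀ J | T ⊆ G} := by
        ext x
        constructor
        · intro hx
          obtain ⟨T, hT, hxT, hTG⟩ := exists_box hJ G hG x hx
          exact ⟨T, ⟨hT, hTG⟩, hxT⟩
        · rintro ⟨T, ⟨-, hTG⟩, hxT⟩
          exact hTG hxT
      rw [hGU]
      refine MeasurableSet.sUnion (hcount.mono fun T hT => hT.1) fun T hT => ?_
      exact MeasurableSpace.measurableSet_generateFrom (hsub hT.1)
    · exact MeasurableSpace.generateFrom_le hKm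
  have hpi : IsPiSystem (boxSys n₀ K) := boxSys_pi (by
    intro A hA B hB
    exact ⟨hI.2.1 _ hA.1 _ hB.1, hA.2.subset Set.inter_subset_left⟩)
  have heq : μ = (Measure.pi fun _ : Fin n₀ => lam).withDensity u := by
    refine Measure.ext_of_generateFrom_of_cover_subset hgen hpi hsub hcount ?_ ?_ ?_
    · refine Set.eq_univ_of_forall fun x => ?_
      obtain ⟨T, hT, hxT, -⟩ := exists_box hJ Set.univ isOpen_univ x trivial
      exact ⟨T, hT, hxT⟩
    · exact fun T hT => (key T (hsub hT)).2
    · intro T hT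
      rw [withDensity_apply _ (hKm T hT)]
      exact (key T hT).1
  intro A hA
  rw [heq, withDensity_apply _ hA]
end
end

section
/- Let M be a point process on ℝ^k formed by random points {X_n}, with factorial moment measures μ_n as in the context. Suppose M is determinantal with correlation kernel K (a measurable, locally bounded complex-valued function on ℝ^k × ℝ^k) and locally finite reference measure λ, in the sense that for every n ≥ 1 and every Borel set A ⊆ (ℝ^k)ⁿ, μ_n(A) = ∫_A det[K(x_i,x_j)]_{i,j=1}^n λⁿ(dx). Then M is ℙ-almost surely a simple point process; equivalently, ℙ(X_i = X_j ∈ ℝ^k for some pair of distinct indices i ≠ j) = 0, i.e., almost surely M(ω,{x}) ≤ 1 for every x ∈ ℝ^k. -/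
open MeasureTheory
open scoped ENNReal

noncomputable section

/-- Part (1) of Proposition 2.10 (`PropLem`): a determinantal point process is
almost surely simple. -/
theorem stmt7 (k : ℕ) {Ω : Type*} [MeasurableSpace Ω] (P : Measure Ω)
    [IsProbabilityMeasure P]
    (M : Ω → Measure (Fin k → ℝ)) (hpp : IsPointProcess k M)
    (X : ℕ → Ω → Option (Fin k → ℝ)) (hXm : ∀ i, OptMeasurable (X i))
    (hform : Forms X M)
    (K : (Fin k → ℝ) → (Fin k → ℝ) → ℂ) (hKm : Measurable (Function.uncurry K))
    (hKb : ∀ B : Set ((Fin k → ℝ) × (Fin k → ℝ)), Bornology.IsBounded B →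
      ∃ Cb : ℝ, ∀ p ∈ B, ‖K p.1 p.2‖ ≤ Cb)
    (lam : Measure (Fin k → ℝ)) [IsLocallyFiniteMeasure lam]
    (μ : (n : ℕ) → Measure (Fin n → (Fin k → ℝ)))
    (hμ : ∀ n, IsFactorialMomentMeasure P X n (μ n))
    (hdet : ∀ n : ℕ, 0 < n →
      (∀ᵐ x ∂(Measure.pi fun _ : Fin n => lam),
        (Matrix.det (Matrix.of fun i j : Fin n => K (x i) (x j))).im = 0 ∧
        0 ≤ (Matrix.det (Matrix.of fun i j : Fin n => K (x i) (x j))).re) ∧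
      ∀ A : Set (Fin n → (Fin k → ℝ)), MeasurableSet A →
        μ n A = ∫⁻ x in A,
          ENNReal.ofReal (Matrix.det (Matrix.of fun i j : Fin n => K (x i) (x j))).re
          ∂(Measure.pi fun _ : Fin n => lam)) :
    ∀ᵐ ω ∂P, ∀ i j : ℕ, i ≠ j → ∀ x : Fin k → ℝ,
      ¬(X i ω = Option.some x ∧ X j ω = Option.some x) := by
  have hfm : ∀ i, Measurable fun ω => (X i ω).getD 0 := by
    intro i A hA
    have h1 := hXm i A hA
    have h2 := (hXm i Set.univ MeasurableSet.univ).compl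
    by_cases h0 : (0 : Fin k → ℝ) ∈ A
    · convert h1.union h2 using 1
      ext ω
      cases h : X i ω <;> simp [h, h0]
    · convert h1 using 1
      ext ω
      cases h : X i ω <;> simp [h, h0]
  have hsm : ∀ i, MeasurableSet {ω | X i ω ∈ Option.some '' (Set.univ : Set (Fin k → ℝ))} :=
    fun i => hXm i Set.univ MeasurableSet.univ
  set D : Set (Fin 2 → (Fin k → ℝ)) := {y | y 0 = y 1} with hD
  have hDm : MeasurableSet D :=
    measurableSet_eq_fun (measurable_pi_apply 0) (measurable_pi_apply 1)
  have hD0 : μ 2 D = 0 := by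
    rw [(hdet 2 (by norm_num)).2 D hDm]
    rw [setLIntegral_congr_fun (g := fun _ => 0) hDm]
    · simp
    · intro y hy
      have hy' : y 0 = y 1 := hy
      simp [Matrix.det_fin_two, hy']
  rw [hμ 2 D hDm] at hD0
  rw [ae_all_iff]; intro i
  rw [ae_all_iff]; intro j
  by_cases hij : i = j
  · simp [hij]
  set E : Set Ω := ({ω | X i ω ∈ Option.some '' (Set.univ : Set (Fin k → ℝ))} ∩
    {ω | X j ω ∈ Option.some '' (Set.univ : Set (Fin k → ℝ))}) ∩
    {ω | (X i ω).getD 0 = (X j ω).getD 0} with hE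
  have hEm : MeasurableSet E :=
    ((hsm i).inter (hsm j)).inter (measurableSet_eq_fun (hfm i) (hfm j))
  have hPE : P E = 0 := by
    rw [← lintegral_indicator_one hEm, ← nonpos_iff_eq_zero, ← hD0]
    refine lintegral_mono fun ω => ?_
    by_cases hω : ω ∈ E
    · refine le_trans ?_ (ENNReal.le_tsum ![i, j])
      obtain ⟨⟨⟨x, -, hx⟩, ⟨y, -, hy⟩⟩, hxy⟩ := id hω
      have hxy' : x = y := by
        have h : (X i ω).getD 0 = (X j ω).getD 0 := hxy
        rw [← hx, ← hy] at h
        simpa using h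
      subst hxy'
      rw [Set.indicator_of_mem hω, Set.indicator_of_mem]
      · simp
      · refine ⟨?_, fun _ => x, rfl, ?_⟩
        · intro a b
          fin_cases a <;> fin_cases b <;> simp [hij, Ne.symm hij]
        · intro l
          fin_cases l <;> simp [← hx, ← hy]
    · simp [hω]
  have : ∀ᵐ ω ∂P, ω ∉ E := measure_eq_zero_iff_ae_notMem.1 hPE
  filter_upwards [this] with ω hω _ x hx
  apply hω
  refine ⟨⟨⟨x, trivial, hx.1.symm⟩, ⟨x, trivial, hx.2.symm⟩⟩, ?_⟩
  simp [hx.1, hx.2]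
end
end

section
/- Let K be a measurable, locally bounded complex-valued function on ℝ^k × ℝ^k and λ a locally finite Borel measure on ℝ^k. Let M′ and M″ be point processes on ℝ^k (possibly on different probability spaces), each formed by a sequence of random points, and suppose both are determinantal with correlation kernel K and reference measure λ, in the sense that their factorial moment measures satisfy μ′_n(A) = μ″_n(A) = ∫_A det[K(x_i,x_j)]_{i,j=1}^n λⁿ(dx) for every n ≥ 1 and every Borel set A ⊆ (ℝ^k)ⁿ. Then M′ and M″ have the same distribution; in particular, the law of a determinantal point process is uniquely determined by its correlation kernel and reference measure. -/
open MeasureTheory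
open scoped ENNReal

noncomputable section

/-- The factorial moment measures are the determinantal ones associated with the
kernel `K` and reference measure `lam`. -/
def HasDetMoments (k : ℕ) (K : (Fin k → ℝ) → (Fin k → ℝ) → ℂ)
    (lam : Measure (Fin k → ℝ)) (μ : (n : ℕ) → Measure (Fin n → (Fin k → ℝ))) : Prop :=
  ∀ n : ℕ, 0 < n →
    ∀ A : Set (Fin n → (Fin k → ℝ)), MeasurableSet A →
      μ n A = ∫⁻ x in A,
        ENNReal.ofReal (Matrix.det (Matrix.of fun i j : Fin n => K (x i) (x j))).re
        ∂(Measure.pi fun _ : Fin n => lam)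


/-- Extend a function by zero at the cemetery. -/
def gext {k : ℕ} (g : (Fin k → ℝ) → ℝ≥0∞) (o : Option (Fin k → ℝ)) : ℝ≥0∞ := o.elim 0 g

lemma comb_fiber (n : ℕ) (T : Finset ℕ) :
    Nat.card {e : Fin n ↪ ℕ // Finset.univ.map e = T} = if T.card = n then n.factorial else 0 := by
  split_ifs with h
  · have e1 : {e : Fin n ↪ ℕ // Finset.univ.map e = T} ≃ (Fin n ↪ T) :=
      { toFun := fun e => ⟨fun l => ⟨e.1 l, by have := Finset.mem_map_of_mem e.1 (Finset.mem_univ l); rwa [e.2] at this⟩, fun a b hab => e.1.injective (by simpa using hab)⟩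
        invFun := fun f => ⟨f.trans (Function.Embedding.subtype _), by
          apply Finset.eq_of_subset_of_card_le
          · intro x hx
            simp only [Finset.mem_map, Finset.mem_univ, true_and] at hx
            obtain ⟨a, rfl⟩ := hx
            exact (f a).2
          · simp [h]⟩
        left_inv := fun e => by ext; rfl
        right_inv := fun f => by ext; rfl }
    rw [Nat.card_congr e1, Nat.card_eq_fintype_card, Fintype.card_embedding_eq]
    simp [h, Nat.descFactorial_self]
  · have : IsEmpty {e : Fin n ↪ ℕ // Finset.univ.map e = T} := ⟨fun e => h (by rw [← e.2]; simp)⟩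
    simp

lemma comb_n (n : ℕ) (a : ℕ → ℝ≥0∞) :
    ∑' e : Fin n ↪ ℕ, ∏ l, a (e l) =
      ∑' T : Finset ℕ, if T.card = n then (n.factorial : ℝ≥0∞) * ∏ i ∈ T, a i else 0 := by
  rw [← (Equiv.sigmaFiberEquiv (fun e : Fin n ↪ ℕ => Finset.univ.map e)).tsum_eq, ENNReal.tsum_sigma']
  refine tsum_congr fun T => ?_
  have : ∀ b : {e : Fin n ↪ ℕ // Finset.univ.map e = T},
      ∏ l, a ((Equiv.sigmaFiberEquiv (fun e : Fin n ↪ ℕ => Finset.univ.map e)) ⟨T, b⟩ l)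
        = ∏ i ∈ T, a i := by
    intro b
    conv_rhs => rw [← b.2, Finset.prod_map]
    rfl
  simp_rw [this]
  have hf : Finite {e : Fin n ↪ ℕ // Finset.univ.map e = T} := by
    by_cases h : T.card = n
    · apply Nat.finite_of_card_ne_zero
      rw [comb_fiber, if_pos h]; exact Nat.factorial_ne_zero _
    · have : IsEmpty {e : Fin n ↪ ℕ // Finset.univ.map e = T} := ⟨fun e => h (by rw [← e.2]; simp)⟩
      infer_instance
  have := Fintype.ofFinite {e : Fin n ↪ ℕ // Finset.univ.map e = T}
  rw [tsum_fintype, Finset.sum_const, Finset.card_univ, ← Nat.card_eq_fintype_card, comb_fiber]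
  split_ifs <;> simp

lemma comb_all (a : ℕ → ℝ≥0∞) :
    ∑' T : Finset ℕ, ∏ i ∈ T, a i =
      ∑' n : ℕ, (n.factorial : ℝ≥0∞)⁻¹ * ∑' e : Fin n ↪ ℕ, ∏ l, a (e l) := by
  simp_rw [comb_n, ← ENNReal.tsum_mul_left]
  rw [ENNReal.tsum_comm]
  refine tsum_congr fun T => ?_
  rw [tsum_eq_single T.card]
  · rw [if_pos rfl, ← mul_assoc, ENNReal.inv_mul_cancel, one_mul]
    · exact_mod_cast Nat.factorial_ne_zero _
    · exact ENNReal.natCast_ne_top _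
  · intro n hn
    rw [if_neg hn.symm, mul_zero]

lemma comb_fin (a : ℕ → ℝ≥0∞) (F : Finset ℕ) (hF : ∀ i ∉ F, a i = 0) :
    ∑' T : Finset ℕ, ∏ i ∈ T, a i = ∏ i ∈ F, (1 + a i) := by
  rw [Finset.prod_one_add, tsum_eq_sum]
  intro T hT
  rw [Finset.mem_powerset, Finset.not_subset] at hT
  obtain ⟨i, hi, hi'⟩ := hT
  exact Finset.prod_eq_zero hi (hF i hi')

instance embCountable (n : ℕ) : Countable (Fin n ↪ ℕ) := DFunLike.coe_injective.countable

section proc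
variable {k : ℕ} {Ω : Type*} [MeasurableSpace Ω]

lemma optMeas_getD {X : Ω → Option (Fin k → ℝ)} (hX : OptMeasurable X) :
    Measurable fun ω => (X ω).getD 0 := by
  intro A hA
  have : (fun ω => (X ω).getD 0) ⁻¹' A = {ω | X ω ∈ Option.some '' A} ∪
      ({ω | X ω ∈ Option.some '' (Set.univ : Set (Fin k → ℝ))}ᶜ ∩ {_ω | (0 : Fin k → ℝ) ∈ A}) := by
    ext ω
    rcases h : X ω with _ | x <;> simp [h]
  rw [this]
  exact (hX A hA).union ((hX _ MeasurableSet.univ).compl.inter (MeasurableSet.const _))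

lemma optMeas_some {X : Ω → Option (Fin k → ℝ)} (hX : OptMeasurable X) :
    MeasurableSet {ω | (X ω).isSome} := by
  have : {ω | (X ω).isSome} = {ω | X ω ∈ Option.some '' (Set.univ : Set (Fin k → ℝ))} := by
    ext ω
    rcases h : X ω with _ | x <;> simp [h]
  rw [this]
  exact hX _ MeasurableSet.univ

lemma optMeas_gext {X : Ω → Option (Fin k → ℝ)} (hX : OptMeasurable X)
    {g : (Fin k → ℝ) → ℝ≥0∞} (hg : Measurable g) : Measurable fun ω => gext g (X ω) := by
  have : (fun ω => gext g (X ω)) = Set.indicator {ω | (X ω).isSome} (fun ω => g ((X ω).getD 0)) := by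
    ext ω
    rcases h : X ω with _ | x <;> simp [h, gext, Set.indicator]
  rw [this]
  exact (hg.comp (optMeas_getD hX)).indicator (optMeas_some hX)

lemma tsum_emb (n : ℕ) (f : (Fin n → ℕ) → ℝ≥0∞) :
    ∑' i : Fin n → ℕ, Set.indicator {i | Function.Injective i} f i = ∑' e : Fin n ↪ ℕ, f e := by
  rw [← tsum_subtype, ← (Equiv.subtypeInjectiveEquivEmbedding (Fin n) ℕ).tsum_eq]
  rfl

lemma mom_meas (P : Measure Ω) (X : ℕ → Ω → Option (Fin k → ℝ)) (hX : ∀ i, OptMeasurable (X i))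
    (n : ℕ) (μ : Measure (Fin n → (Fin k → ℝ))) (hμ : IsFactorialMomentMeasure P X n μ) :
    μ = Measure.sum fun e : Fin n ↪ ℕ =>
      (P.restrict {ω | ∀ l, (X (e l) ω).isSome}).map (fun ω l => (X (e l) ω).getD 0) := by
  have hS : ∀ e : Fin n ↪ ℕ, MeasurableSet {ω | ∀ l, (X (e l) ω).isSome} := fun e => by
    rw [Set.ofPred_forall]
    exact MeasurableSet.iInter fun l => optMeas_some (hX _)
  have hY : ∀ e : Fin n ↪ ℕ, Measurable (fun ω l => (X (e l) ω).getD 0) := fun e =>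
    measurable_pi_lambda _ fun l => optMeas_getD (hX _)
  ext A hA
  rw [hμ A hA, Measure.sum_apply _ hA]
  simp_rw [Measure.map_apply (hY _) hA, Measure.restrict_apply (hY _ hA)]
  rw [← funext fun e => lintegral_indicator_one ((hY e hA).inter (hS e))]
  rw [← lintegral_tsum fun e =>
    (measurable_one.indicator ((hY e hA).inter (hS e))).aemeasurable]
  refine lintegral_congr fun ω => ?_
  refine Eq.trans ?_ (tsum_emb n (fun i => Set.indicator
    ({ω | (fun l => (X (i l) ω).getD 0) ∈ A} ∩ {ω | ∀ l, (X (i l) ω).isSome}) 1 ω))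
  refine tsum_congr fun i => ?_
  by_cases hi : Function.Injective i
  · have key : (Function.Injective i ∧ ∃ y ∈ A, ∀ l, X (i l) ω = Option.some (y l)) ↔
        ((fun l => (X (i l) ω).getD 0) ∈ A ∧ ∀ l, (X (i l) ω).isSome) := by
      rw [and_iff_right hi]
      refine ⟨?_, ?_⟩
      · rintro ⟨y, hy, h⟩
        simpa [h] using hy
      · rintro ⟨h1, h2⟩
        refine ⟨_, h1, fun l => ?_⟩
        obtain ⟨x, hx⟩ := Option.isSome_iff_exists.1 (h2 l)
        simp [hx]
    refine Eq.trans ?_ (Set.indicator_of_mem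
      (s := {i : Fin n → ℕ | Function.Injective i}) (by exact hi) _).symm
    by_cases h : (fun l => (X (i l) ω).getD 0) ∈ A ∧ ∀ l, (X (i l) ω).isSome
    · refine (Set.indicator_of_mem (by exact key.2 h) _).trans ?_
      symm
      exact Set.indicator_of_mem (by exact h) (1 : Ω → ℝ≥0∞)
    · refine Eq.trans (b := (0 : ℝ≥0∞)) (Set.indicator_of_notMem (by exact fun h2 => h (key.1 h2)) _) ?_
      symm
      exact Set.indicator_of_notMem (by exact h) (1 : Ω → ℝ≥0∞)
  · simp [Set.indicator, hi]

lemma mom_lint (P : Measure Ω) (X : ℕ → Ω → Option (Fin k → ℝ)) (hX : ∀ i, OptMeasurable (X i))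
    (n : ℕ) (μ : Measure (Fin n → (Fin k → ℝ))) (hμ : IsFactorialMomentMeasure P X n μ)
    (g : (Fin k → ℝ) → ℝ≥0∞) (hg : Measurable g) :
    ∫⁻ x, ∏ l, g (x l) ∂μ = ∫⁻ ω, ∑' e : Fin n ↪ ℕ, ∏ l, gext g (X (e l) ω) ∂P := by
  have hS : ∀ e : Fin n ↪ ℕ, MeasurableSet {ω | ∀ l, (X (e l) ω).isSome} := fun e => by
    rw [Set.ofPred_forall]
    exact MeasurableSet.iInter fun l => optMeas_some (hX _)
  have hY : ∀ e : Fin n ↪ ℕ, Measurable (fun ω l => (X (e l) ω).getD 0) := fun e =>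
    measurable_pi_lambda _ fun l => optMeas_getD (hX _)
  have hG : Measurable fun x : Fin n → (Fin k → ℝ) => ∏ l, g (x l) :=
    Finset.measurable_prod _ fun l _ => hg.comp (measurable_pi_apply l)
  rw [mom_meas P X hX n μ hμ, lintegral_sum_measure, lintegral_tsum fun e =>
    (Finset.measurable_prod _ fun l _ => optMeas_gext (hX _) hg).aemeasurable]
  refine tsum_congr fun e => ?_
  rw [lintegral_map hG (hY e), ← lintegral_indicator (hS e)]
  refine lintegral_congr fun ω => ?_
  by_cases h : ∀ l, (X (e l) ω).isSome
  · rw [Set.indicator_of_mem (by exact h)]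
    refine Finset.prod_congr rfl fun l _ => ?_
    obtain ⟨x, hx⟩ := Option.isSome_iff_exists.1 (h l)
    simp [hx, gext]
  · rw [Set.indicator_of_notMem (by exact h)]
    push Not at h
    obtain ⟨l, hl⟩ := h
    refine (Finset.prod_eq_zero (Finset.mem_univ l) ?_).symm
    simp at hl
    simp [hl, gext]

lemma key_lint (P : Measure Ω) (X : ℕ → Ω → Option (Fin k → ℝ)) (hX : ∀ i, OptMeasurable (X i))
    (μ : (n : ℕ) → Measure (Fin n → (Fin k → ℝ))) (hμ : ∀ n, IsFactorialMomentMeasure P X n (μ n))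
    (g : (Fin k → ℝ) → ℝ≥0∞) (hg : Measurable g) :
    ∫⁻ ω, ∑' T : Finset ℕ, ∏ i ∈ T, gext g (X i ω) ∂P =
      ∑' n : ℕ, (n.factorial : ℝ≥0∞)⁻¹ * ∫⁻ x, ∏ l, g (x l) ∂(μ n) := by
  have hm : ∀ n, Measurable fun ω => ∑' e : Fin n ↪ ℕ, ∏ l, gext g (X (e l) ω) := fun n =>
    Measurable.tsum fun e => Finset.measurable_prod _ fun l _ => optMeas_gext (hX _) hg
  simp_rw [comb_all, mom_lint P X hX _ _ (hμ _) g hg]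
  rw [lintegral_tsum fun n => ((hm n).const_mul _).aemeasurable]
  refine tsum_congr fun n => ?_
  rw [lintegral_const_mul _ (hm n)]

end proc

section mgf
open ProbabilityTheory

lemma law_of_mgf {Ω₁ Ω₂ : Type*} [MeasurableSpace Ω₁] [MeasurableSpace Ω₂]
    (P₁ : Measure Ω₁) (P₂ : Measure Ω₂)
    [IsProbabilityMeasure P₁] [IsProbabilityMeasure P₂] (S₁ : Ω₁ → ℝ) (S₂ : Ω₂ → ℝ)
    (h₁ : Measurable S₁) (h₂ : Measurable S₂) (n₁ : ∀ ω, 0 ≤ S₁ ω) (n₂ : ∀ ω, 0 ≤ S₂ ω)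
    (heq : ∀ t : ℝ, 0 ≤ t → ∫⁻ ω, ENNReal.ofReal (Real.exp (t * S₁ ω)) ∂P₁ =
      ∫⁻ ω, ENNReal.ofReal (Real.exp (t * S₂ ω)) ∂P₂)
    (hfin : ∃ t : ℝ, 0 < t ∧ ∫⁻ ω, ENNReal.ofReal (Real.exp (t * S₁ ω)) ∂P₁ < ∞) :
    P₁.map S₁ = P₂.map S₂ := by
  obtain ⟨t₀, ht₀, hf₁⟩ := hfin
  have hf₂ := hf₁
  rw [heq _ ht₀.le] at hf₂
  have aux : ∀ {Ω : Type _} [MeasurableSpace Ω] (P : Measure Ω) [IsProbabilityMeasure P] (S : Ω → ℝ)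
      (_ : Measurable S) (_ : ∀ ω, 0 ≤ S ω)
      (_ : ∫⁻ ω, ENNReal.ofReal (Real.exp (t₀ * S ω)) ∂P < ∞),
      Set.Iio t₀ ⊆ interior (integrableExpSet S P) := by
    intro Ω _ P _ S h n hf
    refine interior_maximal ?_ isOpen_Iio
    intro t ht
    have hI : Integrable (fun ω => Real.exp (t₀ * S ω)) P := by
      refine ⟨(Real.measurable_exp.comp (h.const_mul _)).aestronglyMeasurable, ?_⟩
      rw [hasFiniteIntegral_iff_ofReal (ae_of_all _ fun ω => (Real.exp_pos _).le)]
      exact hf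
    refine hI.mono' (Real.measurable_exp.comp (h.const_mul _)).aestronglyMeasurable
      (ae_of_all _ fun ω => ?_)
    rw [Real.norm_of_nonneg (Real.exp_pos _).le]
    exact Real.exp_le_exp.2 (mul_le_mul_of_nonneg_right (le_of_lt ht) (n ω))
  have aux' : ∀ {Ω : Type _} [MeasurableSpace Ω] (P : Measure Ω) [IsProbabilityMeasure P] (S : Ω → ℝ)
      (_ : Measurable S) (_ : ∀ ω, 0 ≤ S ω)
      (_ : ∫⁻ ω, ENNReal.ofReal (Real.exp (t₀ * S ω)) ∂P < ∞),
      Set.Iio t₀ ⊆ interior (integrableExpSet S P) := by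
    intro Ω _ P _ S h n hf
    refine interior_maximal ?_ isOpen_Iio
    intro t ht
    have hI : Integrable (fun ω => Real.exp (t₀ * S ω)) P := by
      refine ⟨(Real.measurable_exp.comp (h.const_mul _)).aestronglyMeasurable, ?_⟩
      rw [hasFiniteIntegral_iff_ofReal (ae_of_all _ fun ω => (Real.exp_pos _).le)]
      exact hf
    refine hI.mono' (Real.measurable_exp.comp (h.const_mul _)).aestronglyMeasurable
      (ae_of_all _ fun ω => ?_)
    rw [Real.norm_of_nonneg (Real.exp_pos _).le]
    exact Real.exp_le_exp.2 (mul_le_mul_of_nonneg_right (le_of_lt ht) (n ω))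
  have i₁ := aux P₁ S₁ h₁ n₁ hf₁
  have i₂ := aux' P₂ S₂ h₂ n₂ hf₂
  have hpos : ∀ t : ℝ, 0 ≤ t → mgf S₁ P₁ t = mgf S₂ P₂ t := by
    intro t ht
    rw [mgf, mgf, integral_eq_lintegral_of_nonneg_ae (ae_of_all _ fun ω => (Real.exp_pos _).le)
      (Real.measurable_exp.comp (h₁.const_mul _)).aestronglyMeasurable,
      integral_eq_lintegral_of_nonneg_ae (ae_of_all _ fun ω => (Real.exp_pos _).le)
      (Real.measurable_exp.comp (h₂.const_mul _)).aestronglyMeasurable, heq t ht]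
  have hEq : Set.EqOn (mgf S₁ P₁) (mgf S₂ P₂) (Set.Iio t₀) := by
    refine AnalyticOnNhd.eqOn_of_preconnected_of_eventuallyEq (𝕜 := ℝ) (z₀ := t₀ / 2)
      (fun x hx => analyticOnNhd_mgf x (i₁ hx)) (fun x hx => analyticOnNhd_mgf x (i₂ hx))
      isPreconnected_Iio (by simp [ht₀]) ?_
    filter_upwards [lt_mem_nhds (half_pos ht₀)] with t ht using hpos t ht.le
  have hmgf : mgf S₁ P₁ = mgf S₂ P₂ := by
    ext t
    rcases le_total 0 t with h | h
    · exact hpos t h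
    · exact hEq (lt_of_le_of_lt h ht₀)
  have hc := eqOn_complexMGF_of_mgf hmgf
  have : IsProbabilityMeasure (P₁.map S₁) := Measure.isProbabilityMeasure_map h₁.aemeasurable
  have : IsProbabilityMeasure (P₂.map S₂) := Measure.isProbabilityMeasure_map h₂.aemeasurable
  refine Measure.ext_of_charFun ?_
  ext t
  rw [← complexMGF_mul_I h₁.aemeasurable, ← complexMGF_mul_I h₂.aemeasurable]
  exact hc (by simpa using i₁ (by simpa using ht₀))

end mgf

section proc2
variable {k : ℕ} {Ω : Type*} [MeasurableSpace Ω] {p : ℕ}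

/-- weighted count function -/
def phi (s : Fin p → ℝ) (B : Fin p → Set (Fin k → ℝ)) (x : Fin k → ℝ) : ℝ :=
  ∑ j, s j * (B j).indicator (fun _ => (1 : ℝ)) x

/-- the test function -/
def gtest (s : Fin p → ℝ) (B : Fin p → Set (Fin k → ℝ)) (t : ℝ) (x : Fin k → ℝ) : ℝ≥0∞ :=
  ENNReal.ofReal (Real.exp (t * phi s B x) - 1)

/-- weighted count -/
def Sv (s : Fin p → ℝ) (B : Fin p → Set (Fin k → ℝ)) (M : Ω → Measure (Fin k → ℝ)) (ω : Ω) : ℝ :=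
  ∑ j, s j * (M ω (B j)).toReal

lemma gt_meas (s : Fin p → ℝ) (B : Fin p → Set (Fin k → ℝ)) (hB : ∀ i, MeasurableSet (B i)) (t : ℝ) :
    Measurable (gtest s B t) := by
  have : Measurable (phi s B) := Finset.measurable_fun_sum _ fun j _ =>
    (measurable_const.indicator (hB j)).const_mul _
  exact ((Real.measurable_exp.comp (this.const_mul _)).sub_const 1).ennreal_ofReal

lemma phi_nonneg (s : Fin p → ℝ) (hs : ∀ j, 0 ≤ s j) (B : Fin p → Set (Fin k → ℝ)) (x) :
    0 ≤ phi s B x :=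
  Finset.sum_nonneg fun j _ => mul_nonneg (hs j) (Set.indicator_nonneg (by simp) x)

lemma phi_le (s : Fin p → ℝ) (hs : ∀ j, 0 ≤ s j) (B : Fin p → Set (Fin k → ℝ)) (x) :
    phi s B x ≤ ∑ j, s j := by
  refine Finset.sum_le_sum fun j _ => ?_
  by_cases h : x ∈ B j <;> simp [h, hs j]

lemma phi_zero (s : Fin p → ℝ) (B : Fin p → Set (Fin k → ℝ)) (x) (hx : x ∉ ⋃ j, B j) :
    phi s B x = 0 := by
  simp only [Set.mem_iUnion, not_exists] at hx
  simp [phi, hx]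

lemma gt_le (s : Fin p → ℝ) (hs : ∀ j, 0 ≤ s j) (B : Fin p → Set (Fin k → ℝ)) (t : ℝ) (ht : 0 ≤ t) (x) :
    gtest s B t x ≤ (⋃ j, B j).indicator (fun _ => ENNReal.ofReal (Real.exp (t * ∑ j, s j) - 1)) x := by
  by_cases hx : x ∈ ⋃ j, B j
  · rw [Set.indicator_of_mem hx]
    apply ENNReal.ofReal_le_ofReal
    gcongr
    exact phi_le s hs B x
  · simp [gtest, phi_zero s B x hx]

lemma exp_lint (P : Measure Ω) (M : Ω → Measure (Fin k → ℝ)) (hpp : IsPointProcess k M)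
    (X : ℕ → Ω → Option (Fin k → ℝ)) (hX : ∀ i, OptMeasurable (X i)) (hform : Forms X M)
    (μ : (n : ℕ) → Measure (Fin n → (Fin k → ℝ))) (hμ : ∀ n, IsFactorialMomentMeasure P X n (μ n))
    (s : Fin p → ℝ) (hs : ∀ j, 0 ≤ s j) (B : Fin p → Set (Fin k → ℝ))
    (hB : ∀ i, MeasurableSet (B i)) (hBb : ∀ i, Bornology.IsBounded (B i)) (t : ℝ) (ht : 0 ≤ t) :
    ∫⁻ ω, ENNReal.ofReal (Real.exp (t * Sv s B M ω)) ∂P =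
      ∑' n : ℕ, (n.factorial : ℝ≥0∞)⁻¹ * ∫⁻ x, ∏ l, gtest s B t (x l) ∂(μ n) := by
  rw [← key_lint P X hX μ hμ _ (gt_meas s B hB t)]
  refine lintegral_congr fun ω => ?_
  have hUm : MeasurableSet (⋃ j, B j) := MeasurableSet.iUnion hB
  have hUb : Bornology.IsBounded (⋃ j, B j) := by
    rw [Bornology.isBounded_iUnion]; exact hBb
  obtain ⟨N, hN⟩ := hpp.2 ω _ hUm hUb
  rw [hform ω _ hUm] at hN
  have hfin := ENNReal.finite_const_le_of_tsum_ne_top (hN ▸ ENNReal.natCast_ne_top N) one_ne_zero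
  set F := hfin.toFinset with hFdef
  have hF : ∀ i ∉ F, X i ω ∉ Option.some '' (⋃ j, B j) := by
    intro i hi h
    apply hi
    simp only [hFdef, Set.Finite.mem_toFinset, Set.mem_ofPred_eq]
    rw [Set.indicator_of_mem h]
  rw [comb_fin _ F]
  · have hM : ∀ j, (M ω (B j)).toReal =
        ∑ i ∈ F, (Option.some '' (B j)).indicator (fun _ => (1 : ℝ)) (X i ω) := by
      intro j
      rw [hform ω _ (hB j), tsum_eq_sum (s := F), ENNReal.toReal_sum]
      · refine Finset.sum_congr rfl fun i _ => ?_
        by_cases h : X i ω ∈ Option.some '' (B j) <;> simp only [Set.indicator, h, if_true, if_false] <;> simp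
      · intro i _
        by_cases h : X i ω ∈ Option.some '' (B j) <;> simp only [Set.indicator, h, if_true, if_false] <;> simp
      · intro i hi
        apply Set.indicator_of_notMem
        exact fun h => hF i hi (Set.image_mono (Set.subset_iUnion B j) h)
    have hS : t * Sv s B M ω = ∑ i ∈ F, t * (X i ω).elim 0 (phi s B) := by
      rw [← Finset.mul_sum]
      congr 1
      simp_rw [Sv, hM, Finset.mul_sum]
      rw [Finset.sum_comm]
      refine Finset.sum_congr rfl fun i _ => ?_
      rcases h : X i ω with _ | x
      · simp
      · simp only [Option.elim, phi]
        refine Finset.sum_congr rfl fun j _ => ?_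
        by_cases hx : x ∈ B j <;> simp [Set.indicator, hx]
    rw [hS, Real.exp_sum, ENNReal.ofReal_prod_of_nonneg fun i _ => (Real.exp_pos _).le]
    refine Finset.prod_congr rfl fun i _ => ?_
    rcases h : X i ω with _ | x
    · simp [gext]
    · simp only [Option.elim, gext, gtest]
      rw [← ENNReal.ofReal_one, ← ENNReal.ofReal_add zero_le_one]
      · ring_nf
      · rw [sub_nonneg]
        exact Real.one_le_exp (mul_nonneg ht (phi_nonneg s hs B x))
  · intro i hi
    have := hF i hi
    rcases h : X i ω with _ | x
    · rfl
    · simp only [h, Set.mem_image, Option.some.injEq, exists_eq_right] at this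
      simp [gext, gtest, phi_zero s B x this]

lemma Sv_meas (M : Ω → Measure (Fin k → ℝ)) (hpp : IsPointProcess k M)
    (s : Fin p → ℝ) (B : Fin p → Set (Fin k → ℝ))
    (hB : ∀ i, MeasurableSet (B i)) : Measurable (Sv s B M) :=
  Finset.measurable_fun_sum _ fun j _ => ((hpp.1 _ (hB j)).ennreal_toReal).const_mul _

lemma Sv_nonneg (M : Ω → Measure (Fin k → ℝ)) (s : Fin p → ℝ) (hs : ∀ j, 0 ≤ s j)
    (B : Fin p → Set (Fin k → ℝ)) (ω) : 0 ≤ Sv s B M ω :=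
  Finset.sum_nonneg fun j _ => mul_nonneg (hs j) ENNReal.toReal_nonneg

/-- weights -/
def wt (j : Fin p) : ℝ := Real.log (Nat.nth Nat.Prime j)

/-- decoding -/
def dec (v : ℝ) (j : Fin p) : ℝ≥0∞ :=
  ((⌊Real.exp v⌋₊.factorization (Nat.nth Nat.Prime j) : ℕ) : ℝ≥0∞)

lemma dec_meas : Measurable (dec (p := p)) := by
  refine measurable_pi_lambda _ fun j => ?_
  have h1 : Measurable fun v : ℝ => ⌊Real.exp v⌋₊ := Nat.measurable_floor.comp Real.measurable_exp
  exact (measurable_from_nat (f := fun m : ℕ =>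
    ((m.factorization (Nat.nth Nat.Prime j) : ℕ) : ℝ≥0∞))).comp h1

lemma dec_Sv (M : Ω → Measure (Fin k → ℝ)) (hpp : IsPointProcess k M) (B : Fin p → Set (Fin k → ℝ))
    (hB : ∀ i, MeasurableSet (B i)) (hBb : ∀ i, Bornology.IsBounded (B i)) (ω : Ω) :
    dec (Sv wt B M ω) = fun i => M ω (B i) := by
  choose N hN using fun j => hpp.2 ω (B j) (hB j) (hBb j)
  have hp : ∀ j : ℕ, (Nat.nth Nat.Prime j).Prime := Nat.prime_nth_prime
  have h1 : Real.exp (Sv wt B M ω) = ((∏ j : Fin p, Nat.nth Nat.Prime j ^ N j : ℕ) : ℝ) := by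
    rw [Sv, Real.exp_sum]
    push_cast
    refine Finset.prod_congr rfl fun j _ => ?_
    rw [hN, ENNReal.toReal_natCast, wt, mul_comm, Real.exp_nat_mul, Real.exp_log]
    exact_mod_cast (hp j).pos
  ext j
  rw [dec, h1, Nat.floor_natCast, hN, Nat.factorization_prod (S := Finset.univ)
    (g := fun j : Fin p => Nat.nth Nat.Prime j ^ N j) fun i _ => pow_ne_zero _ (hp i).ne_zero]
  congr 1
  rw [Finsupp.finsetSum_apply, Finset.sum_eq_single j]
  · rw [(hp j).factorization_pow]; simp
  · intro i _ hij
    rw [(hp i).factorization_pow]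
    apply Finsupp.single_eq_of_ne
    intro h
    exact hij (Fin.ext (Nat.nth_injective Nat.infinite_setOfPred_prime h).symm)
  · simp

lemma det_bound (K : (Fin k → ℝ) → (Fin k → ℝ) → ℂ) (lam : Measure (Fin k → ℝ))
    [IsLocallyFiniteMeasure lam] (μ : (n : ℕ) → Measure (Fin n → (Fin k → ℝ)))
    (hdet : HasDetMoments k K lam μ) (U : Set (Fin k → ℝ)) (hU : MeasurableSet U) (C : ℝ)
    (hC : 0 ≤ C) (hK : ∀ x ∈ U, ∀ y ∈ U, ‖K x y‖ ≤ C) (n : ℕ) (hn : 0 < n) :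
    μ n (Set.univ.pi fun _ => U) ≤ n.factorial * (ENNReal.ofReal C * lam U) ^ n := by
  have hm : MeasurableSet (Set.univ.pi fun _ : Fin n => U) := MeasurableSet.univ_pi fun _ => hU
  rw [hdet n hn _ hm]
  calc _ ≤ ∫⁻ x in (Set.univ.pi fun _ : Fin n => U), (n.factorial * ENNReal.ofReal C ^ n : ℝ≥0∞)
        ∂(Measure.pi fun _ : Fin n => lam) := by
        refine setLIntegral_mono' hm fun x hx => ?_
        rw [← ENNReal.ofReal_natCast, ← ENNReal.ofReal_pow hC, ← ENNReal.ofReal_mul (by positivity)]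
        apply ENNReal.ofReal_le_ofReal
        refine (Complex.re_le_norm _).trans ?_
        have := Matrix.det_le (A := Matrix.of fun i j : Fin n => K (x i) (x j))
          (abv := NormedField.toAbsoluteValue ℂ) (x := C)
          (fun i j => hK _ (hx i trivial) _ (hx j trivial))
        simp only [Fintype.card_fin, nsmul_eq_mul] at this
        exact this
    _ = _ := by
        rw [setLIntegral_const, Measure.pi_pi]
        simp [mul_pow, mul_assoc]

lemma fin_bound (K : (Fin k → ℝ) → (Fin k → ℝ) → ℂ)
    (hKb : ∀ B : Set ((Fin k → ℝ) × (Fin k → ℝ)), Bornology.IsBounded B →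
      ∃ Cb : ℝ, ∀ p ∈ B, ‖K p.1 p.2‖ ≤ Cb) (lam : Measure (Fin k → ℝ))
    [IsLocallyFiniteMeasure lam] (μ : (n : ℕ) → Measure (Fin n → (Fin k → ℝ)))
    (hdet : HasDetMoments k K lam μ) (h0 : μ 0 Set.univ ≤ 1)
    (s : Fin p → ℝ) (hs : ∀ j, 0 ≤ s j) (B : Fin p → Set (Fin k → ℝ))
    (hB : ∀ i, MeasurableSet (B i)) (hBb : ∀ i, Bornology.IsBounded (B i)) :
    ∃ t : ℝ, 0 < t ∧
      ∑' n : ℕ, (n.factorial : ℝ≥0∞)⁻¹ * ∫⁻ x, ∏ l, gtest s B t (x l) ∂(μ n) < ∞ := by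
  set U := ⋃ j, B j with hUdef
  have hUm : MeasurableSet U := MeasurableSet.iUnion hB
  have hUb : Bornology.IsBounded U := by
    rw [Bornology.isBounded_iUnion]; exact hBb
  obtain ⟨C, hC⟩ := hKb (U ×ˢ U) (hUb.prod hUb)
  have hlam : lam U < ∞ := hUb.measure_lt_top
  set D : ℝ≥0∞ := ENNReal.ofReal (max C 0) * lam U with hD
  have hDfin : D ≠ ∞ := ENNReal.mul_ne_top ENNReal.ofReal_ne_top hlam.ne
  obtain ⟨t, ht, htlt⟩ : ∃ t : ℝ, 0 < t ∧
      ENNReal.ofReal (Real.exp (t * ∑ j, s j) - 1) * D < 1 := by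
    have hcont : Continuous fun t : ℝ => ENNReal.ofReal (Real.exp (t * ∑ j, s j) - 1) * D :=
      ENNReal.continuous_mul_const hDfin |>.comp (ENNReal.continuous_ofReal.comp (by fun_prop))
    have h := hcont.tendsto 0
    simp only [zero_mul, Real.exp_zero, sub_self, ENNReal.ofReal_zero] at h
    have h2 := (h.eventually (gt_mem_nhds zero_lt_one)).filter_mono
      (nhdsWithin_le_nhds (s := Set.Ioi 0))
    obtain ⟨t, h3, h4⟩ := (h2.and self_mem_nhdsWithin).exists
    exact ⟨t, h4, h3⟩
  refine ⟨t, ht, ?_⟩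
  set ε := ENNReal.ofReal (Real.exp (t * ∑ j, s j) - 1) with hε
  have hmu : ∀ n, μ n (Set.univ.pi fun _ => U) ≤ n.factorial * D ^ n := by
    intro n
    rcases Nat.eq_zero_or_pos n with rfl | hn
    · simpa using (measure_mono (Set.subset_univ _)).trans h0
    · exact det_bound K lam μ hdet U hUm _ (le_max_right _ _)
        (fun x hx y hy => (hC (x, y) ⟨hx, hy⟩).trans (le_max_left _ _)) n hn
  calc _ ≤ ∑' n : ℕ, (ε * D) ^ n := by
        refine ENNReal.tsum_le_tsum fun n => ?_
        have h1 : ∫⁻ x, ∏ l, gtest s B t (x l) ∂(μ n) ≤ ε ^ n * (n.factorial * D ^ n) := by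
          calc _ ≤ ∫⁻ x, (Set.univ.pi fun _ : Fin n => U).indicator (fun _ => ε ^ n) x ∂(μ n) := by
                refine lintegral_mono fun x => ?_
                by_cases hx : x ∈ (Set.univ.pi fun _ : Fin n => U)
                · rw [Set.indicator_of_mem hx]
                  calc _ ≤ ∏ _l : Fin n, ε := by
                        refine Finset.prod_le_prod' fun l _ => ?_
                        refine (gt_le s hs B t ht.le _).trans ?_
                        rw [Set.indicator_of_mem (hx l trivial)]
                    _ = _ := by simp
                · simp only [Set.mem_pi, Set.mem_univ, true_imp_iff, not_forall] at hx
                  obtain ⟨l, hl⟩ := hx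
                  refine le_of_eq_of_le (Finset.prod_eq_zero (Finset.mem_univ l) ?_) zero_le
                  simp [gtest, phi_zero s B _ hl]
            _ = ε ^ n * μ n (Set.univ.pi fun _ => U) := by
                rw [lintegral_indicator_const (MeasurableSet.univ_pi fun _ => hUm)]
            _ ≤ _ := by gcongr; exact hmu n
        calc _ ≤ (n.factorial : ℝ≥0∞)⁻¹ * (ε ^ n * (n.factorial * D ^ n)) := by gcongr
          _ = ((n.factorial : ℝ≥0∞)⁻¹ * n.factorial) * (ε * D) ^ n := by rw [mul_pow]; ring
          _ = _ := by
            rw [ENNReal.inv_mul_cancel (by exact_mod_cast Nat.factorial_ne_zero _)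
              (ENNReal.natCast_ne_top _), one_mul]
    _ = (1 - ε * D)⁻¹ := ENNReal.tsum_geometric _
    _ < ∞ := by
        rw [ENNReal.inv_lt_top]
        exact tsub_pos_of_lt htlt

lemma mom_zero (P : Measure Ω) [IsProbabilityMeasure P] (X : ℕ → Ω → Option (Fin k → ℝ))
    (μ : Measure (Fin 0 → (Fin k → ℝ))) (hμ : IsFactorialMomentMeasure P X 0 μ) :
    μ = Measure.dirac 0 := by
  ext A hA
  rw [hμ A hA, Measure.dirac_apply' _ hA]
  have h0 : (∃ y, y ∈ A) ↔ (0 : Fin 0 → (Fin k → ℝ)) ∈ A :=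
    ⟨fun ⟨y, hy⟩ => by rwa [Subsingleton.elim 0 y], fun h => ⟨_, h⟩⟩
  by_cases h : (0 : Fin 0 → (Fin k → ℝ)) ∈ A
  · have : ∃ y, y ∈ A := ⟨_, h⟩
    simp [Set.indicator, this, Function.injective_of_subsingleton]
    convert h
  · have : ¬ ∃ y, y ∈ A := fun h' => h (h0.1 h')
    simp [Set.indicator, this]
    convert h

end proc2

/-- Part (3) of Proposition 2.10 (`PropLem`): the law of a determinantal point
process is uniquely determined by its correlation kernel and reference measure. -/
theorem stmt8 (k : ℕ)
    {Ω₁ Ω₂ : Type*} [MeasurableSpace Ω₁] [MeasurableSpace Ω₂]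
    (P₁ : Measure Ω₁) (P₂ : Measure Ω₂)
    [IsProbabilityMeasure P₁] [IsProbabilityMeasure P₂]
    (M₁ : Ω₁ → Measure (Fin k → ℝ)) (M₂ : Ω₂ → Measure (Fin k → ℝ))
    (hpp₁ : IsPointProcess k M₁) (hpp₂ : IsPointProcess k M₂)
    (X₁ : ℕ → Ω₁ → Option (Fin k → ℝ)) (X₂ : ℕ → Ω₂ → Option (Fin k → ℝ))
    (hX₁ : ∀ i, OptMeasurable (X₁ i)) (hX₂ : ∀ i, OptMeasurable (X₂ i))
    (hform₁ : Forms X₁ M₁) (hform₂ : Forms X₂ M₂)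
    (K : (Fin k → ℝ) → (Fin k → ℝ) → ℂ) (hKm : Measurable (Function.uncurry K))
    (hKb : ∀ B : Set ((Fin k → ℝ) × (Fin k → ℝ)), Bornology.IsBounded B →
      ∃ Cb : ℝ, ∀ p ∈ B, ‖K p.1 p.2‖ ≤ Cb)
    (lam : Measure (Fin k → ℝ)) [IsLocallyFiniteMeasure lam]
    (hdetreal : ∀ (n : ℕ), 0 < n → ∀ᵐ x ∂(Measure.pi fun _ : Fin n => lam),
      (Matrix.det (Matrix.of fun i j : Fin n => K (x i) (x j))).im = 0 ∧
      0 ≤ (Matrix.det (Matrix.of fun i j : Fin n => K (x i) (x j))).re)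
    (μ₁ μ₂ : (n : ℕ) → Measure (Fin n → (Fin k → ℝ)))
    (hμ₁ : ∀ n, IsFactorialMomentMeasure P₁ X₁ n (μ₁ n))
    (hμ₂ : ∀ n, IsFactorialMomentMeasure P₂ X₂ n (μ₂ n))
    (hdet₁ : HasDetMoments k K lam μ₁) (hdet₂ : HasDetMoments k K lam μ₂) :
    ∀ (p : ℕ) (B : Fin p → Set (Fin k → ℝ)),
      (∀ i, MeasurableSet (B i)) → (∀ i, Bornology.IsBounded (B i)) →
      Measure.map (fun ω i => M₁ ω (B i)) P₁ =
        Measure.map (fun ω i => M₂ ω (B i)) P₂ := by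

  intro p B hB hBb
  have hμ : μ₁ = μ₂ := by
    ext n : 1
    rcases Nat.eq_zero_or_pos n with rfl | hn
    · rw [mom_zero P₁ X₁ _ (hμ₁ 0), mom_zero P₂ X₂ _ (hμ₂ 0)]
    · ext A hA
      rw [hdet₁ n hn A hA, hdet₂ n hn A hA]
  have hs : ∀ j : Fin p, 0 ≤ wt j := fun j => Real.log_natCast_nonneg _
  have e₁ := exp_lint P₁ M₁ hpp₁ X₁ hX₁ hform₁ μ₁ hμ₁ wt hs B hB hBb
  have e₂ := exp_lint P₂ M₂ hpp₂ X₂ hX₂ hform₂ μ₂ hμ₂ wt hs B hB hBb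
  have hlaw : P₁.map (Sv wt B M₁) = P₂.map (Sv wt B M₂) := by
    refine law_of_mgf P₁ P₂ _ _ (Sv_meas M₁ hpp₁ wt B hB) (Sv_meas M₂ hpp₂ wt B hB)
      (Sv_nonneg M₁ wt hs B) (Sv_nonneg M₂ wt hs B) (fun t ht => ?_) ?_
    · rw [e₁ t ht, e₂ t ht, hμ]
    · obtain ⟨t, ht, hlt⟩ := fin_bound K hKb lam μ₁ hdet₁
        (by rw [mom_zero P₁ X₁ _ (hμ₁ 0)]; simp) wt hs B hB hBb
      exact ⟨t, ht, by rwa [e₁ t ht.le]⟩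
  rw [← funext fun ω => dec_Sv M₁ hpp₁ B hB hBb ω, ← funext fun ω => dec_Sv M₂ hpp₂ B hB hBb ω]
  have c₁ := Measure.map_map (μ := P₁) (dec_meas (p := p)) (Sv_meas M₁ hpp₁ wt B hB)
  have c₂ := Measure.map_map (μ := P₂) (dec_meas (p := p)) (Sv_meas M₂ hpp₂ wt B hB)
  rw [hlaw] at c₁
  exact c₁.symm.trans c₂
end
end

section
/- Fix r ∈ ℕ and reals t₁ < t₂ < ⋯ < t_r. Let X = (X_i^j : i ≥ 1, 1 ≤ j ≤ r) and Y = (Y_i^j : i ≥ 1, 1 ≤ j ≤ r) be random arrays on a probability space (Ω, ℱ, ℙ) with X_i^j(ω) ≥ X_{i+1}^j(ω) and Y_i^j(ω) ≥ Y_{i+1}^j(ω) for all ω ∈ Ω, i ≥ 1 and 1 ≤ j ≤ r. Suppose that the random measures M^X(ω,·) = ∑_{i≥1}∑_{j=1}^r δ_{(t_j, X_i^j(ω))} and M^Y(ω,·) = ∑_{i≥1}∑_{j=1}^r δ_{(t_j, Y_i^j(ω))} are locally finite, hence point processes on ℝ². Then M^X and M^Y have the same distribution (for every finite collection of bounded Borel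 sets B₁,…,B_p ⊆ ℝ², the random vectors (M^X(B₁),…,M^X(B_p)) and (M^Y(B₁),…,M^Y(B_p)) have the same law) if and only if X and Y have the same finite-dimensional distributions (for every finite set of index pairs (i,j), the corresponding random vectors of entries of X and of Y have the same law, i.e., X and Y have the same law as random elements of ℝ^∞ with the product σ-algebra). -/
open MeasureTheory
open scoped ENNReal

noncomputable section

/-- A point process on `ℝ²`. -/
def IsPointProcess2 {Ω : Type*} [MeasurableSpace Ω] (M : Ω → Measure (ℝ × ℝ)) : Prop :=
  (∀ A : Set (ℝ × ℝ), MeasurableSet A → Measurable fun ω => M ω A) ∧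
  (∀ ω, ∀ B : Set (ℝ × ℝ), MeasurableSet B → Bornology.IsBounded B →
    ∃ n : ℕ, M ω B = n)

/-- The random measure `∑_{i≥1}∑_{j=1}^r δ_{(t_j, X_i^j(ω))}` on `ℝ²` formed by the
array `X` at times `t`. -/
def arrMeasure {r : ℕ} (t : Fin r → ℝ) {Ω : Type*}
    (X : ℕ → Fin r → Ω → ℝ) (ω : Ω) : Measure (ℝ × ℝ) :=
  Measure.sum fun p : ℕ × Fin r => Measure.dirac (t p.2, X p.1 p.2 ω)

theorem arrMeasure_apply9 {r : ℕ} (t : Fin r → ℝ) {Ω : Type*}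
    (X : ℕ → Fin r → Ω → ℝ) (ω : Ω) (B : Set (ℝ × ℝ)) (hB : MeasurableSet B) :
    arrMeasure t X ω B =
      ∑' p : ℕ × Fin r, B.indicator (1 : ℝ × ℝ → ℝ≥0∞) (t p.2, X p.1 p.2 ω) := by
  unfold arrMeasure
  rw [Measure.sum_apply _ hB]
  exact tsum_congr fun p => Measure.dirac_apply' _ hB

theorem lt_iff9 {r : ℕ} (t : Fin r → ℝ) (ht : StrictMono t) {Ω : Type*}
    (X : ℕ → Fin r → Ω → ℝ) (hX : ∀ i j ω, X (i + 1) j ω ≤ X i j ω)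
    (i : ℕ) (j : Fin r) (ω : Ω) (a : ℝ) :
    a < X i j ω ↔ ∃ n : ℕ, ((i + 1 : ℕ) : ℝ≥0∞) ≤
      arrMeasure t X ω ({t j} ×ˢ Set.Ioc a (a + n)) := by
  have hanti : Antitone fun k => X k j ω := antitone_nat_of_succ_le fun k => hX k j ω
  have hB : ∀ n : ℕ, MeasurableSet ({t j} ×ˢ Set.Ioc a (a + n) : Set (ℝ × ℝ)) := fun n =>
    (measurableSet_singleton _).prod measurableSet_Ioc
  constructor
  · intro h
    obtain ⟨n, hn⟩ := exists_nat_ge (X 0 j ω - a)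
    refine ⟨n, ?_⟩
    rw [arrMeasure_apply9 t X ω _ (hB n)]
    refine le_trans ?_ (ENNReal.sum_le_tsum (Finset.range (i + 1) ×ˢ {j}))
    rw [Finset.sum_congr rfl (g := fun _ => (1 : ℝ≥0∞))]
    · simp
    · rintro ⟨k, j'⟩ hk
      simp only [Finset.mem_product, Finset.mem_range, Finset.mem_singleton] at hk
      obtain ⟨hk, rfl⟩ := hk
      have h1 : X i j' ω ≤ X k j' ω := hanti (by omega)
      have h2 : X k j' ω ≤ X 0 j' ω := hanti (by omega)
      rw [Set.indicator_of_mem]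
      · rfl
      · refine ⟨rfl, ?_, ?_⟩
        · exact lt_of_lt_of_le h h1
        · change X k j' ω ≤ a + n
          linarith
  · rintro ⟨n, hn⟩
    by_contra hc
    push Not at hc
    rw [arrMeasure_apply9 t X ω _ (hB n), tsum_eq_sum (s := Finset.range i ×ˢ {j})] at hn
    · have h3 := hn.trans (Finset.sum_le_sum (g := fun _ => (1 : ℝ≥0∞))
        (fun p _ => Set.indicator_le_self' (fun _ _ => zero_le) _))
      simp only [Finset.sum_const, Finset.card_product, Finset.card_range,
        Finset.card_singleton, mul_one, nsmul_eq_mul] at h3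
      have := Nat.cast_le.mp h3
      omega
    · rintro ⟨k, j'⟩ hk
      apply Set.indicator_of_notMem
      rintro ⟨h1, h2, -⟩
      have hj : j' = j := ht.injective h1
      subst hj
      apply hk
      simp only [Finset.mem_product, Finset.mem_range, Finset.mem_singleton, and_true]
      by_contra hki
      have h4 : X k j' ω ≤ X i j' ω := hanti (by omega)
      change a < X k j' ω at h2
      linarith

theorem pi_ext9 {ι : Type*} (μ ν : Measure (ι → ℝ)) [IsProbabilityMeasure μ]
    [IsProbabilityMeasure ν]
    (h : ∀ (s : Finset ι) (a : ι → ℝ), μ {x | ∀ p ∈ s, a p < x p} = ν {x | ∀ p ∈ s, a p < x p}) :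
    μ = ν := by
  classical
  let π : ι → Set (Set (ι → ℝ)) := fun p => {u | ∃ v ∈ Set.range Set.Ioi, (fun x => x p) ⁻¹' v = u}
  refine ext_of_generate_finite (piiUnionInter π Set.univ) ?_
    (isPiSystem_piiUnionInter π (fun p => isPiSystem_Ioi.comap _) _) ?_ (by simp)
  · apply le_antisymm
    · refine iSup_le fun p => ?_
      refine le_trans ?_ (le_generateFrom_piiUnionInter Set.univ (Set.mem_univ p))
      rw [BorelSpace.measurable_eq (α := ℝ), borel_eq_generateFrom_Ioi,
        MeasurableSpace.comap_generateFrom]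
      exact le_rfl
    · apply generateFrom_piiUnionInter_le
      intro p
      apply MeasurableSpace.generateFrom_le
      rintro _ ⟨_, ⟨a, rfl⟩, rfl⟩
      exact measurable_pi_apply p measurableSet_Ioi
  · rintro _ ⟨s, -, f, hf, rfl⟩
    have hf' : ∀ p, ∃ a : ℝ, p ∈ s → f p = {x | a < x p} := by
      intro p
      by_cases hp : p ∈ s
      · obtain ⟨_, ⟨a, rfl⟩, hv⟩ := hf p hp
        exact ⟨a, fun _ => hv.symm⟩
      · exact ⟨0, fun h => absurd h hp⟩
    choose a ha using hf'
    have : (⋂ p ∈ s, f p) = {x | ∀ p ∈ s, a p < x p} := by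
      ext x
      simp only [Set.mem_iInter]
      refine forall₂_congr fun p hp => ?_
      rw [ha p hp]
      rfl
    rw [this]
    exact h s a

/-- Corollary 2.15 (`CorWC2`): two ordered arrays form point processes with the same
law iff they have the same finite-dimensional distributions. -/
theorem stmt9 (r : ℕ) (hr : 0 < r) (t : Fin r → ℝ) (ht : StrictMono t)
    {Ω : Type*} [MeasurableSpace Ω] (P : Measure Ω) [IsProbabilityMeasure P]
    (X Y : ℕ → Fin r → Ω → ℝ)
    (hXmeas : ∀ i j, Measurable (X i j)) (hYmeas : ∀ i j, Measurable (Y i j))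
    (hXord : ∀ i j ω, X (i + 1) j ω ≤ X i j ω)
    (hYord : ∀ i j ω, Y (i + 1) j ω ≤ Y i j ω)
    (hXpp : IsPointProcess2 (arrMeasure t X))
    (hYpp : IsPointProcess2 (arrMeasure t Y)) :
    ((∀ (p : ℕ) (B : Fin p → Set (ℝ × ℝ)),
        (∀ i, MeasurableSet (B i)) → (∀ i, Bornology.IsBounded (B i)) →
        Measure.map (fun ω i => arrMeasure t X ω (B i)) P =
          Measure.map (fun ω i => arrMeasure t Y ω (B i)) P) ↔
      Measure.map (fun ω (p : ℕ × Fin r) => X p.1 p.2 ω) P =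
        Measure.map (fun ω (p : ℕ × Fin r) => Y p.1 p.2 ω) P) := by
  have hXm : Measurable (fun ω (p : ℕ × Fin r) => X p.1 p.2 ω) :=
    measurable_pi_iff.mpr fun p => hXmeas _ _
  have hYm : Measurable (fun ω (p : ℕ × Fin r) => Y p.1 p.2 ω) :=
    measurable_pi_iff.mpr fun p => hYmeas _ _
  constructor
  · intro H
    have := Measure.isProbabilityMeasure_map (μ := P) hXm.aemeasurable
    have := Measure.isProbabilityMeasure_map (μ := P) hYm.aemeasurable
    apply pi_ext9
    intro s a
    have hms : MeasurableSet {x : ℕ × Fin r → ℝ | ∀ p ∈ s, a p < x p} := by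
      have : {x : ℕ × Fin r → ℝ | ∀ p ∈ s, a p < x p} = ⋂ p ∈ s, {x | a p < x p} := by
        ext x; simp
      rw [this]
      exact Finset.measurableSet_biInter _ fun p _ =>
        measurableSet_lt measurable_const (measurable_pi_apply p)
    rw [Measure.map_apply hXm hms, Measure.map_apply hYm hms]
    let B : ℕ → ℕ × Fin r → Set (ℝ × ℝ) := fun n p => {t p.2} ×ˢ Set.Ioc (a p) (a p + n)
    have hB : ∀ n p, MeasurableSet (B n p) := fun n p =>
      (measurableSet_singleton _).prod measurableSet_Ioc
    have hBb : ∀ n p, Bornology.IsBounded (B n p) := fun n p =>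
      Bornology.isBounded_singleton.prod (Metric.isBounded_Ioc _ _)
    have hBm : ∀ p, Monotone fun n => B n p := by
      intro p m n hmn
      apply Set.prod_mono le_rfl
      apply Set.Ioc_subset_Ioc le_rfl
      have : (m : ℝ) ≤ n := Nat.cast_le.mpr hmn
      linarith
    let E : (ℕ → Fin r → Ω → ℝ) → ℕ → Set Ω := fun Z n =>
      {ω | ∀ p ∈ s, ((p.1 + 1 : ℕ) : ℝ≥0∞) ≤ arrMeasure t Z ω (B n p)}
    have hEmono : ∀ Z, Monotone (E Z) := fun Z m n hmn ω hω p hp =>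
      (hω p hp).trans (measure_mono (hBm p hmn))
    have hE : ∀ Z : ℕ → Fin r → Ω → ℝ, (∀ i j ω, Z (i + 1) j ω ≤ Z i j ω) →
        (fun ω (p : ℕ × Fin r) => Z p.1 p.2 ω) ⁻¹' {x | ∀ p ∈ s, a p < x p} = ⋃ n, E Z n := by
      intro Z hZ
      ext ω
      simp only [Set.mem_iUnion]
      constructor
      · intro hω
        have h1 : ∀ p, ∃ n : ℕ, p ∈ s →
            ((p.1 + 1 : ℕ) : ℝ≥0∞) ≤ arrMeasure t Z ω (B n p) := by
          intro p
          by_cases hp : p ∈ s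
          · obtain ⟨n, hn⟩ := (lt_iff9 t ht Z hZ p.1 p.2 ω (a p)).1 (hω p hp)
            exact ⟨n, fun _ => hn⟩
          · exact ⟨0, fun h => absurd h hp⟩
        choose N hN using h1
        exact ⟨s.sup N, fun p hp => (hN p hp).trans
          (measure_mono (hBm p (Finset.le_sup (f := N) hp)))⟩
      · rintro ⟨n, hn⟩ p hp
        exact (lt_iff9 t ht Z hZ p.1 p.2 ω (a p)).2 ⟨n, hn p hp⟩
    have hEeq : ∀ n, P (E X n) = P (E Y n) := by
      intro n
      let e := s.equivFin
      have h := H s.card (fun k => B n (e.symm k)) (fun k => hB _ _) (fun k => hBb _ _)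
      let U : Set (Fin s.card → ℝ≥0∞) :=
        {y | ∀ k, (((e.symm k : ℕ × Fin r).1 + 1 : ℕ) : ℝ≥0∞) ≤ y k}
      have hU : MeasurableSet U := by
        have : U = ⋂ k, {y | (((e.symm k : ℕ × Fin r).1 + 1 : ℕ) : ℝ≥0∞) ≤ y k} := by
          ext y; simp [U]
        rw [this]
        exact MeasurableSet.iInter fun k =>
          measurableSet_le measurable_const (measurable_pi_apply k)
      have h2 := congrArg (fun μ => μ U) h
      rw [Measure.map_apply (measurable_pi_iff.mpr fun k => hXpp.1 _ (hB _ _)) hU,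
        Measure.map_apply (measurable_pi_iff.mpr fun k => hYpp.1 _ (hB _ _)) hU] at h2
      have h3 : ∀ Z : ℕ → Fin r → Ω → ℝ,
          E Z n = (fun ω k => arrMeasure t Z ω (B n (e.symm k))) ⁻¹' U := by
        intro Z
        ext ω
        constructor
        · intro hω k
          exact hω _ (e.symm k).2
        · intro hω p hp
          have := hω (e ⟨p, hp⟩)
          simpa using this
      rw [h3 X, h3 Y]
      exact h2
    rw [hE X hXord, hE Y hYord]
    refine tendsto_nhds_unique (tendsto_measure_iUnion_atTop (hEmono X)) ?_
    refine (tendsto_measure_iUnion_atTop (hEmono Y)).congr fun n => ?_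
    exact (hEeq n).symm
  · intro H p B hB _
    let G : (ℕ × Fin r → ℝ) → Fin p → ℝ≥0∞ := fun x i =>
      ∑' q : ℕ × Fin r, (B i).indicator (1 : ℝ × ℝ → ℝ≥0∞) (t q.2, x q)
    have hG : Measurable G := by
      refine measurable_pi_iff.mpr fun i => Measurable.ennreal_tsum fun q => ?_
      exact (measurable_one.indicator (hB i)).comp
        (measurable_const.prodMk (measurable_pi_apply q))
    have h1 : ∀ Z : ℕ → Fin r → Ω → ℝ, (fun ω i => arrMeasure t Z ω (B i)) =
        G ∘ (fun ω (p : ℕ × Fin r) => Z p.1 p.2 ω) := by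
      intro Z
      ext ω i
      exact arrMeasure_apply9 t Z ω _ (hB i)
    rw [h1 X, h1 Y, ← Measure.map_map hG hXm, ← Measure.map_map hG hYm, H]
end
end

section
/- For each N ≥ 1 let X^N = (X_i^N)_{i≥1} be a random sequence on a probability space (Ω, ℱ, ℙ) with X_1^N(ω) ≥ X_2^N(ω) ≥ ⋯ for all ω, and suppose that M^N(ω,A) = ∑_{i≥1} 1{X_i^N(ω) ∈ A} defines a point process on ℝ. Assume: (1) there is a point process M on ℝ (on some probability space) such that M^N converges weakly to M in the vague topology, i.e., for every p ∈ ℕ and all continuous compactly supported f₁,…,f_p : ℝ → ℝ, the random vectors (∫f₁ dM^N, …, ∫f_p dM^N) converge in distribution to (∫f₁ dM, …, ∫f_p dM) as N → ∞; (2) ℙ(M(ℝ) = ∞) = 1; (3) lim_{a→∞} limsup_{N→∞} ℙ(X_1^N ≥ a) = 0. Then the sequence {X^N} is tight as random elements of ℝ^∞; equivalently, for every i ≥ 1, lim_{a→∞} limsup_{N→∞} ℙ(|X_i^N| ≥ a) = 0. -/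
open MeasureTheory Filter Topology
open scoped ENNReal

noncomputable section

/-- A point process on `ℝ`. -/
def IsPointProcess1 {Ω : Type*} [MeasurableSpace Ω] (M : Ω → Measure ℝ) : Prop :=
  (∀ A : Set ℝ, MeasurableSet A → Measurable fun ω => M ω A) ∧
  (∀ ω, ∀ B : Set ℝ, MeasurableSet B → Bornology.IsBounded B → ∃ n : ℕ, M ω B = n)

lemma aux_bump (n : ℕ) : ∃ f : ℝ → ℝ, Continuous f ∧ HasCompactSupport f ∧ (∀ x, 0 ≤ f x) ∧
    (∀ x, (Set.Icc (-(n:ℝ)) n).indicator (fun _ => (1:ℝ)) x ≤ f x) ∧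
    (∀ x, f x ≤ (Set.Icc (-(n:ℝ) - 1) (n + 1)).indicator (fun _ => (1:ℝ)) x) := by
  have h0 : ∀ x : ℝ, x ∉ Set.Icc (-(n:ℝ) - 1) (n + 1) → max 0 (min 1 ((n:ℝ) + 1 - |x|)) = 0 := by
    intro x hx
    apply max_eq_left
    apply (min_le_right _ _).trans
    by_contra h
    push Not at h
    apply hx
    have := abs_le.1 (show |x| ≤ n + 1 by linarith)
    exact ⟨by linarith [this.1], this.2⟩
  refine ⟨fun x => max 0 (min 1 ((n:ℝ) + 1 - |x|)), by fun_prop, ?_, fun x => le_max_left _ _, ?_, ?_⟩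
  · exact HasCompactSupport.intro (isCompact_Icc) (fun x hx => h0 x hx)
  · intro x
    by_cases hx : x ∈ Set.Icc (-(n:ℝ)) n
    · rw [Set.indicator_of_mem hx]
      apply le_max_of_le_right
      have : |x| ≤ n := abs_le.2 hx
      exact le_min le_rfl (by linarith)
    · rw [Set.indicator_of_notMem hx]
      exact le_max_left _ _
  · intro x
    by_cases hx : x ∈ Set.Icc (-(n:ℝ) - 1) (n + 1)
    · rw [Set.indicator_of_mem hx]
      exact max_le zero_le_one (min_le_left _ _)
    · rw [Set.indicator_of_notMem hx]
      exact (h0 x hx).le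

lemma aux_finite {Ω : Type*} [MeasurableSpace Ω] {M : Ω → Measure ℝ} (hM : IsPointProcess1 M)
    (ω : Ω) : IsFiniteMeasureOnCompacts (M ω) := by
  constructor
  intro K hK
  obtain ⟨n, hn⟩ := hM.2 ω K hK.measurableSet hK.isBounded
  rw [hn]
  exact ENNReal.natCast_lt_top n

lemma aux_meas {Ω : Type*} [MeasurableSpace Ω] {M : Ω → Measure ℝ} (hM : IsPointProcess1 M)
    (f : ℝ → ℝ) (hf : Continuous f) (h0 : ∀ x, 0 ≤ f x) :
    Measurable fun ω => ∫ x, f x ∂(M ω) := by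
  have h1 : Measurable M := Measure.measurable_of_measurable_coe _ hM.1
  have h2 : (fun ω => ∫ x, f x ∂(M ω)) = fun ω => (∫⁻ x, ENNReal.ofReal (f x) ∂(M ω)).toReal := by
    funext ω
    exact integral_eq_lintegral_of_nonneg_ae (Eventually.of_forall h0) hf.aestronglyMeasurable
  rw [h2]
  exact ((Measure.measurable_lintegral (hf.measurable.ennreal_ofReal)).comp h1).ennreal_toReal

lemma aux_small {Ω : Type*} [MeasurableSpace Ω] (P : Measure Ω) [IsProbabilityMeasure P]
    {M : Ω → Measure ℝ} (hM : IsPointProcess1 M)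
    (hinf : ∀ᵐ ω ∂P, M ω Set.univ = ⊤) (i : ℕ) :
    Tendsto (fun n : ℕ => P {ω | M ω (Set.Icc (-(n:ℝ)) n) ≤ i}) atTop (𝓝 0) := by
  have hmono : Monotone fun n : ℕ => Set.Icc (-(n:ℝ)) n := by
    intro m n hmn
    have : (m:ℝ) ≤ n := by exact_mod_cast hmn
    exact Set.Icc_subset_Icc (by linarith) this
  have hU : (⋃ n : ℕ, Set.Icc (-(n:ℝ)) n) = Set.univ := by
    apply Set.eq_univ_of_forall
    intro x
    obtain ⟨n, hn⟩ := exists_nat_ge |x|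
    exact Set.mem_iUnion.2 ⟨n, abs_le.1 hn⟩
  have hz : P (⋂ n : ℕ, {ω | M ω (Set.Icc (-(n:ℝ)) n) ≤ i}) = 0 := by
    refine measure_mono_null ?_ (ae_iff.1 hinf)
    intro ω hω htop
    have h1 := tendsto_measure_iUnion_atTop (μ := M ω) hmono
    rw [hU, htop] at h1
    have h2 : (⊤ : ℝ≥0∞) ≤ i := le_of_tendsto' h1 (fun n => Set.mem_iInter.1 hω n)
    exact absurd h2 (not_le.2 (ENNReal.natCast_lt_top i))
  rw [← hz]
  apply tendsto_measure_iInter_atTop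
  · intro n
    exact (measurableSet_le (hM.1 _ measurableSet_Icc) measurable_const).nullMeasurableSet
  · intro m n hmn ω hω
    exact (measure_mono (hmono hmn)).trans hω
  · exact ⟨0, measure_ne_top _ _⟩

lemma aux_count (Y : ℕ → ℝ) (hY : Antitone Y) (i : ℕ) (a b : ℝ) (h : Y i < a) :
    (Measure.sum fun j : ℕ => Measure.dirac (Y j)) (Set.Icc a b) ≤ i := by
  rw [Measure.sum_apply _ measurableSet_Icc, tsum_eq_sum (s := Finset.range i)]
  · calc _ ≤ ∑ j ∈ Finset.range i, (1 : ℝ≥0∞) := Finset.sum_le_sum fun j _ => prob_le_one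
      _ = i := by simp
  · intro j hj
    rw [Measure.dirac_apply' _ measurableSet_Icc, Set.indicator_of_notMem]
    intro hm
    have hij : i ≤ j := by simpa using hj
    exact absurd (hm.1.trans (hY hij)) (not_le.2 h)

lemma aux_lower {Ω : Type*} [MeasurableSpace Ω] (P : Measure Ω) [IsProbabilityMeasure P]
    (X : ℕ → ℕ → Ω → ℝ) (hXm : ∀ N i, Measurable (X N i))
    (hord : ∀ N i ω, X N (i + 1) ω ≤ X N i ω)
    (hpp : ∀ N, IsPointProcess1 fun ω => Measure.sum fun i : ℕ => Measure.dirac (X N i ω))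
    {Ω' : Type*} [MeasurableSpace Ω'] (P' : Measure Ω') [IsProbabilityMeasure P']
    (M : Ω' → Measure ℝ) (hM : IsPointProcess1 M)
    (hconv : ∀ (p : ℕ) (f : Fin p → ℝ → ℝ),
      (∀ i, Continuous (f i)) → (∀ i, HasCompactSupport (f i)) →
      ∀ g : BoundedContinuousFunction (Fin p → ℝ) ℝ,
        Tendsto (fun N => ∫ ω, g (fun i => ∫ x, f i x
            ∂(Measure.sum fun j : ℕ => Measure.dirac (X N j ω))) ∂P)
          atTop (𝓝 (∫ ω', g (fun i => ∫ x, f i x ∂(M ω')) ∂P')))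
    (hinf : ∀ᵐ ω' ∂P', M ω' Set.univ = ⊤) (i : ℕ) (ε : ℝ≥0∞) (hε : 0 < ε) :
    ∃ a₀ : ℝ, ∀ᶠ N in atTop, P {ω | X N i ω ≤ -a₀} ≤ ε := by
  obtain ⟨r, hr0, hrε⟩ := ENNReal.lt_iff_exists_nnreal_btwn.1 hε
  obtain ⟨n, hn⟩ := ((aux_small P' hM hinf i).eventually_lt_const hr0).exists
  obtain ⟨f, hfc, hfs, hf0, hfl, hfu⟩ := aux_bump n
  let g : BoundedContinuousFunction (Fin 1 → ℝ) ℝ :=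
    BoundedContinuousFunction.ofNormedAddCommGroup
      (fun t => max 0 (min 1 ((i:ℝ) + 1 - t 0))) (by fun_prop) 1 (by
        intro t
        rw [Real.norm_of_nonneg (le_max_left _ _)]
        exact max_le zero_le_one (min_le_left _ _))
  have hg : ∀ t, g t = max 0 (min 1 ((i:ℝ) + 1 - t 0)) := fun t => rfl
  have hg0 : ∀ t, 0 ≤ g t := fun t => le_max_left _ _
  have hg1 : ∀ t, g t ≤ 1 := fun t => max_le zero_le_one (min_le_left _ _)
  have hlim := hconv 1 (fun _ => f) (fun _ => hfc) (fun _ => hfs) g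
  have hup : ∫ ω', g (fun _ => ∫ x, f x ∂(M ω')) ∂P' < r := by
    have hmA : MeasurableSet {ω | M ω (Set.Icc (-(n:ℝ)) n) ≤ i} :=
      measurableSet_le (hM.1 _ measurableSet_Icc) measurable_const
    calc _ ≤ ∫ ω', ({ω | M ω (Set.Icc (-(n:ℝ)) n) ≤ i}).indicator (fun _ => (1:ℝ)) ω' ∂P' := by
          apply integral_mono_of_nonneg (Eventually.of_forall fun _ => hg0 _)
          · exact (integrable_const _).indicator hmA
          · refine Eventually.of_forall fun ω => ?_
            by_cases hω : ω ∈ {ω | M ω (Set.Icc (-(n:ℝ)) n) ≤ i}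
            · simp only [Set.indicator_of_mem hω]
              exact hg1 _
            · simp only [Set.indicator_of_notMem hω]
              have := aux_finite hM ω
              rw [hg]
              apply max_le le_rfl
              apply (min_le_right _ _).trans
              obtain ⟨k, hk⟩ := hM.2 ω (Set.Icc (-(n:ℝ)) n) measurableSet_Icc
                (Metric.isBounded_Icc _ _)
              have hik : i + 1 ≤ k := by
                have h : ¬ ((k : ℝ≥0∞) ≤ i) := by rw [← hk]; exact hω
                have h' : ¬ (k ≤ i) := by exact_mod_cast h
                omega
              have h1 : (M ω).real (Set.Icc (-(n:ℝ)) n) ≤ ∫ x, f x ∂(M ω) := by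
                rw [← integral_indicator_one measurableSet_Icc]
                apply integral_mono
                · exact (integrable_indicator_iff measurableSet_Icc).2
                    (integrableOn_const (isCompact_Icc.measure_lt_top.ne))
                · exact hfc.integrable_of_hasCompactSupport hfs
                · exact hfl
              have h2 : (M ω).real (Set.Icc (-(n:ℝ)) n) = k := by
                rw [measureReal_def, hk]; simp
              have h3 : (i:ℝ) + 1 ≤ k := by exact_mod_cast hik
              linarith
      _ = P'.real {ω | M ω (Set.Icc (-(n:ℝ)) n) ≤ i} := integral_indicator_one hmA
      _ < r := by
          rw [measureReal_def]
          exact (ENNReal.toReal_lt_toReal (measure_ne_top _ _) ENNReal.coe_ne_top).2 hn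
  refine ⟨n + 2, ?_⟩
  filter_upwards [hlim.eventually_lt_const hup] with N hN
  have hmB : MeasurableSet {ω | X N i ω ≤ -((n:ℝ) + 2)} :=
    measurableSet_le (hXm N i) measurable_const
  have hlow : P.real {ω | X N i ω ≤ -((n:ℝ) + 2)} ≤ r := by
    refine le_trans ?_ hN.le
    rw [← integral_indicator_one hmB]
    apply integral_mono
    · exact (integrable_const _).indicator hmB
    · have hm : Measurable fun ω => g (fun _ => ∫ x, f x
            ∂(Measure.sum fun j : ℕ => Measure.dirac (X N j ω))) :=
        g.continuous.measurable.comp (measurable_pi_lambda _ fun _ => aux_meas (hpp N) f hfc hf0)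
      exact Integrable.of_bound hm.aestronglyMeasurable 1 (Eventually.of_forall fun ω => by
        rw [Real.norm_of_nonneg (hg0 _)]; exact hg1 _)
    · intro ω
      by_cases hω : ω ∈ {ω | X N i ω ≤ -((n:ℝ) + 2)}
      · simp only [Set.indicator_of_mem hω, Pi.one_apply]
        have := aux_finite (hpp N) ω
        have hc := aux_count (fun j => X N j ω) (antitone_nat_of_succ_le fun j => hord N j ω) i
          (-(n:ℝ) - 1) (n + 1) (by
            have : X N i ω ≤ -((n:ℝ) + 2) := hω
            show X N i ω < _
            linarith)
        have h1 : ∫ x, f x ∂(Measure.sum fun j : ℕ => Measure.dirac (X N j ω)) ≤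
            (Measure.sum fun j : ℕ => Measure.dirac (X N j ω)).real
              (Set.Icc (-(n:ℝ) - 1) (n + 1)) := by
          rw [← integral_indicator_one measurableSet_Icc]
          apply integral_mono
          · exact hfc.integrable_of_hasCompactSupport hfs
          · exact (integrable_indicator_iff measurableSet_Icc).2
              (integrableOn_const (isCompact_Icc.measure_lt_top.ne))
          · exact hfu
        have h2 : (Measure.sum fun j : ℕ => Measure.dirac (X N j ω)).real
              (Set.Icc (-(n:ℝ) - 1) (n + 1)) ≤ i := by
          rw [measureReal_def]
          exact ENNReal.toReal_le_of_le_ofReal (by positivity) (by simpa using hc)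
        rw [hg]
        apply le_max_of_le_right
        exact le_min le_rfl (by linarith)
      · simp only [Set.indicator_of_notMem hω]
        exact hg0 _
  refine le_trans ?_ hrε.le
  rw [measureReal_def] at hlow
  exact (ENNReal.le_ofReal_iff_toReal_le (measure_ne_top _ _) r.2).2 hlow |>.trans (by simp)

/-- Proposition 2.16 (`TightnessCrit`): tightness criterion for ordered particle
configurations whose point processes converge weakly to an infinite point process. -/
theorem stmt10 {Ω : Type*} [MeasurableSpace Ω] (P : Measure Ω) [IsProbabilityMeasure P]
    (X : ℕ → ℕ → Ω → ℝ) (hXm : ∀ N i, Measurable (X N i))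
    (hord : ∀ N i ω, X N (i + 1) ω ≤ X N i ω)
    (hpp : ∀ N, IsPointProcess1 fun ω => Measure.sum fun i : ℕ => Measure.dirac (X N i ω))
    {Ω' : Type*} [MeasurableSpace Ω'] (P' : Measure Ω') [IsProbabilityMeasure P']
    (M : Ω' → Measure ℝ) (hM : IsPointProcess1 M)
    (hconv : ∀ (p : ℕ) (f : Fin p → ℝ → ℝ),
      (∀ i, Continuous (f i)) → (∀ i, HasCompactSupport (f i)) →
      ∀ g : BoundedContinuousFunction (Fin p → ℝ) ℝ,
        Tendsto (fun N => ∫ ω, g (fun i => ∫ x, f i x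
            ∂(Measure.sum fun j : ℕ => Measure.dirac (X N j ω))) ∂P)
          atTop (𝓝 (∫ ω', g (fun i => ∫ x, f i x ∂(M ω')) ∂P')))
    (hinf : ∀ᵐ ω' ∂P', M ω' Set.univ = ⊤)
    (htight1 : Tendsto (fun a : ℝ =>
        Filter.limsup (fun N : ℕ => P {ω | a ≤ X N 0 ω}) atTop)
      atTop (𝓝 (0 : ℝ≥0∞))) :
    ∀ i : ℕ, Tendsto (fun a : ℝ =>
        Filter.limsup (fun N : ℕ => P {ω | a ≤ |X N i ω|}) atTop)
      atTop (𝓝 (0 : ℝ≥0∞)) := by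
  intro i
  rw [ENNReal.tendsto_nhds_zero] at htight1 ⊢
  intro ε hε
  have hε2 : 0 < ε / 2 := ENNReal.half_pos hε.ne'
  obtain ⟨a₀, ha₀⟩ := aux_lower P X hXm hord hpp P' M hM hconv hinf i (ε / 2) hε2
  filter_upwards [htight1 (ε / 2) hε2, eventually_ge_atTop a₀] with a h1 h2
  have hanti : ∀ N ω, X N i ω ≤ X N 0 ω := fun N ω =>
    (antitone_nat_of_succ_le (f := fun j => X N j ω) fun j => hord N j ω) (Nat.zero_le i)
  calc limsup (fun N : ℕ => P {ω | a ≤ |X N i ω|}) atTop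
      ≤ limsup (fun N : ℕ => P {ω | a ≤ X N 0 ω} + ε / 2) atTop := by
        apply limsup_le_limsup
        · filter_upwards [ha₀] with N hN
          have hsub : {ω | a ≤ |X N i ω|} ⊆ {ω | a ≤ X N 0 ω} ∪ {ω | X N i ω ≤ -a₀} := by
            intro ω hω
            rcases le_abs.1 (show a ≤ |X N i ω| from hω) with h | h
            · exact Or.inl (h.trans (hanti N ω))
            · exact Or.inr (show X N i ω ≤ -a₀ by linarith)
          exact (measure_mono hsub).trans ((measure_union_le _ _).trans (by gcongr))
        all_goals isBoundedDefault
    _ = limsup (fun N : ℕ => P {ω | a ≤ X N 0 ω}) atTop + ε / 2 := by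
        apply limsup_add_const
        all_goals isBoundedDefault
    _ ≤ ε / 2 + ε / 2 := by
        gcongr
    _ = ε := ENNReal.add_halves ε
end
end

section
/- With the notation of the context, define for each N ∈ ℕ the quantity K¹_N = (1−q)^{M_u(N)−M_v(N)} · (2πi)^{−1} ∫ over the vertical segment from 1 − iN^{−1/3} to 1 + iN^{−1/3} of (1−qw)^{M_v(N)−M_u(N)} · exp((δ_N − 1)·Log w) dw, i.e., K¹_N = (1−q)^{M_u(N)−M_v(N)} · (2π)^{−1} ∫_{−N^{−1/3}}^{N^{−1/3}} (1−q(1+it))^{M_v(N)−M_u(N)} · exp((δ_N − 1)·Log(1+it)) dt (here M_v(N)−M_u(N) is an integer power and 1−q(1+it) ≠ 0). Then lim_{N→∞} N^{1/3} σ_q K¹_N = (2πi)^{−1} ∫_{−iσ_q}^{iσ_q} exp((ỹ−x̃)w − f_q(t_v−t_u)w²) dw = (2π)^{−1} ∫_{−σ_q}^{σ_q} exp((ỹ−x̃)·is − f_q(t_v−t_u)(is)²) ds. -/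
open Filter Topology Complex MeasureTheory intervalIntegral

noncomputable section

def sigmaQ (q : ℝ) : ℝ := q ^ ((1 : ℝ) / 3) * (1 + q) ^ ((1 : ℝ) / 3) / (1 - q)

def fQ (q : ℝ) : ℝ := q ^ ((1 : ℝ) / 3) / (2 * (1 + q) ^ ((2 : ℝ) / 3))

/-- `M_t(N) = N + ⌊t N^{2/3}⌋`. -/
def MMt (t : ℝ) (N : ℕ) : ℤ := (N : ℤ) + ⌊t * (N : ℝ) ^ ((2 : ℝ) / 3)⌋

/-- `δ_N = (q/(1-q))(t_v - t_u)N^{2/3} + σ_q (ỹ_N - x̃_N) N^{1/3}`. -/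
def deltaN (q tu tv : ℝ) (xN yN : ℕ → ℝ) (N : ℕ) : ℝ :=
  (q / (1 - q)) * (tv - tu) * (N : ℝ) ^ ((2 : ℝ) / 3) +
    sigmaQ q * (yN N - xN N) * (N : ℝ) ^ ((1 : ℝ) / 3)

/-- The quantity `K¹_N`, written via the parametrization `w = 1 + it`,
`t ∈ [-N^{-1/3}, N^{-1/3}]`, of the vertical segment from `1 - iN^{-1/3}` to
`1 + iN^{-1/3}` (so that `(2πi)^{-1} dw = (2π)^{-1} dt`). -/
def K1N (q tu tv : ℝ) (xN yN : ℕ → ℝ) (N : ℕ) : ℂ :=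
  ((1 : ℂ) - (q : ℂ)) ^ (MMt tu N - MMt tv N) * (1 / (2 * (Real.pi : ℂ))) *
    ∫ t in (-((N : ℝ) ^ (-(1 : ℝ) / 3)))..((N : ℝ) ^ (-(1 : ℝ) / 3)),
      ((1 : ℂ) - (q : ℂ) * (1 + (t : ℂ) * Complex.I)) ^ (MMt tv N - MMt tu N) *
        Complex.exp (((deltaN q tu tv xN yN N : ℂ) - 1) *
          Complex.log (1 + (t : ℂ) * Complex.I))

lemma logR_bound (z : ℂ) (hz : ‖z‖ ≤ 1 / 2) :
    ‖Complex.log (1 + z) - (z - z ^ 2 / 2)‖ ≤ ‖z‖ ^ 3 := by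
  have h := Complex.norm_log_sub_logTaylor_le 2 (z := z) (by linarith)
  have e : Complex.logTaylor (2 + 1) z = z - z ^ 2 / 2 := by
    simp [Complex.logTaylor, Finset.sum_range_succ]
    ring
  rw [e] at h
  refine h.trans ?_
  have h1 : (1 - ‖z‖)⁻¹ ≤ 2 := by
    rw [inv_le_comm₀ (by linarith) (by norm_num)]; linarith
  have h3 : 0 ≤ ‖z‖ ^ 3 := by positivity
  have := mul_le_mul_of_nonneg_left h1 h3
  norm_num
  linarith

lemma core_pt (a α τ β : ℝ) (ha : 0 ≤ a) (m : ℕ → ℤ) (d ε : ℕ → ℝ)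
    (hε : Tendsto ε atTop (𝓝 0)) (hpos : ∀ᶠ n in atTop, 0 < ε n)
    (hA : Tendsto (fun n => (-a * m n + d n) * ε n) atTop (𝓝 α))
    (hm : Tendsto (fun n => (m n : ℝ) * ε n ^ 2) atTop (𝓝 τ))
    (hd : Tendsto (fun n => d n * ε n ^ 2) atTop (𝓝 β)) :
    Tendsto (fun n => ∫ u in (-1 : ℝ)..1, 
        ((1 : ℂ) - (a : ℂ) * (((ε n * u : ℝ) : ℂ) * Complex.I)) ^ (m n) *
          Complex.exp ((d n : ℂ) * Complex.log (1 + ((ε n * u : ℝ) : ℂ) * Complex.I))) atTop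
      (𝓝 (∫ u in (-1 : ℝ)..1, Complex.exp ((α : ℂ) * ((u : ℂ) * Complex.I) -
        (((τ * a ^ 2 + β) / 2 : ℝ) : ℂ) * ((u : ℂ) * Complex.I) ^ 2))) := by
  -- remainder sequence
  set C : ℕ → ℝ := fun n => (|(m n : ℝ) * ε n ^ 2| * a ^ 3 + |d n * ε n ^ 2|) * ε n with hC
  have hC0 : Tendsto C atTop (𝓝 0) := by
    have := ((hm.abs.mul_const (a ^ 3)).add hd.abs).mul hε
    rwa [mul_zero] at this
  have hB : Tendsto (fun n => ((m n : ℝ) * ε n ^ 2 * a ^ 2 + d n * ε n ^ 2) / 2) atTop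
      (𝓝 ((τ * a ^ 2 + β) / 2)) := ((hm.mul_const _).add hd).div_const 2
  -- main decomposition
  have key : ∀ᶠ n in atTop, ∀ u : ℝ, |u| ≤ 1 → ∃ r : ℂ, ‖r‖ ≤ C n ∧
      ((1 : ℂ) - (a : ℂ) * (((ε n * u : ℝ) : ℂ) * Complex.I)) ^ (m n) *
          Complex.exp ((d n : ℂ) * Complex.log (1 + ((ε n * u : ℝ) : ℂ) * Complex.I)) =
      Complex.exp ((((-a * m n + d n) * ε n : ℝ) : ℂ) * ((u : ℂ) * Complex.I) -
        ((((m n : ℝ) * ε n ^ 2 * a ^ 2 + d n * ε n ^ 2) / 2 : ℝ) : ℂ) *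
          ((u : ℂ) * Complex.I) ^ 2 + r) := by
    have h1 : ∀ᶠ n in atTop, ε n < 1 / 2 := hε.eventually (gt_mem_nhds (by norm_num))
    have h2 : ∀ᶠ n in atTop, a * ε n < 1 / 2 := by
      have : Tendsto (fun n => a * ε n) atTop (𝓝 0) := by simpa using hε.const_mul a
      exact this.eventually (gt_mem_nhds (by norm_num))
    filter_upwards [h1, h2, hpos] with n h1 h2 hp u hu
    set z : ℂ := ((ε n * u : ℝ) : ℂ) * Complex.I with hz
    have nz : ‖z‖ = ε n * |u| := by
      rw [hz, norm_mul, Complex.norm_I, mul_one, Complex.norm_real, Real.norm_eq_abs, abs_mul,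
        abs_of_pos hp]
    have nz1 : ‖z‖ ≤ ε n := by rw [nz]; nlinarith
    have naz : ‖-(a : ℂ) * z‖ = a * ‖z‖ := by
      rw [norm_mul, norm_neg, Complex.norm_real, Real.norm_eq_abs, abs_of_nonneg ha]
    have naz1 : ‖-(a : ℂ) * z‖ ≤ a * ε n := by
      rw [naz]; exact mul_le_mul_of_nonneg_left nz1 ha
    have b1 := logR_bound z (by linarith)
    have b2 := logR_bound (-(a : ℂ) * z) (by linarith)
    have c1 := b1.trans (pow_le_pow_left₀ (norm_nonneg _) nz1 3)
    have c2 := b2.trans (pow_le_pow_left₀ (norm_nonneg _) naz1 3)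
    have hne : (1 : ℂ) + -(a : ℂ) * z ≠ 0 := by
      intro h
      have h' : -(a : ℂ) * z = -1 := by linear_combination h
      have : ‖-(a : ℂ) * z‖ = 1 := by rw [h']; simp
      linarith
    refine ⟨(m n : ℂ) * (Complex.log (1 + -(a : ℂ) * z) - (-(a : ℂ) * z - (-(a : ℂ) * z) ^ 2 / 2)) +
      (d n : ℂ) * (Complex.log (1 + z) - (z - z ^ 2 / 2)), ?_, ?_⟩
    · refine (norm_add_le _ _).trans ?_
      rw [norm_mul, norm_mul, Complex.norm_real, Complex.norm_intCast]
      simp only [hC, abs_mul, abs_pow, abs_of_pos hp, Real.norm_eq_abs]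
      have e1 := mul_le_mul_of_nonneg_left c1 (abs_nonneg (d n))
      have e2 := mul_le_mul_of_nonneg_left c2 (abs_nonneg (m n : ℝ))
      calc _ ≤ _ := add_le_add e2 e1
        _ = _ := by ring
    · have : (1 : ℂ) - (a : ℂ) * z = 1 + -(a : ℂ) * z := by ring
      rw [this]
      conv_lhs => rw [← Complex.exp_log hne]
      rw [← Complex.exp_int_mul, ← Complex.exp_add]
      congr 1
      rw [hz]
      push_cast
      ring
  apply intervalIntegral.tendsto_integral_filter_of_dominated_convergence
    (fun _ => Real.exp (|α| + 1 + (|(τ * a ^ 2 + β) / 2| + 1) + 1))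
  · refine Eventually.of_forall fun n => Measurable.aestronglyMeasurable ?_
    fun_prop
  · have h1 : ∀ᶠ n in atTop, |(-a * m n + d n) * ε n| < |α| + 1 :=
      hA.abs.eventually (gt_mem_nhds (by linarith))
    have h2 := hB.abs.eventually (gt_mem_nhds (lt_add_one |(τ * a ^ 2 + β) / 2|))
    have h3 := hC0.eventually (gt_mem_nhds (zero_lt_one))
    filter_upwards [h1, h2, h3, key] with n h1 h2 h3 hk
    refine Eventually.of_forall fun u hu => ?_
    have hu1 : |u| ≤ 1 := by
      rw [Set.uIoc_of_le (by norm_num)] at hu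
      exact abs_le.2 ⟨hu.1.le, hu.2⟩
    obtain ⟨r, hr, hrr⟩ := hk u hu1
    rw [hrr]
    refine (Complex.norm_exp_le_exp_norm _).trans (Real.exp_le_exp.2 ?_)
    refine (norm_add_le _ _).trans ?_
    have nu : ‖(u : ℂ) * Complex.I‖ ≤ 1 := by simpa using hu1
    have nu2 : ‖(u : ℂ) * Complex.I‖ ^ 2 ≤ 1 := pow_le_one₀ (norm_nonneg _) nu
    refine add_le_add ((norm_sub_le _ _).trans (add_le_add ?_ ?_)) (hr.trans h3.le)
    · rw [norm_mul, Complex.norm_real, Real.norm_eq_abs]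
      exact (mul_le_of_le_one_right (abs_nonneg _) nu).trans h1.le
    · rw [norm_mul, norm_pow, Complex.norm_real, Real.norm_eq_abs]
      exact (mul_le_of_le_one_right (abs_nonneg _) nu2).trans h2.le
  · exact intervalIntegrable_const
  · refine Eventually.of_forall fun u hu => ?_
    have hu1 : |u| ≤ 1 := by
      rw [Set.uIoc_of_le (by norm_num)] at hu
      exact abs_le.2 ⟨hu.1.le, hu.2⟩
    have hk : ∀ᶠ n in atTop, ∃ r : ℂ, ‖r‖ ≤ C n ∧
      ((1 : ℂ) - (a : ℂ) * (((ε n * u : ℝ) : ℂ) * Complex.I)) ^ (m n) *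
          Complex.exp ((d n : ℂ) * Complex.log (1 + ((ε n * u : ℝ) : ℂ) * Complex.I)) =
      Complex.exp ((((-a * m n + d n) * ε n : ℝ) : ℂ) * ((u : ℂ) * Complex.I) -
        ((((m n : ℝ) * ε n ^ 2 * a ^ 2 + d n * ε n ^ 2) / 2 : ℝ) : ℂ) *
          ((u : ℂ) * Complex.I) ^ 2 + r) := by
      filter_upwards [key] with n hn using hn u hu1
    have hk' : ∀ n, ∃ r : ℂ, (∃ r : ℂ, ‖r‖ ≤ C n ∧
      ((1 : ℂ) - (a : ℂ) * (((ε n * u : ℝ) : ℂ) * Complex.I)) ^ (m n) *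
          Complex.exp ((d n : ℂ) * Complex.log (1 + ((ε n * u : ℝ) : ℂ) * Complex.I)) =
      Complex.exp ((((-a * m n + d n) * ε n : ℝ) : ℂ) * ((u : ℂ) * Complex.I) -
        ((((m n : ℝ) * ε n ^ 2 * a ^ 2 + d n * ε n ^ 2) / 2 : ℝ) : ℂ) *
          ((u : ℂ) * Complex.I) ^ 2 + r)) → ‖r‖ ≤ C n ∧
      ((1 : ℂ) - (a : ℂ) * (((ε n * u : ℝ) : ℂ) * Complex.I)) ^ (m n) *
          Complex.exp ((d n : ℂ) * Complex.log (1 + ((ε n * u : ℝ) : ℂ) * Complex.I)) =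
      Complex.exp ((((-a * m n + d n) * ε n : ℝ) : ℂ) * ((u : ℂ) * Complex.I) -
        ((((m n : ℝ) * ε n ^ 2 * a ^ 2 + d n * ε n ^ 2) / 2 : ℝ) : ℂ) *
          ((u : ℂ) * Complex.I) ^ 2 + r) := by
      intro n
      by_cases h : ∃ r : ℂ, ‖r‖ ≤ C n ∧
        ((1 : ℂ) - (a : ℂ) * (((ε n * u : ℝ) : ℂ) * Complex.I)) ^ (m n) *
          Complex.exp ((d n : ℂ) * Complex.log (1 + ((ε n * u : ℝ) : ℂ) * Complex.I)) =
        Complex.exp ((((-a * m n + d n) * ε n : ℝ) : ℂ) * ((u : ℂ) * Complex.I) -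
        ((((m n : ℝ) * ε n ^ 2 * a ^ 2 + d n * ε n ^ 2) / 2 : ℝ) : ℂ) *
          ((u : ℂ) * Complex.I) ^ 2 + r)
      · obtain ⟨r, hr⟩ := h
        exact ⟨r, fun _ => hr⟩
      · exact ⟨0, fun h' => absurd h' h⟩
    choose r hr using hk'
    have hr0 : Tendsto r atTop (𝓝 0) := by
      refine squeeze_zero_norm' ?_ hC0
      filter_upwards [hk] with n hn using (hr n hn).1
    have hA' := (Complex.continuous_ofReal.tendsto _).comp hA
    have hB' := (Complex.continuous_ofReal.tendsto _).comp hB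
    have lim := ((hA'.mul_const ((u : ℂ) * Complex.I)).sub
      (hB'.mul_const (((u : ℂ) * Complex.I) ^ 2))).add hr0
    rw [add_zero] at lim
    refine ((Complex.continuous_exp.tendsto _).comp lim).congr' ?_
    filter_upwards [hk] with n hn
    exact (hr n hn).2.symm

lemma sigma_f (q : ℝ) (h0 : 0 < q) (h1 : q < 1) :
    fQ q * sigmaQ q ^ 2 = ((q / (1 - q)) ^ 2 + q / (1 - q)) / 2 := by
  have hq1 : (1 - q) ≠ 0 := by linarith
  have h2 : (1 + q) ^ ((2 : ℝ) / 3) = ((1 + q) ^ ((1 : ℝ) / 3)) ^ 2 := by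
    rw [← Real.rpow_natCast, ← Real.rpow_mul (by linarith)]; norm_num
  have h3 : q = (q ^ ((1 : ℝ) / 3)) ^ 3 := by
    rw [← Real.rpow_natCast, ← Real.rpow_mul h0.le]; norm_num
  have hp : 0 < (1 + q) ^ ((1 : ℝ) / 3) := Real.rpow_pos_of_pos (by linarith) _
  unfold fQ sigmaQ
  rw [h2]
  set b := (1 + q) ^ ((1 : ℝ) / 3)
  set c := q ^ ((1 : ℝ) / 3)
  have : c / (2 * b ^ 2) * (c * b / (1 - q)) ^ 2 = c ^ 3 / (2 * (1 - q) ^ 2) := by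
    field_simp
  rw [this, ← h3]
  field_simp
  ring

lemma MM_diff (tu tv : ℝ) (N : ℕ) :
    |((MMt tv N - MMt tu N : ℤ) : ℝ) - (tv - tu) * (N : ℝ) ^ ((2 : ℝ) / 3)| ≤ 1 := by
  unfold MMt
  push_cast
  have a1 := Int.floor_le (tv * (N : ℝ) ^ ((2 : ℝ) / 3))
  have a2 := Int.lt_floor_add_one (tv * (N : ℝ) ^ ((2 : ℝ) / 3))
  have a3 := Int.floor_le (tu * (N : ℝ) ^ ((2 : ℝ) / 3))
  have a4 := Int.lt_floor_add_one (tu * (N : ℝ) ^ ((2 : ℝ) / 3))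
  rw [abs_le]
  constructor <;> linarith

/-- Equation (5.1)/(`LimitK1`): the limit of `N^{1/3} σ_q K¹_N`. -/
theorem stmt11 (q : ℝ) (hq : q ∈ Set.Ioo (0 : ℝ) 1) (tu tv : ℝ)
    (x y : ℝ) (xN yN : ℕ → ℝ)
    (hx : Tendsto xN atTop (𝓝 x)) (hy : Tendsto yN atTop (𝓝 y)) :
    Tendsto (fun N : ℕ =>
        (((N : ℝ) ^ ((1 : ℝ) / 3) * sigmaQ q : ℝ) : ℂ) * K1N q tu tv xN yN N)
      atTop (𝓝 ((1 / (2 * (Real.pi : ℂ))) *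
        ∫ s in (-(sigmaQ q))..(sigmaQ q),
          Complex.exp (((y - x : ℝ) : ℂ) * ((s : ℂ) * Complex.I) -
            ((fQ q : ℂ)) * ((tv - tu : ℝ) : ℂ) * ((s : ℂ) * Complex.I) ^ 2))) := by
  obtain ⟨h0, h1⟩ := hq
  have hq1 : (1 - q) ≠ 0 := by linarith
  have hqC : (1 - (q : ℂ)) ≠ 0 := by exact_mod_cast hq1
  set a : ℝ := q / (1 - q) with ha
  have ha0 : 0 ≤ a := div_nonneg h0.le (by linarith)
  set ε : ℕ → ℝ := fun N => (N : ℝ) ^ (-(1 : ℝ) / 3) with hε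
  set m : ℕ → ℤ := fun N => MMt tv N - MMt tu N with hm
  set d : ℕ → ℝ := fun N => deltaN q tu tv xN yN N - 1 with hd
  have ε0 : Tendsto ε atTop (𝓝 0) := by
    have := (tendsto_rpow_neg_atTop (y := (1 : ℝ) / 3) (by norm_num)).comp
      tendsto_natCast_atTop_atTop
    refine this.congr fun N => ?_
    simp only [hε, Function.comp]
    norm_num
  have εpos : ∀ᶠ N in atTop, 0 < ε N := by
    filter_upwards [eventually_gt_atTop 0] with N hN
    exact Real.rpow_pos_of_pos (by exact_mod_cast hN) _
  have hP1 : ∀ᶠ N : ℕ in atTop, (N : ℝ) ^ ((1 : ℝ) / 3) * ε N = 1 := by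
    filter_upwards [eventually_gt_atTop 0] with N hN
    simp only [hε]
    rw [← Real.rpow_add (by exact_mod_cast hN)]
    norm_num
  have hP2 : ∀ᶠ N : ℕ in atTop, (N : ℝ) ^ ((2 : ℝ) / 3) * ε N ^ 2 = 1 := by
    filter_upwards [eventually_gt_atTop 0] with N hN
    have hN' : (0 : ℝ) < N := by exact_mod_cast hN
    simp only [hε]
    rw [← Real.rpow_natCast, ← Real.rpow_mul hN'.le, ← Real.rpow_add hN']
    norm_num
  set e : ℕ → ℝ := fun N => (m N : ℝ) - (tv - tu) * (N : ℝ) ^ ((2 : ℝ) / 3) with he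
  have he1 : ∀ N, |e N| ≤ 1 := fun N => MM_diff tu tv N
  have heε : Tendsto (fun N => e N * ε N) atTop (𝓝 0) := by
    refine squeeze_zero_norm' ?_ ε0
    filter_upwards [εpos] with N hN
    rw [norm_mul, Real.norm_eq_abs, Real.norm_eq_abs, abs_of_pos hN]
    exact mul_le_of_le_one_left hN.le (he1 N)
  have hyx := hy.sub hx
  have hA : Tendsto (fun n => (-a * m n + d n) * ε n) atTop (𝓝 (sigmaQ q * (y - x))) := by
    have := ((heε.const_mul (-a)).add (hyx.const_mul (sigmaQ q))).sub ε0
    rw [mul_zero, zero_add, sub_zero] at this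
    refine this.congr' ?_
    filter_upwards [hP1] with N h
    simp only [he, hd, deltaN, ← ha]
    linear_combination -(sigmaQ q * (yN N - xN N)) * h
  have hmm : Tendsto (fun n => (m n : ℝ) * ε n ^ 2) atTop (𝓝 (tv - tu)) := by
    have := (heε.mul ε0).const_add (tv - tu)
    rw [mul_zero, add_zero] at this
    refine this.congr' ?_
    filter_upwards [hP2] with N h
    simp only [he]
    linear_combination -(tv - tu) * h
  have hdd : Tendsto (fun n => d n * ε n ^ 2) atTop (𝓝 (a * (tv - tu))) := by
    have := (((hyx.const_mul (sigmaQ q)).mul ε0).sub (ε0.mul ε0)).const_add (a * (tv - tu))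
    rw [mul_zero, mul_zero, sub_zero, add_zero] at this
    refine this.congr' ?_
    filter_upwards [hP1, hP2] with N h h'
    simp only [hd, deltaN, ← ha]
    linear_combination -(sigmaQ q * (yN N - xN N)) * ε N * h - a * (tv - tu) * h'
  have main := core_pt a _ _ _ ha0 m d ε ε0 εpos hA hmm hdd
  have main2 := main.const_mul ((1 / (2 * (Real.pi : ℂ))) * (sigmaQ q : ℂ))
  have elim : (1 / (2 * (Real.pi : ℂ))) * (sigmaQ q : ℂ) *
      (∫ u in (-1 : ℝ)..1, Complex.exp (((sigmaQ q * (y - x) : ℝ) : ℂ) * ((u : ℂ) * Complex.I) -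
        ((((tv - tu) * a ^ 2 + a * (tv - tu)) / 2 : ℝ) : ℂ) * ((u : ℂ) * Complex.I) ^ 2)) =
      (1 / (2 * (Real.pi : ℂ))) *
        ∫ s in (-(sigmaQ q))..(sigmaQ q),
          Complex.exp (((y - x : ℝ) : ℂ) * ((s : ℂ) * Complex.I) -
            ((fQ q : ℂ)) * ((tv - tu : ℝ) : ℂ) * ((s : ℂ) * Complex.I) ^ 2) := by
    have := intervalIntegral.smul_integral_comp_mul_left (a := -1) (b := 1) (fun s : ℝ =>
          Complex.exp (((y - x : ℝ) : ℂ) * ((s : ℂ) * Complex.I) -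
            ((fQ q : ℂ)) * ((tv - tu : ℝ) : ℂ) * ((s : ℂ) * Complex.I) ^ 2)) (sigmaQ q)
    rw [mul_neg_one, mul_one] at this
    rw [← this, Complex.real_smul, mul_assoc]
    congr 2
    apply intervalIntegral.integral_congr
    intro u _
    have hs : ((fQ q * sigmaQ q ^ 2 : ℝ) : ℂ) = (((a ^ 2 + a) / 2 : ℝ) : ℂ) := by
      rw [sigma_f q h0 h1]
    push_cast at hs
    simp only
    congr 1
    push_cast
    linear_combination ((tv - tu : ℂ)) * ((u : ℂ) * Complex.I) ^ 2 * hs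
  rw [elim] at main2
  refine main2.congr' ?_
  filter_upwards [hP1] with N h
  have hsub := intervalIntegral.smul_integral_comp_mul_left (a := -1) (b := 1) (fun t : ℝ =>
      ((1 : ℂ) - (q : ℂ) * (1 + (t : ℂ) * Complex.I)) ^ (MMt tv N - MMt tu N) *
        Complex.exp (((deltaN q tu tv xN yN N : ℂ) - 1) *
          Complex.log (1 + (t : ℂ) * Complex.I))) (ε N)
  rw [mul_neg_one, mul_one] at hsub
  unfold K1N
  change _ = _ * (_ * ∫ t in (-(ε N))..(ε N), _)
  rw [← hsub, Complex.real_smul]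
  have hint : (∫ u in (-1 : ℝ)..1,
      ((1 : ℂ) - (q : ℂ) * (1 + ((ε N * u : ℝ) : ℂ) * Complex.I)) ^ (MMt tv N - MMt tu N) *
        Complex.exp (((deltaN q tu tv xN yN N : ℂ) - 1) *
          Complex.log (1 + ((ε N * u : ℝ) : ℂ) * Complex.I))) =
      (1 - (q : ℂ)) ^ (m N) * ∫ u in (-1 : ℝ)..1,
        ((1 : ℂ) - (a : ℂ) * (((ε N * u : ℝ) : ℂ) * Complex.I)) ^ (m N) *
          Complex.exp ((d N : ℂ) * Complex.log (1 + ((ε N * u : ℝ) : ℂ) * Complex.I)) := by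
    rw [← intervalIntegral.integral_const_mul]
    apply intervalIntegral.integral_congr
    intro u _
    simp only
    rw [← mul_assoc, ← mul_zpow]
    congr 2
    · rw [ha]
      push_cast
      field_simp
      ring
    · simp [hd]
  rw [hint]
  have hz : (1 - (q : ℂ)) ^ (MMt tu N - MMt tv N) * (1 - (q : ℂ)) ^ (m N) = 1 := by
    rw [← zpow_add₀ hqC]
    simp [hm]
  have hC : (((N : ℝ) ^ ((1 : ℝ) / 3) : ℝ) : ℂ) * (ε N : ℂ) = 1 := by exact_mod_cast h
  rw [Complex.ofReal_mul]
  generalize (∫ u in (-1 : ℝ)..1,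
        ((1 : ℂ) - (a : ℂ) * (((ε N * u : ℝ) : ℂ) * Complex.I)) ^ (m N) *
          Complex.exp ((d N : ℂ) * Complex.log (1 + ((ε N * u : ℝ) : ℂ) * Complex.I))) = J
  generalize (1 - (q : ℂ)) ^ (MMt tu N - MMt tv N) = Z1 at *
  generalize (1 - (q : ℂ)) ^ (m N) = Z2 at *
  generalize (((N : ℝ) ^ ((1 : ℝ) / 3) : ℝ) : ℂ) = T at *
  linear_combination (-(1 / (2 * (Real.pi : ℂ)) * sigmaQ q * J)) * (Z1 * Z2 * hC + hz)
end
end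

section
/- With the notation of the context, assume t_u > t_v and define for each N ∈ ℕ the quantity K²_N = −(1−q)^{M_u(N)−M_v(N)} · (2π)^{−1} ∫_{−π}^{π} (1−qe^{iθ})^{M_v(N)−M_u(N)} · exp(iθ·δ_N) dθ (this equals the positively oriented unit-circle integral −(1−q)^{M_u(N)−M_v(N)}(2πi)^{−1}∮_{|w|=1}(1−qw)^{M_v(N)−M_u(N)} w^{δ_N−1} dw with the principal branch of w^{δ_N−1}; here M_v(N)−M_u(N) is an integer power and 1−qe^{iθ} ≠ 0). Then lim_{N→∞} N^{1/3} σ_q K²_N = −(4π f_q (t_u−t_v))^{−1/2} · exp(−(ỹ−x̃)²/(4 f_q (t_u−t_v))). -/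
open Filter Topology Complex MeasureTheory intervalIntegral

noncomputable section

/-- The quantity `K²_N`, written via the parametrization `w = e^{iθ}`,
`θ ∈ [-π, π]`, of the positively oriented unit circle. -/
def K2N (q tu tv : ℝ) (xN yN : ℕ → ℝ) (N : ℕ) : ℂ :=
  -(((1 : ℂ) - (q : ℂ)) ^ (MMt tu N - MMt tv N) * (1 / (2 * (Real.pi : ℂ))) *
    ∫ θ in (-Real.pi)..Real.pi,
      ((1 : ℂ) - (q : ℂ) * Complex.exp ((θ : ℂ) * Complex.I)) ^ (MMt tv N - MMt tu N) *
        Complex.exp (Complex.I * (θ : ℂ) * (deltaN q tu tv xN yN N : ℂ)))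


def hfun (q θ : ℝ) : ℂ :=
  Complex.log ((1 - q : ℝ) : ℂ) - Complex.log (1 - (q : ℂ) * Complex.exp ((θ : ℂ) * Complex.I))
    - (θ : ℂ) * Complex.I * ((q / (1 - q) : ℝ) : ℂ)

lemma den_re (q θ : ℝ) :
    ((1 : ℂ) - (q : ℂ) * Complex.exp ((θ : ℂ) * Complex.I)).re = 1 - q * Real.cos θ := by
  simp [Complex.exp_ofReal_mul_I_re]

lemma den_im (q θ : ℝ) :
    ((1 : ℂ) - (q : ℂ) * Complex.exp ((θ : ℂ) * Complex.I)).im = - (q * Real.sin θ) := by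
  simp [Complex.exp_ofReal_mul_I_im]

lemma den_re_pos {q : ℝ} (h0 : 0 < q) (h1 : q < 1) (θ : ℝ) :
    0 < ((1 : ℂ) - (q : ℂ) * Complex.exp ((θ : ℂ) * Complex.I)).re := by
  rw [den_re]; nlinarith [Real.cos_le_one θ]

lemma den_ne {q : ℝ} (h0 : 0 < q) (h1 : q < 1) (θ : ℝ) :
    ((1 : ℂ) - (q : ℂ) * Complex.exp ((θ : ℂ) * Complex.I)) ≠ 0 := by
  intro h
  have := den_re_pos h0 h1 θ
  rw [h] at this; simp at this

lemma hfun_re_le {q : ℝ} (h0 : 0 < q) (h1 : q < 1) {θ : ℝ} (hθ : |θ| ≤ Real.pi) :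
    (hfun q θ).re ≤ - (q / (2 * Real.pi ^ 2)) * θ ^ 2 := by
  set z := ((1 : ℂ) - (q : ℂ) * Complex.exp ((θ : ℂ) * Complex.I)) with hz
  have hzne : z ≠ 0 := den_ne h0 h1 θ
  have hX : ‖z‖ ^ 2 = 1 - 2 * q * Real.cos θ + q ^ 2 := by
    rw [← Complex.normSq_eq_norm_sq, Complex.normSq_apply, hz, den_re, den_im]
    nlinarith [Real.sin_sq_add_cos_sq θ]
  have hXpos : 0 < ‖z‖ ^ 2 := by positivity
  have hre : (hfun q θ).re = Real.log (1 - q) - Real.log ‖z‖ := by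
    have e1 : (Complex.log ((1 - q : ℝ) : ℂ)).re = Real.log (1 - q) := by
      rw [Complex.log_re, Complex.norm_real, Real.norm_of_nonneg (by linarith)]
    have e2 : ((θ : ℂ) * Complex.I * ((q / (1 - q) : ℝ) : ℂ)).re = 0 := by
      rw [Complex.mul_re]
      simp only [Complex.re_ofReal_mul, Complex.I_re, Complex.ofReal_im]; simp
    unfold hfun
    rw [Complex.sub_re, Complex.sub_re, e1, e2, Complex.log_re]; simp [hz]
  have hlog : Real.log ((1 - q) ^ 2 / ‖z‖ ^ 2) = 2 * (Real.log (1 - q) - Real.log ‖z‖) := by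
    rw [Real.log_div (by nlinarith) hXpos.ne', Real.log_pow, Real.log_pow]; push_cast; ring
  have hle := Real.log_le_sub_one_of_pos (x := (1 - q) ^ 2 / ‖z‖ ^ 2)
    (div_pos (by nlinarith) hXpos)
  have hc : Real.cos θ ≤ 1 - 2 / Real.pi ^ 2 * θ ^ 2 := Real.cos_le_one_sub_mul_cos_sq hθ
  have hX4 : ‖z‖ ^ 2 ≤ 4 := by rw [hX]; nlinarith [Real.neg_one_le_cos θ]
  have hkey : (1 - q) ^ 2 / ‖z‖ ^ 2 - 1 ≤ - (q / Real.pi ^ 2) * θ ^ 2 := by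
    have hk : 0 ≤ q / Real.pi ^ 2 * θ ^ 2 := by positivity
    rw [sub_le_iff_le_add, div_le_iff₀ hXpos]
    have h3 : 4 * (q / Real.pi ^ 2 * θ ^ 2) ≤ ‖z‖ ^ 2 - (1 - q) ^ 2 := by
      have : q / Real.pi ^ 2 * θ ^ 2 = q * (2 / Real.pi ^ 2 * θ ^ 2) / 2 := by ring
      rw [this, hX]; nlinarith
    nlinarith
  rw [hre]
  have : - (q / (2 * Real.pi ^ 2)) * θ ^ 2 = (- (q / Real.pi ^ 2) * θ ^ 2) / 2 := by ring
  rw [this]; linarith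

lemma hfun_deriv {q : ℝ} (h0 : 0 < q) (h1 : q < 1) (θ : ℝ) :
    HasDerivAt (hfun q) ((q : ℂ) * (Complex.exp ((θ : ℂ) * Complex.I) * Complex.I) /
      (1 - (q : ℂ) * Complex.exp ((θ : ℂ) * Complex.I)) -
      Complex.I * ((q / (1 - q) : ℝ) : ℂ)) θ := by
  have ha : HasDerivAt (fun t : ℝ => (t : ℂ) * Complex.I) Complex.I θ := by
    simpa using (Complex.ofRealCLM.hasDerivAt (x := θ)).mul_const Complex.I
  have hb := (((ha.cexp).const_mul (q : ℂ)).const_sub 1).clog_real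
    (Or.inl (den_re_pos h0 h1 θ))
  have hc := (hb.const_sub (Complex.log ((1 - q : ℝ) : ℂ))).sub
    (ha.mul_const ((q / (1 - q) : ℝ) : ℂ))
  refine hc.congr_deriv ?_
  ring

lemma hfun_zero (q : ℝ) : hfun q 0 = 0 := by
  simp [hfun]

/-- second derivative at zero -/
lemma hfun_deriv2 {q : ℝ} (h0 : 0 < q) (h1 : q < 1) :
    HasDerivAt (fun θ : ℝ => (q : ℂ) * (Complex.exp ((θ : ℂ) * Complex.I) * Complex.I) /
      (1 - (q : ℂ) * Complex.exp ((θ : ℂ) * Complex.I)) -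
      Complex.I * ((q / (1 - q) : ℝ) : ℂ)) (-((q / (1 - q) ^ 2 : ℝ) : ℂ)) 0 := by
  have ha : HasDerivAt (fun t : ℝ => (t : ℂ) * Complex.I) Complex.I 0 := by
    simpa using (Complex.ofRealCLM.hasDerivAt (x := 0)).mul_const Complex.I
  have hb := ((ha.cexp).const_mul (q : ℂ)).const_sub 1
  have hn := ((ha.cexp).mul_const Complex.I).const_mul (q : ℂ)
  have hc := (hn.div hb (den_ne h0 h1 0)).sub_const (Complex.I * ((q / (1 - q) : ℝ) : ℂ))
  refine hc.congr_deriv ?_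
  have : (1 : ℂ) - q ≠ 0 := by
    have : ((1 - q : ℝ) : ℂ) ≠ 0 := by exact_mod_cast (by linarith : (1 - q) ≠ 0)
    simpa using this
  simp only [Complex.ofReal_zero, zero_mul, Complex.exp_zero]
  push_cast
  field_simp
  ring_nf
  simp only [Complex.I_sq]
  ring

lemma hfun_taylor {q : ℝ} (h0 : 0 < q) (h1 : q < 1) {ε : ℝ} (hε : 0 < ε) :
    ∃ r > 0, ∀ θ : ℝ, |θ| < r →
      ‖hfun q θ + ((q / (2 * (1 - q) ^ 2) : ℝ) : ℂ) * (θ : ℂ) ^ 2‖ ≤ ε * |θ| ^ 2 := by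
  have h2 := (hfun_deriv2 h0 h1).isLittleO
  have h3 := h2.def hε
  rw [Metric.eventually_nhds_iff] at h3
  obtain ⟨r, hr, h3⟩ := h3
  refine ⟨r, hr, fun θ hθ => ?_⟩
  have hsq : ∀ t : ℝ, HasDerivAt (fun t : ℝ => ((q / (2 * (1 - q) ^ 2) : ℝ) : ℂ) * (t : ℂ) ^ 2)
      (((q / (1 - q) ^ 2 : ℝ) : ℂ) * (t : ℂ)) t := by
    intro t
    have := ((Complex.ofRealCLM.hasDerivAt (x := t)).pow 2).const_mul
      ((q / (2 * (1 - q) ^ 2) : ℝ) : ℂ)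
    refine this.congr_deriv ?_
    have : q / (1 - q) ^ 2 = 2 * (q / (2 * (1 - q) ^ 2)) := by
      have : (1 - q) ≠ 0 := by linarith
      field_simp
    rw [this]; simp; ring
  have hmv := (convex_Icc (-|θ|) |θ|).norm_image_sub_le_of_norm_hasDerivWithin_le
    (f := fun t : ℝ => hfun q t + ((q / (2 * (1 - q) ^ 2) : ℝ) : ℂ) * (t : ℂ) ^ 2)
    (C := ε * |θ|) (x := 0) (y := θ)
    (fun t _ => ((hfun_deriv h0 h1 t).add (hsq t)).hasDerivWithinAt)
    (by
      intro t ht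
      have ht' : |t| ≤ |θ| := abs_le.2 ht
      have := h3 (y := t) (by simpa using lt_of_le_of_lt ht' hθ)
      have h1q : (1 : ℂ) - q ≠ 0 := by
        have : ((1 - q : ℝ) : ℂ) ≠ 0 := by exact_mod_cast (by linarith : (1 - q) ≠ 0)
        simpa using this
      have hz : (q : ℂ) * (Complex.exp (((0:ℝ) : ℂ) * Complex.I) * Complex.I) /
        (1 - (q : ℂ) * Complex.exp (((0:ℝ) : ℂ) * Complex.I)) -
        Complex.I * ((q / (1 - q) : ℝ) : ℂ) = 0 := by
        simp; field_simp; ring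
      rw [hz] at this
      simp only [sub_zero, Complex.real_smul, Real.norm_eq_abs] at this
      refine le_trans (le_of_eq ?_) (this.trans (by gcongr))
      congr 1; ring)
    (by simp) (by simp [neg_abs_le, le_abs_self])
  simp only [hfun_zero, Complex.ofReal_zero, sub_zero, Real.norm_eq_abs] at hmv
  simp at hmv
  simp
  calc _ ≤ _ := hmv
    _ = _ := by rw [← sq_abs]; ring

lemma hfun_scaled {q : ℝ} (h0 : 0 < q) (h1 : q < 1) (a : ℕ → ℝ) (ha : Tendsto a atTop atTop)
    (n : ℕ → ℤ) (τ : ℝ) (hn : Tendsto (fun N => (n N : ℝ) / a N ^ 2) atTop (𝓝 τ)) (s : ℝ) :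
    Tendsto (fun N => (n N : ℂ) * hfun q (s / a N)) atTop
      (𝓝 (-((τ * (q / (2 * (1 - q) ^ 2)) : ℝ) : ℂ) * (s : ℂ) ^ 2)) := by
  have hda : Tendsto (fun N => s / a N) atTop (𝓝 0) := ha.const_div_atTop s
  have hpos : ∀ᶠ N in atTop, 0 < a N := ha.eventually_gt_atTop 0
  -- a² (h + c θ²) → 0
  have hlim : Tendsto (fun N => ((a N : ℂ)) ^ 2 * (hfun q (s / a N) +
      ((q / (2 * (1 - q) ^ 2) : ℝ) : ℂ) * ((s / a N : ℝ) : ℂ) ^ 2)) atTop (𝓝 0) := by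
    rw [Metric.tendsto_nhds]
    intro e he
    obtain ⟨r, hr, H⟩ := hfun_taylor h0 h1 (ε := e / (s ^ 2 + 1)) (by positivity)
    have hev : ∀ᶠ N in atTop, |s / a N| < r := by
      have := (Metric.tendsto_nhds.1 hda) r hr
      simpa [Real.dist_eq, abs_div] using this
    filter_upwards [hev, hpos] with N h1 h2
    have h3 := H _ h1
    rw [dist_zero_right, norm_mul, norm_pow, Complex.norm_real, Real.norm_eq_abs, abs_of_pos h2]
    calc _ ≤ a N ^ 2 * (e / (s ^ 2 + 1) * |s / a N| ^ 2) := by gcongr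
      _ = e * (s ^ 2 / (s ^ 2 + 1)) := by rw [sq_abs]; field_simp
      _ < e * 1 := by
        gcongr
        rw [div_lt_one (by positivity)]; linarith
      _ = e := mul_one e
  have hn' : Tendsto (fun N => (((n N : ℝ) / a N ^ 2 : ℝ) : ℂ)) atTop (𝓝 (τ : ℂ)) :=
    (Complex.continuous_ofReal.tendsto τ).comp hn
  have := (hn'.mul hlim).sub (hn'.mul_const (((q / (2 * (1 - q) ^ 2) : ℝ) : ℂ) * (s : ℂ) ^ 2))
  have e : (τ : ℂ) * 0 - (τ : ℂ) * (((q / (2 * (1 - q) ^ 2) : ℝ) : ℂ) * (s : ℂ) ^ 2) =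
      (-((τ * (q / (2 * (1 - q) ^ 2)) : ℝ) : ℂ) * (s : ℂ) ^ 2) := by
    rw [Complex.ofReal_mul]; ring
  rw [e] at this
  refine this.congr' ?_
  filter_upwards [hpos] with N h2
  have : (a N : ℂ) ≠ 0 := by exact_mod_cast h2.ne'
  rw [Complex.ofReal_div (n N : ℝ), Complex.ofReal_div s]
  push_cast
  field_simp
  ring

def Gfun (q : ℝ) (n : ℤ) (c θ : ℝ) : ℂ :=
  Complex.exp ((n : ℂ) * hfun q θ + Complex.I * (θ : ℂ) * (c : ℂ))

lemma G_eq {q : ℝ} (h0 : 0 < q) (h1 : q < 1) (n : ℤ) (d θ : ℝ) :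
    ((1 : ℂ) - (q : ℂ)) ^ n *
      (((1 : ℂ) - (q : ℂ) * Complex.exp ((θ : ℂ) * Complex.I)) ^ (-n) *
        Complex.exp (Complex.I * (θ : ℂ) * (d : ℂ))) = Gfun q n (d + n * (q / (1 - q))) θ := by
  have h1q : (1 : ℂ) - q ≠ 0 := by
    have : ((1 - q : ℝ) : ℂ) ≠ 0 := by exact_mod_cast (by linarith : (1 - q) ≠ 0)
    simpa using this
  have e1 : ((1 : ℂ) - (q : ℂ)) ^ n = Complex.exp (n * Complex.log (1 - q)) := by
    rw [Complex.exp_int_mul, Complex.exp_log h1q]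
  have e2 : ((1 : ℂ) - (q : ℂ) * Complex.exp ((θ : ℂ) * Complex.I)) ^ (-n) =
      Complex.exp ((-n : ℤ) *
        Complex.log ((1 : ℂ) - (q : ℂ) * Complex.exp ((θ : ℂ) * Complex.I))) := by
    rw [Complex.exp_int_mul, Complex.exp_log (den_ne h0 h1 θ)]
  rw [e1, e2, ← Complex.exp_add, ← Complex.exp_add, Gfun, hfun]
  congr 1
  push_cast
  ring

lemma G_norm (q : ℝ) (n : ℤ) (c θ : ℝ) :
    ‖Gfun q n c θ‖ = Real.exp (n * (hfun q θ).re) := by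
  rw [Gfun, Complex.norm_exp]
  congr 1
  rw [Complex.add_re, ← Complex.ofReal_intCast, Complex.re_ofReal_mul]
  simp

lemma G_cont {q : ℝ} (h0 : 0 < q) (h1 : q < 1) (n : ℤ) (c : ℝ) : Continuous (Gfun q n c) := by
  have : Continuous (hfun q) :=
    continuous_iff_continuousAt.2 fun θ => (hfun_deriv h0 h1 θ).continuousAt
  unfold Gfun
  fun_prop

lemma main_lim {q : ℝ} (h0 : 0 < q) (h1 : q < 1) (a : ℕ → ℝ) (ha : Tendsto a atTop atTop)
    (n : ℕ → ℤ) (τ : ℝ) (hτ : 0 < τ)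
    (hn : ∀ N, |(n N : ℝ) - τ * a N ^ 2| ≤ 1) (w : ℕ → ℝ) (w0 : ℝ)
    (hw : Tendsto w atTop (𝓝 w0)) :
    Tendsto (fun N => (a N : ℂ) * ∫ θ in (-Real.pi)..Real.pi,
      Gfun q (n N) (-(q / (1 - q)) * τ * a N ^ 2 + w N * a N + n N * (q / (1 - q))) θ) atTop
      (𝓝 (∫ s : ℝ, Complex.exp (Complex.I * w0 * s) *
        Complex.exp (-((τ * (q / (2 * (1 - q) ^ 2)) : ℝ) : ℂ) * s ^ 2))) := by
  have hpos : ∀ᶠ N in atTop, 0 < a N := ha.eventually_gt_atTop 0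
  have hinv : Tendsto (fun N => (a N)⁻¹) atTop (𝓝 0) := ha.inv_tendsto_atTop
  have hn1 : Tendsto (fun N => ((n N : ℝ) - τ * a N ^ 2) * (a N)⁻¹) atTop (𝓝 0) := by
    refine squeeze_zero_norm' (a := fun N => |(a N)⁻¹|) ?_ (by simpa using hinv.abs)
    refine Eventually.of_forall fun N => ?_
    rw [norm_mul, Real.norm_eq_abs, Real.norm_eq_abs]
    exact mul_le_of_le_one_left (abs_nonneg _) (hn N)
  have hn2 : Tendsto (fun N => (n N : ℝ) / a N ^ 2) atTop (𝓝 τ) := by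
    have := (hn1.mul hinv).add_const τ
    simp only [mul_zero, zero_add] at this
    refine this.congr' ?_
    filter_upwards [hpos] with N h
    field_simp
    ring
  set c : ℕ → ℝ := fun N => -(q / (1 - q)) * τ * a N ^ 2 + w N * a N + n N * (q / (1 - q)) with hc
  have hca : Tendsto (fun N => c N / a N) atTop (𝓝 w0) := by
    have := (hn1.const_mul (q / (1 - q))).add hw
    rw [mul_zero, zero_add] at this
    refine this.congr' ?_
    filter_upwards [hpos] with N h
    simp only [hc]
    field_simp
    ring
  have hresc : ∀ᶠ N in atTop, ∫ s : ℝ, (Set.Ioc (-(Real.pi * a N)) (Real.pi * a N)).indicator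
        (fun s => Gfun q (n N) (c N) (s / a N)) s =
      (a N : ℂ) * ∫ θ in (-Real.pi)..Real.pi, Gfun q (n N) (c N) θ := by
    filter_upwards [hpos] with N h
    rw [MeasureTheory.integral_indicator measurableSet_Ioc,
      ← intervalIntegral.integral_of_le (by nlinarith [Real.pi_pos]),
      intervalIntegral.integral_comp_div _ h.ne', Complex.real_smul]
    congr 2
    · field_simp
    · field_simp
  refine Tendsto.congr' hresc ?_
  have hk : 0 < q / (2 * Real.pi ^ 2) * (τ / 2) := by positivity
  refine MeasureTheory.tendsto_integral_filter_of_dominated_convergence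
    (fun s => Real.exp (-(q / (2 * Real.pi ^ 2) * (τ / 2)) * s ^ 2)) ?_ ?_
    (integrable_exp_neg_mul_sq hk) ?_
  · refine Eventually.of_forall fun N => ?_
    have : Continuous (fun s => Gfun q (n N) (c N) (s / a N)) :=
      (G_cont h0 h1 _ _).comp (continuous_id.div_const _)
    exact this.aestronglyMeasurable.indicator measurableSet_Ioc
  · have hge : ∀ᶠ N in atTop, τ / 2 < (n N : ℝ) / a N ^ 2 :=
      hn2.eventually_const_lt (by linarith)
    filter_upwards [hpos, hge] with N h h2
    refine Eventually.of_forall fun s => ?_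
    by_cases hs : s ∈ Set.Ioc (-(Real.pi * a N)) (Real.pi * a N)
    · rw [Set.indicator_of_mem hs, G_norm, Real.exp_le_exp]
      have hθ : |s / a N| ≤ Real.pi := by
        rw [abs_div, abs_of_pos h, div_le_iff₀ h, abs_le]
        exact ⟨hs.1.le, hs.2⟩
      have h3 := hfun_re_le h0 h1 hθ
      have hn0 : 0 < (n N : ℝ) := by
        have : 0 < (n N : ℝ) / a N ^ 2 := by linarith
        exact (div_pos_iff_of_pos_right (by positivity)).1 this
      calc (n N : ℝ) * (hfun q (s / a N)).re
          ≤ n N * (-(q / (2 * Real.pi ^ 2)) * (s / a N) ^ 2) := by gcongr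
        _ = -(q / (2 * Real.pi ^ 2) * ((n N : ℝ) / a N ^ 2) * s ^ 2) := by field_simp
        _ ≤ -(q / (2 * Real.pi ^ 2) * (τ / 2) * s ^ 2) := by gcongr
        _ = _ := by ring
    · rw [Set.indicator_of_notMem hs]; simp; positivity
  · refine Eventually.of_forall fun s => ?_
    have hmem : ∀ᶠ N in atTop, Gfun q (n N) (c N) (s / a N) =
        (Set.Ioc (-(Real.pi * a N)) (Real.pi * a N)).indicator
        (fun s => Gfun q (n N) (c N) (s / a N)) s := by
      filter_upwards [ha.eventually_gt_atTop |s|] with N h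
      rw [Set.indicator_of_mem]
      have : |s| < Real.pi * a N := by nlinarith [Real.pi_gt_three, abs_nonneg s]
      exact ⟨(abs_lt.1 this).1, (abs_lt.1 this).2.le⟩
    refine Tendsto.congr' hmem ?_
    rw [← Complex.exp_add, add_comm]
    unfold Gfun
    refine (Complex.continuous_exp.tendsto _).comp ?_
    refine (hfun_scaled h0 h1 a ha n τ hn2 s).add ?_
    have h5 : Tendsto (fun N => ((c N / a N : ℝ) : ℂ)) atTop (𝓝 (w0 : ℂ)) :=
      (Complex.continuous_ofReal.tendsto w0).comp hca
    have := (h5.const_mul Complex.I).mul_const (s : ℂ)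
    refine this.congr fun N => ?_
    push_cast
    ring

lemma const_eq {q : ℝ} (h0 : 0 < q) (h1 : q < 1) :
    sigmaQ q ^ 2 * ((1 - q) ^ 2 / q) = 1 / (2 * fQ q) ∧ 0 < sigmaQ q ∧ 0 < fQ q := by
  have hp : 0 < 1 + q := by linarith
  have hm : 0 < 1 - q := by linarith
  have e1 : (q ^ ((1 : ℝ) / 3)) ^ 3 = q := by
    rw [← Real.rpow_natCast, ← Real.rpow_mul h0.le]; norm_num
  have e2 : (1 + q) ^ ((2 : ℝ) / 3) = ((1 + q) ^ ((1 : ℝ) / 3)) ^ 2 := by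
    rw [← Real.rpow_natCast, ← Real.rpow_mul hp.le]; norm_num
  have p1 : 0 < q ^ ((1 : ℝ) / 3) := by positivity
  have p2 : 0 < (1 + q) ^ ((1 : ℝ) / 3) := by positivity
  refine ⟨?_, by unfold sigmaQ; positivity, by unfold fQ; positivity⟩
  unfold sigmaQ fQ
  rw [e2]
  set A := q ^ ((1 : ℝ) / 3)
  set B := (1 + q) ^ ((1 : ℝ) / 3)
  rw [div_pow]
  field_simp
  linarith

/-- Equation (5.2)/(`LimitK2`): the limit of `N^{1/3} σ_q K²_N` when `t_u > t_v`. -/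
theorem stmt12 (q : ℝ) (hq : q ∈ Set.Ioo (0 : ℝ) 1) (tu tv : ℝ) (htuv : tv < tu)
    (x y : ℝ) (xN yN : ℕ → ℝ)
    (hx : Tendsto xN atTop (𝓝 x)) (hy : Tendsto yN atTop (𝓝 y)) :
    Tendsto (fun N : ℕ =>
        (((N : ℝ) ^ ((1 : ℝ) / 3) * sigmaQ q : ℝ) : ℂ) * K2N q tu tv xN yN N)
      atTop (𝓝 (-((((Real.sqrt (4 * Real.pi * fQ q * (tu - tv)))⁻¹ : ℝ) : ℂ) *
        Complex.exp (((-(y - x) ^ 2 / (4 * fQ q * (tu - tv)) : ℝ) : ℂ))))) := by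
  obtain ⟨h0, h1⟩ := hq
  obtain ⟨hc, hσ, hf⟩ := const_eq h0 h1
  have hτ : 0 < tu - tv := by linarith
  have hm : 0 < 1 - q := by linarith
  have ha : Tendsto (fun N : ℕ => (N : ℝ) ^ ((1 : ℝ) / 3)) atTop atTop :=
    (tendsto_rpow_atTop (by norm_num)).comp tendsto_natCast_atTop_atTop
  have hsq : ∀ N : ℕ, (N : ℝ) ^ ((2 : ℝ) / 3) = ((N : ℝ) ^ ((1 : ℝ) / 3)) ^ 2 := by
    intro N
    rw [← Real.rpow_natCast, ← Real.rpow_mul (Nat.cast_nonneg N)]; norm_num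
  have hn : ∀ N : ℕ, |((MMt tu N - MMt tv N : ℤ) : ℝ) -
      (tu - tv) * ((N : ℝ) ^ ((1 : ℝ) / 3)) ^ 2| ≤ 1 := by
    intro N
    rw [← hsq]
    unfold MMt
    push_cast
    set X := (N : ℝ) ^ ((2 : ℝ) / 3)
    have := Int.floor_le (tu * X)
    have := Int.lt_floor_add_one (tu * X)
    have := Int.floor_le (tv * X)
    have := Int.lt_floor_add_one (tv * X)
    rw [abs_le]
    constructor <;> linarith
  have hw : Tendsto (fun N => sigmaQ q * (yN N - xN N)) atTop (𝓝 (sigmaQ q * (y - x))) :=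
    (hy.sub hx).const_mul _
  have hmain := main_lim h0 h1 _ ha (fun N => MMt tu N - MMt tv N) (tu - tv) hτ hn _ _ hw
  set b : ℝ := (tu - tv) * (q / (2 * (1 - q) ^ 2)) with hb
  have hbpos : 0 < b := by positivity
  rw [fourierIntegral_gaussian (by simpa using hbpos)] at hmain
  have hfin := hmain.const_mul (-((sigmaQ q / (2 * Real.pi) : ℝ) : ℂ))
  have hσ2 : sigmaQ q ^ 2 = 1 / (2 * fQ q) * (q / (1 - q) ^ 2) := by
    rw [← hc]; field_simp
  have hlimeq : (-((sigmaQ q / (2 * Real.pi) : ℝ) : ℂ)) * (((Real.pi : ℂ) / (b : ℂ)) ^ (1 / 2 : ℂ) *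
      Complex.exp (-((sigmaQ q * (y - x) : ℝ) : ℂ) ^ 2 / (4 * (b : ℂ)))) =
      (-((((Real.sqrt (4 * Real.pi * fQ q * (tu - tv)))⁻¹ : ℝ) : ℂ) *
        Complex.exp (((-(y - x) ^ 2 / (4 * fQ q * (tu - tv)) : ℝ) : ℂ)))) := by
    have e1 : ((Real.pi : ℂ) / (b : ℂ)) ^ (1 / 2 : ℂ) = ((Real.sqrt (Real.pi / b) : ℝ) : ℂ) := by
      rw [Real.sqrt_eq_rpow, Complex.ofReal_cpow (by positivity)]
      push_cast; rfl
    have e2 : -((sigmaQ q * (y - x) : ℝ) : ℂ) ^ 2 / (4 * (b : ℂ)) =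
        ((-(y - x) ^ 2 / (4 * fQ q * (tu - tv)) : ℝ) : ℂ) := by
      have : -(y - x) ^ 2 / (4 * fQ q * (tu - tv)) = -(sigmaQ q * (y - x)) ^ 2 / (4 * b) := by
        rw [mul_pow, hσ2, hb]; field_simp
      rw [this]; push_cast; ring
    have e3 : sigmaQ q / (2 * Real.pi) * Real.sqrt (Real.pi / b) =
        (Real.sqrt (4 * Real.pi * fQ q * (tu - tv)))⁻¹ := by
      rw [← Real.sqrt_inv]
      symm
      rw [Real.sqrt_eq_iff_mul_self_eq (by positivity) (by positivity)]
      have : sigmaQ q / (2 * Real.pi) * √(Real.pi / b) * (sigmaQ q / (2 * Real.pi) * √(Real.pi / b))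
        = sigmaQ q ^ 2 / (4 * Real.pi ^ 2) * (√(Real.pi / b)) ^ 2 := by ring
      rw [this, Real.sq_sqrt (by positivity), hσ2, hb]
      field_simp
      try norm_num
    rw [e1, e2, ← e3]; push_cast; ring
  rw [hlimeq] at hfin
  refine hfin.congr fun N => ?_
  unfold K2N
  have hKint : ((1 : ℂ) - (q : ℂ)) ^ (MMt tu N - MMt tv N) *
      (∫ θ in (-Real.pi)..Real.pi,
      ((1 : ℂ) - (q : ℂ) * Complex.exp ((θ : ℂ) * Complex.I)) ^ (MMt tv N - MMt tu N) *
        Complex.exp (Complex.I * (θ : ℂ) * (deltaN q tu tv xN yN N : ℂ))) =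
      ∫ θ in (-Real.pi)..Real.pi, Gfun q (MMt tu N - MMt tv N)
        (-(q / (1 - q)) * (tu - tv) * ((N : ℝ) ^ ((1 : ℝ) / 3)) ^ 2 +
          sigmaQ q * (yN N - xN N) * (N : ℝ) ^ ((1 : ℝ) / 3) +
          ((MMt tu N - MMt tv N : ℤ) : ℝ) * (q / (1 - q))) θ := by
    rw [← intervalIntegral.integral_const_mul]
    refine intervalIntegral.integral_congr fun θ _ => ?_
    have := G_eq h0 h1 (MMt tu N - MMt tv N) (deltaN q tu tv xN yN N) θ
    rw [neg_sub] at this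
    refine this.trans ?_
    congr 2
    unfold deltaN
    rw [hsq]; ring
  rw [← hKint]
  push_cast
  ring
end
end

section
/- Fix q ∈ (0,1) and define G(z) = Log(1 − qe^z) − Log(1 − q) + qz/(1−q), where Log is the principal branch of the complex logarithm. Then: (a) there exist δ ∈ (0,1) and C > 0 such that for all z ∈ ℂ with |z| ≤ δ one has q·e^{Re z} < 1 (so that Re(1 − qe^z) > 0 and G(z) is well-defined) and |G(z) + q z²/(2(1−q)²)| ≤ C|z|³; (b) there exists ε > 0 such that for all x ∈ [−π, π], Re G(ix) ≥ ε x², where Re G(ix) = (1/2)·log(1 + q² − 2q·cos x) − log(1−q). -/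
open Filter Complex

noncomputable def Gq (q : ℝ) (z : ℂ) : ℂ :=
  Complex.log (1 - (q : ℂ) * Complex.exp z) - Complex.log (1 - (q : ℂ)) +
    (q : ℂ) * z / (1 - (q : ℂ))

/-- Lemma 5.1 (`PropertiesOfG`). -/
theorem stmt13 (q : ℝ) (hq : q ∈ Set.Ioo (0 : ℝ) 1) :
    (∃ δ ∈ Set.Ioo (0 : ℝ) 1, ∃ C : ℝ, 0 < C ∧ ∀ z : ℂ, ‖z‖ ≤ δ →
      q * Real.exp z.re < 1 ∧
      ‖Gq q z + (q : ℂ) * z ^ 2 / (2 * (1 - (q : ℂ)) ^ 2)‖ ≤ C * ‖z‖ ^ 3) ∧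
    (∃ ε : ℝ, 0 < ε ∧ ∀ x : ℝ, x ∈ Set.Icc (-Real.pi) Real.pi →
      (Gq q (Complex.I * (x : ℂ))).re =
        (1 / 2) * Real.log (1 + q ^ 2 - 2 * q * Real.cos x) - Real.log (1 - q) ∧
      ε * x ^ 2 ≤ (Gq q (Complex.I * (x : ℂ))).re) := by
  obtain ⟨h0, h1⟩ := hq
  have h1q : 0 < 1 - q := by linarith
  have hqc : (1 - (q : ℂ)) ≠ 0 := by
    have : ((1 - q : ℝ) : ℂ) ≠ 0 := by exact_mod_cast h1q.ne'
    simpa using this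
  constructor
  · obtain ⟨a, ha⟩ : ∃ a : ℝ, a = q / (1 - q) := ⟨_, rfl⟩
    have ha0 : 0 < a := by rw [ha]; positivity
    have haq : a * (1 - q) = q := by rw [ha]; field_simp
    have hac : (a : ℂ) = (q : ℂ) / (1 - (q : ℂ)) := by rw [ha]; push_cast; rfl
    refine ⟨1 / (2 + 4 * a), ⟨by positivity, ?_⟩, 8 * a ^ 3 + a + 3 / 2 * a ^ 2, by positivity, ?_⟩
    · rw [div_lt_one (by positivity)]; linarith
    intro z hz
    have hz' : ‖z‖ * (2 + 4 * a) ≤ 1 := by rwa [le_div_iff₀ (by positivity)] at hz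
    have hn := norm_nonneg z
    have haz : 0 ≤ a * ‖z‖ := by positivity
    have hz1 : ‖z‖ ≤ 1 := by nlinarith
    obtain ⟨u, hu⟩ : ∃ u : ℂ, u = Complex.exp z - 1 := ⟨_, rfl⟩
    have hu1 : ‖u‖ ≤ 2 * ‖z‖ := by rw [hu]; exact Complex.norm_exp_sub_one_le hz1
    have hu2 : ‖u - z‖ ≤ ‖z‖ ^ 2 := by
      rw [hu]; exact Complex.norm_exp_sub_one_sub_id_le hz1
    have hu3 : ‖u - z - z ^ 2 / 2‖ ≤ ‖z‖ ^ 3 := by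
      have := Complex.exp_bound hz1 (n := 3) (by norm_num)
      simp only [Finset.sum_range_succ, Finset.sum_range_zero] at this
      norm_num [Nat.factorial] at this
      have e : u - z - z ^ 2 / 2 = Complex.exp z - (1 + z + z ^ 2 / 2) := by rw [hu]; ring
      rw [e]
      have h3 : 0 ≤ ‖z‖ ^ 3 := by positivity
      linarith
    have hu4 : ‖u + z‖ ≤ 3 * ‖z‖ := (norm_add_le _ _).trans (by linarith)
    obtain ⟨w, hw⟩ : ∃ w : ℂ, w = -(a : ℂ) * u := ⟨_, rfl⟩
    have hwn : ‖w‖ = a * ‖u‖ := by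
      rw [hw, norm_mul, norm_neg, Complex.norm_real, Real.norm_of_nonneg ha0.le]
    have hw1 : ‖w‖ ≤ 2 * a * ‖z‖ := by rw [hwn]; nlinarith
    have hw2 : ‖w‖ ≤ 1 / 2 := by nlinarith
    have hfac : 1 - (q : ℂ) * Complex.exp z = ((1 - q : ℝ) : ℂ) * (1 + w) := by
      have : (a : ℂ) * (1 - (q : ℂ)) = q := by exact_mod_cast haq
      rw [hw, hu]; push_cast; linear_combination (Complex.exp z - 1) * this
    have hw0 : 1 + w ≠ 0 := by
      intro h
      have : w = -1 := by linear_combination h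
      rw [this] at hw2; norm_num at hw2
    have hlog : Complex.log (1 - (q : ℂ) * Complex.exp z) - Complex.log (1 - (q : ℂ))
        = Complex.log (1 + w) := by
      rw [hfac, Complex.log_ofReal_mul h1q hw0, Complex.ofReal_log h1q.le]
      push_cast; ring
    constructor
    · have e1 : Real.exp z.re = ‖1 + u‖ := by rw [hu, ← Complex.norm_exp]; congr 1; ring
      have e2 : ‖1 + u‖ ≤ 1 + 2 * ‖z‖ := (norm_add_le _ _).trans (by simpa using hu1)
      rw [e1]
      have e3 : q * (2 * ‖z‖) = (1 - q) * (2 * (a * ‖z‖)) := by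
        linear_combination (-2 * ‖z‖) * haq
      nlinarith
    · have hL := Complex.norm_log_sub_logTaylor_le 2 (z := w) (by linarith)
      have hT : Complex.logTaylor 3 w = w - w ^ 2 / 2 := by
        simp [Complex.logTaylor, Finset.sum_range_succ]; ring
      rw [hT] at hL
      have hL' : ‖Complex.log (1 + w) - (w - w ^ 2 / 2)‖ ≤ 8 * a ^ 3 * ‖z‖ ^ 3 := by
        refine hL.trans ?_
        have i1 : (1 - ‖w‖)⁻¹ ≤ 2 := by
          rw [inv_le_comm₀ (by linarith) (by norm_num)]; linarith
        have i2 : ‖w‖ ^ 3 ≤ (2 * a * ‖z‖) ^ 3 := by gcongr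
        have i3 : 0 ≤ ‖w‖ ^ 3 := by positivity
        norm_num
        nlinarith
      have key : Gq q z + (q : ℂ) * z ^ 2 / (2 * (1 - (q : ℂ)) ^ 2) =
          (Complex.log (1 + w) - (w - w ^ 2 / 2)) + (-(a : ℂ)) * (u - z - z ^ 2 / 2)
            + (-((a : ℂ) ^ 2 / 2)) * ((u - z) * (u + z)) := by
        unfold Gq
        rw [hlog, hw, hac]
        field_simp
        ring
      rw [key]
      have n1 : ‖(-(a : ℂ)) * (u - z - z ^ 2 / 2)‖ ≤ a * ‖z‖ ^ 3 := by
        rw [norm_mul, norm_neg, Complex.norm_real, Real.norm_of_nonneg ha0.le]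
        gcongr
      have n2 : ‖(-((a : ℂ) ^ 2 / 2)) * ((u - z) * (u + z))‖ ≤
          a ^ 2 / 2 * (‖z‖ ^ 2 * (3 * ‖z‖)) := by
        rw [norm_mul, norm_neg, norm_mul, norm_div, norm_pow, Complex.norm_real,
          Real.norm_of_nonneg ha0.le, Complex.norm_two]
        gcongr
      refine (norm_add₃_le).trans ?_
      nlinarith
  · have hpi := Real.pi_pos
    refine ⟨2 * q / (Real.pi ^ 2 * (1 + q) ^ 2), by positivity, ?_⟩
    intro x hx
    have hc1 := Real.cos_le_one x
    have hc2 := Real.neg_one_le_cos x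
    obtain ⟨L, hLd⟩ : ∃ L : ℝ, L = 1 + q ^ 2 - 2 * q * Real.cos x := ⟨_, rfl⟩
    have hL0 : 0 < L := by rw [hLd]; nlinarith
    have hL1 : L ≤ (1 + q) ^ 2 := by rw [hLd]; nlinarith
    have hnorm : ‖1 - (q : ℂ) * Complex.exp (Complex.I * x)‖ ^ 2 = L := by
      rw [Complex.sq_norm, Complex.normSq_apply, mul_comm Complex.I, Complex.exp_mul_I,
        ← Complex.ofReal_cos, ← Complex.ofReal_sin, hLd]
      simp [-Complex.ofReal_cos, -Complex.ofReal_sin]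
      linear_combination q ^ 2 * (Real.sin_sq_add_cos_sq x)
    have hre : (Gq q (Complex.I * (x : ℂ))).re =
        (1 / 2) * Real.log L - Real.log (1 - q) := by
      have e1 : ((q : ℂ) * (Complex.I * x) / (1 - (q : ℂ))).re = 0 := by
        have : (q : ℂ) * (Complex.I * x) / (1 - (q : ℂ)) = ((q * x / (1 - q) : ℝ) : ℂ) * Complex.I := by
          push_cast; ring
        rw [this, Complex.re_ofReal_mul, Complex.I_re, mul_zero]
      have e2 : ‖(1 - (q : ℂ))‖ = 1 - q := by
        have : (1 - (q : ℂ)) = ((1 - q : ℝ) : ℂ) := by push_cast; rfl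
        rw [this, Complex.norm_real, Real.norm_of_nonneg h1q.le]
      unfold Gq
      rw [Complex.add_re, Complex.sub_re, e1, Complex.log_re, Complex.log_re, e2, ← hnorm,
        Real.log_pow]
      push_cast; ring
    rw [hre, ← hLd]
    refine ⟨rfl, ?_⟩
    have hb := Real.one_sub_inv_le_log_of_pos (x := L / (1 - q) ^ 2) (by positivity)
    rw [Real.log_div hL0.ne' (by positivity), Real.log_pow, inv_div] at hb
    push_cast at hb
    have hcos := Real.cos_le_one_sub_mul_cos_sq (abs_le.2 hx)
    have h4 : 4 * q / (Real.pi ^ 2 * (1 + q) ^ 2) * x ^ 2 ≤ 1 - (1 - q) ^ 2 / L := by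
      have : 1 - (1 - q) ^ 2 / L = (2 * q * (1 - Real.cos x)) / L := by
        field_simp; rw [hLd]; ring
      rw [this]
      calc 4 * q / (Real.pi ^ 2 * (1 + q) ^ 2) * x ^ 2
          = (2 * q * (2 / Real.pi ^ 2 * x ^ 2)) / (1 + q) ^ 2 := by field_simp; ring
        _ ≤ (2 * q * (2 / Real.pi ^ 2 * x ^ 2)) / L := by gcongr
        _ ≤ _ := by gcongr; linarith
    have h5 : 2 * q / (Real.pi ^ 2 * (1 + q) ^ 2) * x ^ 2 =
      (4 * q / (Real.pi ^ 2 * (1 + q) ^ 2) * x ^ 2) / 2 := by ring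
    rw [h5]; linarith
end

section
/- Fix q ∈ (0,1) and set σ_q = q^{1/3}(1+q)^{1/3}/(1−q). Define S(z) = Log(1 − q/z) − Log(1 − qz) − (2q/(1−q))·Log z, where Log is the principal branch of the complex logarithm, wherever the arguments lie off (−∞,0]. Then: (a) there exist δ₀ ∈ (0,1/2) and C₀ > 0 such that for all z ∈ ℂ with |z−1| ≤ δ₀, S(z) is well-defined and |S(z) − σ_q³(z−1)³/3| ≤ C₀|z−1|⁴; (b) for every r > 0 with r ≠ 1, the function h_r(θ) := Re S(re^{iθ}) = (1/2)·log(1 + q²r^{−2} − 2qr^{−1}cos θ) − (1/2)·log(1 + q²r² − 2qr cos θ) − (2q/(1−q))·log r is well-defined and differentiable on (0,π), and its derivative satisfies h_r′(θ) > 0 for all θ ∈ (0,π) when 0 < r < 1, and h_r′(θ) < 0 for all θ ∈ (0,π) when r > 1. -/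
open Filter Complex

noncomputable section

def Sq (q : ℝ) (z : ℂ) : ℂ :=
  Complex.log (1 - (q : ℂ) / z) - Complex.log (1 - (q : ℂ) * z) -
    ((2 * q / (1 - q) : ℝ) : ℂ) * Complex.log z

/-- The real formula for `Re S(r e^{iθ})`. -/
def hSr (q r θ : ℝ) : ℝ :=
  (1 / 2) * Real.log (1 + q ^ 2 / r ^ 2 - 2 * (q / r) * Real.cos θ) -
    (1 / 2) * Real.log (1 + q ^ 2 * r ^ 2 - 2 * q * r * Real.cos θ) -
    (2 * q / (1 - q)) * Real.log r

/-- `w` lies off the branch cut `(-∞, 0]` of the principal logarithm. -/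
def OffCut (w : ℂ) : Prop := ¬(w.im = 0 ∧ w.re ≤ 0)

lemma sigmaQ_cube (q : ℝ) (h0 : 0 < q) (h1 : q < 1) :
    sigmaQ q ^ 3 = q * (1 + q) / (1 - q) ^ 3 := by
  have e : ∀ x : ℝ, 0 < x → (x ^ ((1 : ℝ) / 3)) ^ 3 = x := by
    intro x hx
    rw [← Real.rpow_natCast, ← Real.rpow_mul hx.le]
    norm_num
  unfold sigmaQ
  rw [div_pow, mul_pow, e q h0, e (1 + q) (by linarith)]

lemma geomS (q : ℝ) (h0 : 0 < q) (h1 : q < 1) (z : ℂ) (hz : ‖z - 1‖ ≤ (1 - q) / 4) :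
    3 / 4 ≤ ‖z‖ ∧ 3 * (1 - q) / 4 ≤ ‖z - q‖ ∧ 3 * (1 - q) / 4 ≤ ‖1 - q * z‖ ∧
    0 < z.re ∧ 0 < (1 - (q : ℂ) * z).re ∧ 0 < (1 - (q : ℂ) / z).re := by
  have hn : 1 - ‖z - 1‖ ≤ ‖z‖ := by
    have := norm_sub_norm_le (1 : ℂ) (1 - z)
    rw [norm_sub_rev 1 z] at this
    simpa using this
  have hre := abs_le.1 (Complex.abs_re_le_norm (z - 1))
  simp only [Complex.sub_re, Complex.one_re] at hre
  have hzn : 3 / 4 ≤ ‖z‖ := by linarith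
  have h2 : 3 * (1 - q) / 4 ≤ (z - q).re := by
    simp; linarith
  have h3 : 3 * (1 - q) / 4 ≤ (1 - q * z).re := by
    simp; nlinarith
  refine ⟨hzn, h2.trans (Complex.re_le_norm _), h3.trans (Complex.re_le_norm _), by linarith,
    by linarith, ?_⟩
  have : ‖(q : ℂ) / z‖ < 1 := by
    rw [norm_div, div_lt_one (by linarith), Complex.norm_real, Real.norm_of_nonneg h0.le]
    linarith
  have := (Complex.re_le_norm ((q : ℂ) / z)).trans_lt this
  simp only [Complex.sub_re, Complex.one_re]; linarith

lemma derivS (q : ℝ) (h0 : 0 < q) (h1 : q < 1) (z : ℂ) (hz : ‖z - 1‖ ≤ (1 - q) / 4) :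
    HasDerivAt (fun z => Sq q z - (sigmaQ q : ℂ) ^ 3 * (z - 1) ^ 3 / 3)
      (-((q : ℂ) * (1 + q) / (1 - q) ^ 3) * (z - 1) ^ 3 *
        (2 * (1 - q) ^ 2 + ((1 - q) ^ 2 - q) * (z - 1) - q * (z - 1) ^ 2) /
          (z * (z - q) * (1 - q * z))) z := by
  obtain ⟨a, b, c, d, e, f⟩ := geomS q h0 h1 z hz
  have hz0 : z ≠ 0 := by rintro rfl; simp at d
  have hzq : z - q ≠ 0 := by rw [← norm_pos_iff]; linarith
  have hqz : 1 - q * z ≠ 0 := by rw [← norm_pos_iff]; linarith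
  have hq1 : (1 - q : ℂ) ≠ 0 := by
    have : (1 - q : ℝ) ≠ 0 := by linarith
    exact_mod_cast this
  have hs : (sigmaQ q : ℂ) ^ 3 = q * (1 + q) / (1 - q) ^ 3 := by
    exact_mod_cast sigmaQ_cube q h0 h1
  have hf : 1 - (q : ℂ) / z ≠ 0 := by intro h; rw [h] at f; simp at f
  have d1 : HasDerivAt (fun z : ℂ => Complex.log (1 - (q : ℂ) / z)) _ z :=
    (((hasDerivAt_const z (q : ℂ)).div (hasDerivAt_id z) hz0).const_sub 1).clog (Or.inl f)
  have d2 : HasDerivAt (fun z : ℂ => Complex.log (1 - (q : ℂ) * z)) _ z :=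
    (((hasDerivAt_id z).const_mul (q : ℂ)).const_sub 1).clog (Or.inl e)
  have d3 := (Complex.hasDerivAt_log (Or.inl d)).const_mul ((2 * q / (1 - q) : ℝ) : ℂ)
  have d4 := (((((hasDerivAt_id z).sub_const 1).pow 3).const_mul ((sigmaQ q : ℂ) ^ 3)).div_const 3)
  have D := ((d1.sub d2).sub d3).sub d4
  refine HasDerivAt.congr_deriv D ?_
  have hf2 : 1 - (q : ℂ) / z = (z - q) / z := by field_simp
  simp only [id, Pi.div_apply, hs]
  rw [hf2]
  push_cast
  have hqz2 : 1 - z * (q : ℂ) ≠ 0 := by rwa [mul_comm]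
  field_simp
  ring

lemma boundS (q : ℝ) (h0 : 0 < q) (h1 : q < 1) (z : ℂ) (hz : ‖z - 1‖ ≤ (1 - q) / 4) :
    ‖(-((q : ℂ) * (1 + q) / (1 - q) ^ 3) * (z - 1) ^ 3 *
        (2 * (1 - q) ^ 2 + ((1 - q) ^ 2 - q) * (z - 1) - q * (z - 1) ^ 2) /
          (z * (z - q) * (1 - q * z)))‖ ≤
    (q * (1 + q) / (1 - q) ^ 3) * 4 / (3 / 4 * (3 * (1 - q) / 4) * (3 * (1 - q) / 4))
      * ‖z - 1‖ ^ 3 := by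
  obtain ⟨a, b, c, d, e, f⟩ := geomS q h0 h1 z hz
  have p : 0 < 1 - q := by linarith
  have hw : ‖z - 1‖ ≤ 1 := by linarith
  have n1 : ‖-((q : ℂ) * (1 + q) / (1 - q) ^ 3)‖ = q * (1 + q) / (1 - q) ^ 3 := by
    have : -((q : ℂ) * (1 + q) / (1 - q) ^ 3) = ((-(q * (1 + q) / (1 - q) ^ 3) : ℝ) : ℂ) := by
      push_cast; ring
    rw [this, Complex.norm_real, norm_neg, Real.norm_of_nonneg (by positivity)]
  have n2 : ‖(2 * (1 - q) ^ 2 + ((1 - q) ^ 2 - q) * (z - 1) - q * (z - 1) ^ 2 : ℂ)‖ ≤ 4 := by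
    have t1 : ‖(2 * (1 - q) ^ 2 : ℂ)‖ ≤ 2 := by
      have : (2 * (1 - q) ^ 2 : ℂ) = ((2 * (1 - q) ^ 2 : ℝ) : ℂ) := by push_cast; ring
      rw [this, Complex.norm_real, Real.norm_of_nonneg (by positivity)]
      nlinarith
    have t2 : ‖(((1 - q) ^ 2 - q) * (z - 1) : ℂ)‖ ≤ 1 := by
      have : ((1 - q) ^ 2 - q : ℂ) = (((1 - q) ^ 2 - q : ℝ) : ℂ) := by push_cast; ring
      rw [norm_mul, this, Complex.norm_real]
      refine mul_le_one₀ ?_ (norm_nonneg _) hw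
      rw [Real.norm_eq_abs, abs_le]
      constructor <;> nlinarith
    have t3 : ‖(q * (z - 1) ^ 2 : ℂ)‖ ≤ 1 := by
      rw [norm_mul, norm_pow, Complex.norm_real, Real.norm_of_nonneg h0.le]
      exact mul_le_one₀ h1.le (by positivity) (pow_le_one₀ (norm_nonneg _) hw)
    have := norm_sub_le (2 * (1 - q) ^ 2 + ((1 - q) ^ 2 - q) * (z - 1) : ℂ) (q * (z - 1) ^ 2)
    have := norm_add_le (2 * (1 - q) ^ 2 : ℂ) (((1 - q) ^ 2 - q) * (z - 1))
    linarith
  rw [norm_div, norm_mul, norm_mul, n1, norm_mul, norm_mul, norm_pow]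
  calc _ ≤ (q * (1 + q) / (1 - q) ^ 3) * ‖z - 1‖ ^ 3 * 4 /
        (3 / 4 * (3 * (1 - q) / 4) * (3 * (1 - q) / 4)) := by gcongr
    _ = _ := by ring

lemma log_norm_aux (s θ : ℝ) (w : ℂ) (hre : w.re = 1 - s * Real.cos θ)
    (him : w.im ^ 2 = (s * Real.sin θ) ^ 2) :
    (Complex.log w).re = 1 / 2 * Real.log (1 + s ^ 2 - 2 * s * Real.cos θ) := by
  have : 1 + s ^ 2 - 2 * s * Real.cos θ = ‖w‖ ^ 2 := by
    rw [Complex.sq_norm, Complex.normSq_apply, ← sq, ← sq, him, hre]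
    nlinarith [Real.sin_sq_add_cos_sq θ]
  rw [this, Complex.log_re, Real.log_pow]
  push_cast; ring

lemma pos_aux (s θ : ℝ) (h : 0 < Real.sin θ) : 0 < 1 + s ^ 2 - 2 * s * Real.cos θ := by
  nlinarith [Real.sin_sq_add_cos_sq θ, sq_nonneg (s - Real.cos θ), pow_pos h 2]

/-- Lemma 5.2 (`TaylorS`). -/
theorem stmt14 (q : ℝ) (hq : q ∈ Set.Ioo (0 : ℝ) 1) :
    (∃ δ₀ ∈ Set.Ioo (0 : ℝ) (1 / 2), ∃ C₀ : ℝ, 0 < C₀ ∧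
      ∀ z : ℂ, ‖z - 1‖ ≤ δ₀ →
        OffCut (1 - (q : ℂ) / z) ∧ OffCut (1 - (q : ℂ) * z) ∧ OffCut z ∧
        ‖Sq q z - (sigmaQ q : ℂ) ^ 3 * (z - 1) ^ 3 / 3‖ ≤ C₀ * ‖z - 1‖ ^ 4) ∧
    (∀ r : ℝ, 0 < r → r ≠ 1 → ∀ θ ∈ Set.Ioo (0 : ℝ) Real.pi,
      0 < 1 + q ^ 2 / r ^ 2 - 2 * (q / r) * Real.cos θ ∧
      0 < 1 + q ^ 2 * r ^ 2 - 2 * q * r * Real.cos θ ∧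
      hSr q r θ = (Sq q ((r : ℂ) * Complex.exp ((θ : ℂ) * Complex.I))).re ∧
      DifferentiableAt ℝ (hSr q r) θ ∧
      (r < 1 → 0 < deriv (hSr q r) θ) ∧
      (1 < r → deriv (hSr q r) θ < 0)) := by
  obtain ⟨h0, h1⟩ := hq
  have p : 0 < 1 - q := by linarith
  refine ⟨⟨(1 - q) / 4, ⟨by linarith, by linarith⟩,
    (q * (1 + q) / (1 - q) ^ 3) * 4 / (3 / 4 * (3 * (1 - q) / 4) * (3 * (1 - q) / 4)),
    by positivity, ?_⟩, ?_⟩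
  · intro z hz
    obtain ⟨a, b, c, d, e, f⟩ := geomS q h0 h1 z hz
    refine ⟨fun h => by linarith [h.2], fun h => by linarith [h.2], fun h => by linarith [h.2], ?_⟩
    have key := (convex_closedBall (1 : ℂ) ‖z - 1‖).norm_image_sub_le_of_norm_hasDerivWithin_le
      (f := fun z => Sq q z - (sigmaQ q : ℂ) ^ 3 * (z - 1) ^ 3 / 3)
      (C := (q * (1 + q) / (1 - q) ^ 3) * 4 / (3 / 4 * (3 * (1 - q) / 4) * (3 * (1 - q) / 4))
        * ‖z - 1‖ ^ 3) (x := 1) (y := z)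
      (fun x hx => (derivS q h0 h1 x
        ((mem_closedBall_iff_norm.1 hx).trans hz)).hasDerivWithinAt)
      (fun x hx => (boundS q h0 h1 x ((mem_closedBall_iff_norm.1 hx).trans hz)).trans (by
        have := mem_closedBall_iff_norm.1 hx
        gcongr))
      (by simp) (mem_closedBall_iff_norm.2 le_rfl)
    have h1S : Sq q 1 = 0 := by simp [Sq]
    simp only [h1S, sub_self] at key
    norm_num at key
    refine le_trans (by convert key using 1) (le_of_eq ?_)
    ring
  · intro r hr hr1 θ ⟨hθ0, hθ1⟩
    have hs := Real.sin_pos_of_pos_of_lt_pi hθ0 hθ1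
    have A : 0 < 1 + q ^ 2 / r ^ 2 - 2 * (q / r) * Real.cos θ := by
      have := pos_aux (q / r) θ hs
      rwa [div_pow] at this
    have B : 0 < 1 + q ^ 2 * r ^ 2 - 2 * q * r * Real.cos θ := by
      have := pos_aux (q * r) θ hs
      rwa [mul_pow, ← mul_assoc] at this
    have D : HasDerivAt (hSr q r)
        (Real.sin θ * (q * (1 - q ^ 2) * (1 - r ^ 2) / r) /
          ((1 + q ^ 2 / r ^ 2 - 2 * (q / r) * Real.cos θ) *
            (1 + q ^ 2 * r ^ 2 - 2 * q * r * Real.cos θ))) θ := by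
      have d1 := ((((Real.hasDerivAt_cos θ).const_mul (2 * (q / r))).const_sub
        (1 + q ^ 2 / r ^ 2)).log A.ne').const_mul (1 / 2)
      have d2 := ((((Real.hasDerivAt_cos θ).const_mul (2 * q * r)).const_sub
        (1 + q ^ 2 * r ^ 2)).log B.ne').const_mul (1 / 2)
      have d := (d1.sub d2).sub_const ((2 * q / (1 - q)) * Real.log r)
      refine HasDerivAt.congr_deriv d ?_
      have A' := A.ne'
      have B' := B.ne'
      have hr' := hr.ne'
      have e : q * (1 - q ^ 2) * (1 - r ^ 2) / r =
          (q / r) * (1 + q ^ 2 * r ^ 2 - 2 * q * r * Real.cos θ) -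
          q * r * (1 + q ^ 2 / r ^ 2 - 2 * (q / r) * Real.cos θ) := by
        field_simp
        ring
      rw [e]
      generalize 1 + q ^ 2 / r ^ 2 - 2 * (q / r) * Real.cos θ = X at *
      generalize 1 + q ^ 2 * r ^ 2 - 2 * q * r * Real.cos θ = Y at *
      field_simp
    have hq2 : 0 < 1 - q ^ 2 := by nlinarith
    refine ⟨A, B, ?_, D.differentiableAt, ?_, ?_⟩
    · have l1 := log_norm_aux (q / r) θ (1 - (q : ℂ) / ((r : ℂ) * Complex.exp (θ * Complex.I)))
        (by
          rw [← div_div, div_eq_mul_inv, ← Complex.exp_neg, ← neg_mul, ← Complex.ofReal_neg,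
            ← Complex.ofReal_div, Complex.sub_re, Complex.re_ofReal_mul,
            Complex.exp_ofReal_mul_I_re]
          simp)
        (by
          rw [← div_div, div_eq_mul_inv, ← Complex.exp_neg, ← neg_mul, ← Complex.ofReal_neg,
            ← Complex.ofReal_div, Complex.sub_im, Complex.im_ofReal_mul,
            Complex.exp_ofReal_mul_I_im]
          simp)
      have l2 := log_norm_aux (q * r) θ (1 - (q : ℂ) * ((r : ℂ) * Complex.exp (θ * Complex.I)))
        (by
          rw [← mul_assoc, ← Complex.ofReal_mul, Complex.sub_re, Complex.re_ofReal_mul,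
            Complex.exp_ofReal_mul_I_re]
          simp)
        (by
          rw [← mul_assoc, ← Complex.ofReal_mul, Complex.sub_im, Complex.im_ofReal_mul,
            Complex.exp_ofReal_mul_I_im]
          simp)
      have l3 : (Complex.log ((r : ℂ) * Complex.exp (θ * Complex.I))).re = Real.log r := by
        rw [Complex.log_re, norm_mul, Complex.norm_exp_ofReal_mul_I, mul_one, Complex.norm_real,
          Real.norm_of_nonneg hr.le]
      unfold Sq hSr
      rw [Complex.sub_re, Complex.sub_re, Complex.re_ofReal_mul, l1, l2, l3, div_pow, mul_pow,
        ← mul_assoc 2 q r]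
    · intro h
      rw [D.deriv]
      have : 0 < 1 - r ^ 2 := by nlinarith
      positivity
    · intro h
      rw [D.deriv]
      have : 0 < r ^ 2 - 1 := by nlinarith
      have h2 : q * (1 - q ^ 2) * (1 - r ^ 2) / r = -(q * (1 - q ^ 2) * (r ^ 2 - 1) / r) := by ring
      rw [h2, mul_neg, neg_div, neg_lt_zero]
      positivity
end
end

section
/- Fix m ∈ ℕ and let (X₁,…,X_m) and (Y₁,…,Y_m) be random vectors taking values in ℤ_{≥0}^m (possibly defined on different probability spaces). Suppose there exist a > 0 and a sequence c_n ∈ [0,∞) with ∑_{n=1}^∞ (c_n/n!)·aⁿ < ∞, such that for all n₁,…,n_m ∈ ℤ_{≥0} with n₁+⋯+n_m = n, E[∏_{i=1}^m X_i!/(X_i−n_i)!] = E[∏_{i=1}^m Y_i!/(Y_i−n_i)!] ≤ c_n. Then (X₁,…,X_m) and (Y₁,…,Y_m) have the same distribution. -/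
open MeasureTheory
open scoped ENNReal

/-- The weight `∏ z_i^{n_i} / n_i!`. -/
noncomputable def mpWeight {m : ℕ} (z : Fin m → ℝ≥0∞) (n : Fin m → ℕ) : ℝ≥0∞ :=
  ∏ i, (z i ^ n i * ((n i).factorial : ℝ≥0∞)⁻¹)

lemma mp_pow_one (z : ℝ≥0∞) (x : ℕ) :
    (1 + z) ^ x = ∑ n ∈ Finset.range (x + 1),
      z ^ n * (n.factorial : ℝ≥0∞)⁻¹ * (x.descFactorial n : ℝ≥0∞) := by
  rw [add_comm, add_pow]
  refine Finset.sum_congr rfl fun n _ => ?_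
  rw [one_pow, mul_one, mul_assoc, Nat.descFactorial_eq_factorial_mul_choose]
  push_cast
  rw [← mul_assoc (_)⁻¹, ENNReal.inv_mul_cancel, one_mul]
  · exact_mod_cast n.factorial_ne_zero
  · exact ENNReal.natCast_ne_top _

lemma mp_pow {m : ℕ} (z : Fin m → ℝ≥0∞) (x : Fin m → ℕ) :
    ∏ i, (1 + z i) ^ x i =
      ∑' n : Fin m → ℕ, mpWeight z n * ∏ i, ((x i).descFactorial (n i) : ℝ≥0∞) := by
  simp_rw [mp_pow_one]
  rw [Finset.prod_univ_sum, tsum_eq_sum (s := Fintype.piFinset fun i => Finset.range (x i + 1))]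
  · refine Finset.sum_congr rfl fun n _ => ?_
    rw [mpWeight, ← Finset.prod_mul_distrib]
  · intro n hn
    simp only [Fintype.mem_piFinset, Finset.mem_range, not_forall] at hn
    obtain ⟨i, hi⟩ := hn
    refine mul_eq_zero_of_right _ (Finset.prod_eq_zero (Finset.mem_univ i) ?_)
    rw [Nat.descFactorial_of_lt (by omega)]
    simp

lemma mp_lintegral {m : ℕ} {Ω : Type*} [MeasurableSpace Ω] (P : Measure Ω)
    (X : Ω → Fin m → ℕ) (hX : Measurable X) (z : Fin m → ℝ≥0∞) :
    ∫⁻ ω, ∏ i, (1 + z i) ^ X ω i ∂P =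
      ∑' n : Fin m → ℕ, mpWeight z n *
        ∫⁻ ω, ∏ i, ((X ω i).descFactorial (n i) : ℝ≥0∞) ∂P := by
  simp_rw [mp_pow]
  have hmeas : ∀ n : Fin m → ℕ,
      Measurable fun ω => ∏ i, ((X ω i).descFactorial (n i) : ℝ≥0∞) := fun n =>
    (measurable_of_countable
      (fun x : Fin m → ℕ => ∏ i, ((x i).descFactorial (n i) : ℝ≥0∞))).comp hX
  rw [lintegral_tsum fun n => ((hmeas n).const_mul _).aemeasurable]
  refine tsum_congr fun n => ?_
  rw [lintegral_const_mul _ (hmeas n)]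

lemma mp_sum_weight {m : ℕ} (z : Fin m → ℝ≥0∞) (k : ℕ) :
    ∑ n ∈ Finset.piAntidiag Finset.univ k, mpWeight z n =
      (∑ i, z i) ^ k * (k.factorial : ℝ≥0∞)⁻¹ := by
  rw [Finset.sum_pow_eq_sum_piAntidiag, Finset.sum_mul]
  refine Finset.sum_congr rfl fun n hn => ?_
  have hk : ∑ i, n i = k := (Finset.mem_piAntidiag.1 hn).1
  have hspec := Nat.multinomial_spec Finset.univ n
  rw [hk] at hspec
  rw [mpWeight, Finset.prod_mul_distrib, mul_comm (Nat.multinomial _ _ : ℝ≥0∞), mul_assoc]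
  congr 1
  rw [← hspec]
  have h0 : ∀ i, ((n i).factorial : ℝ≥0∞) ≠ 0 := fun i => by
    exact_mod_cast (n i).factorial_ne_zero
  have hm0 : (Nat.multinomial Finset.univ n : ℝ≥0∞) ≠ 0 := by
    exact_mod_cast (Nat.multinomial_pos _ _).ne'
  push_cast
  rw [← ENNReal.prod_inv_distrib (fun i _ j _ _ => Or.inl (h0 i)),
    ENNReal.mul_inv (Or.inr (ENNReal.natCast_ne_top _)) (Or.inr hm0), mul_left_comm,
    ENNReal.mul_inv_cancel hm0 (ENNReal.natCast_ne_top _), mul_one]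

lemma mp_finite {m : ℕ} (z : Fin m → ℝ≥0∞) (a : ℝ) (ha : 0 < a) (c : ℕ → ℝ)
    (hc : ∀ n, 0 ≤ c n)
    (hsum : Summable fun n => c n / (n.factorial : ℝ) * a ^ n)
    (hz : ∑ i, z i ≤ ENNReal.ofReal a) :
    ∑' n : Fin m → ℕ, mpWeight z n * ENNReal.ofReal (c (∑ i, n i)) ≠ ∞ := by
  rw [← ENNReal.tsum_fiberwise _ (fun n : Fin m → ℕ => ∑ i, n i)]
  refine ne_top_of_le_ne_top hsum.tsum_ofReal_ne_top (ENNReal.tsum_le_tsum fun k => ?_)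
  have hset : ((fun n : Fin m → ℕ => ∑ i, n i) ⁻¹' {k}) =
      ((Finset.piAntidiag Finset.univ k : Finset (Fin m → ℕ)) : Set (Fin m → ℕ)) := by
    ext n; simp
  rw [hset]
  rw [Finset.tsum_subtype' (Finset.piAntidiag Finset.univ k)
    (fun n : Fin m → ℕ => mpWeight z n * ENNReal.ofReal (c (∑ i, n i)))]
  calc _ = ∑ n ∈ Finset.piAntidiag (Finset.univ : Finset (Fin m)) k,
          mpWeight z n * ENNReal.ofReal (c k) :=
        Finset.sum_congr rfl fun n hn => by rw [(Finset.mem_piAntidiag.1 hn).1]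
    _ = (∑ i, z i) ^ k * (k.factorial : ℝ≥0∞)⁻¹ * ENNReal.ofReal (c k) := by
        rw [← Finset.sum_mul, mp_sum_weight]
    _ ≤ ENNReal.ofReal a ^ k * (k.factorial : ℝ≥0∞)⁻¹ * ENNReal.ofReal (c k) := by gcongr
    _ = _ := by
        have hk : (0 : ℝ) < k.factorial := by exact_mod_cast k.factorial_pos
        rw [ENNReal.ofReal_mul (div_nonneg (hc k) hk.le), ENNReal.ofReal_pow ha.le,
          ENNReal.ofReal_div_of_pos hk, ENNReal.ofReal_natCast, div_eq_mul_inv]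
        ring

open ProbabilityTheory in
/-- One-dimensional determinacy from one-sided local agreement of Laplace transforms. -/
lemma mp_oneDim {Ω₁ Ω₂ : Type*} [MeasurableSpace Ω₁] [MeasurableSpace Ω₂]
    (P₁ : Measure Ω₁) (P₂ : Measure Ω₂)
    [IsProbabilityMeasure P₁] [IsProbabilityMeasure P₂]
    (U : Ω₁ → ℝ) (V : Ω₂ → ℝ) (hU : Measurable U) (hV : Measurable V)
    (hU0 : ∀ ω, 0 ≤ U ω) (hV0 : ∀ ω, 0 ≤ V ω) (ε : ℝ) (hε : 0 < ε)
    (heq : ∀ s, 0 < s → s < ε → ∫⁻ ω, ENNReal.ofReal (Real.exp (s * U ω)) ∂P₁ =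
      ∫⁻ ω, ENNReal.ofReal (Real.exp (s * V ω)) ∂P₂)
    (hfin : ∀ s, 0 < s → s < ε → ∫⁻ ω, ENNReal.ofReal (Real.exp (s * U ω)) ∂P₁ ≠ ∞) :
    Measure.map U P₁ = Measure.map V P₂ := by
  have key : ∀ {Ω : Type _} [MeasurableSpace Ω] (P : Measure Ω) [IsProbabilityMeasure P]
      (W : Ω → ℝ), Measurable W → (∀ ω, 0 ≤ W ω) →
      (∀ s, 0 < s → s < ε → ∫⁻ ω, ENNReal.ofReal (Real.exp (s * W ω)) ∂P ≠ ∞) →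
      Set.Iio ε ⊆ interior (integrableExpSet W P) := by
    intro Ω _ P _ W hW hW0 hf
    refine interior_maximal ?_ isOpen_Iio
    intro s hs
    have hm : Measurable fun ω => Real.exp (s * W ω) := by fun_prop
    rcases le_or_gt s 0 with h | h
    · refine Integrable.of_bound hm.aestronglyMeasurable 1 (.of_forall fun ω => ?_)
      rw [Real.norm_eq_abs, abs_of_pos (Real.exp_pos _), Real.exp_le_one_iff]
      exact mul_nonpos_of_nonpos_of_nonneg h (hW0 ω)
    · exact (lintegral_ofReal_ne_top_iff_integrable hm.aestronglyMeasurable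
        (.of_forall fun ω => (Real.exp_pos _).le)).1 (hf s h hs)
  have kU := key P₁ U hU hU0 hfin
  have kV : Set.Iio ε ⊆ interior (integrableExpSet V P₂) := by
    refine interior_maximal ?_ isOpen_Iio
    intro s hs
    have hm : Measurable fun ω => Real.exp (s * V ω) := by fun_prop
    rcases le_or_gt s 0 with h | h
    · refine Integrable.of_bound hm.aestronglyMeasurable 1 (.of_forall fun ω => ?_)
      rw [Real.norm_eq_abs, abs_of_pos (Real.exp_pos _), Real.exp_le_one_iff]
      exact mul_nonpos_of_nonpos_of_nonneg h (hV0 ω)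
    · exact (lintegral_ofReal_ne_top_iff_integrable hm.aestronglyMeasurable
        (.of_forall fun ω => (Real.exp_pos _).le)).1 (heq s h hs ▸ hfin s h hs)
  have aU : AnalyticOnNhd ℂ (complexMGF U P₁) {z | z.re ∈ Set.Iio ε} :=
    analyticOnNhd_complexMGF.mono fun z hz => kU hz
  have aV : AnalyticOnNhd ℂ (complexMGF V P₂) {z | z.re ∈ Set.Iio ε} :=
    analyticOnNhd_complexMGF.mono fun z hz => kV hz
  have hpre : IsPreconnected {z : ℂ | z.re ∈ Set.Iio ε} :=
    ((convex_Iio ε).linear_preimage Complex.reLm).isPreconnected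
  have hfreq : ∃ᶠ z : ℂ in nhdsWithin 0 {0}ᶜ, complexMGF U P₁ z = complexMGF V P₂ z := by
    have ht : Filter.Tendsto (fun x : ℝ => (x : ℂ)) (nhdsWithin 0 (Set.Ioi 0))
        (nhdsWithin 0 {0}ᶜ) := by
      refine tendsto_nhdsWithin_iff.2 ⟨?_, ?_⟩
      · exact (Complex.continuous_ofReal.tendsto' 0 0 (by simp)).mono_left nhdsWithin_le_nhds
      · filter_upwards [self_mem_nhdsWithin] with x hx
        simpa using ne_of_gt hx
    refine ht.frequently (Filter.Eventually.frequently ?_)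
    filter_upwards [Ioo_mem_nhdsGT hε] with x hx
    rw [complexMGF_ofReal, complexMGF_ofReal, mgf, mgf,
      integral_eq_lintegral_of_nonneg_ae (.of_forall fun ω => (Real.exp_pos _).le)
        (by fun_prop),
      integral_eq_lintegral_of_nonneg_ae (.of_forall fun ω => (Real.exp_pos _).le)
        (by fun_prop), heq x hx.1 hx.2]
  have hEq := aU.eqOn_of_preconnected_of_frequently_eq aV hpre (z₀ := 0) (by simpa using hε) hfreq
  have : IsProbabilityMeasure (P₁.map U) := Measure.isProbabilityMeasure_map hU.aemeasurable
  have : IsProbabilityMeasure (P₂.map V) := Measure.isProbabilityMeasure_map hV.aemeasurable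
  refine Measure.ext_of_charFun ?_
  ext t
  rw [← complexMGF_mul_I hU.aemeasurable, ← complexMGF_mul_I hV.aemeasurable]
  exact hEq (by simpa using hε)

/-- The linear form with coefficients the logarithms of the first `m` primes. -/
noncomputable def mpForm {m : ℕ} (x : Fin m → ℕ) : ℝ :=
  ∑ i, (x i : ℝ) * Real.log (Nat.nth Nat.Prime i)

lemma mpPrime (i : ℕ) : (Nat.nth Nat.Prime i).Prime := Nat.prime_nth_prime i

lemma mpForm_exp {m : ℕ} (s : ℝ) (x : Fin m → ℕ) :
    Real.exp (s * mpForm x) = ∏ i : Fin m, Real.exp (s * Real.log (Nat.nth Nat.Prime i)) ^ x i := by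
  rw [mpForm, Finset.mul_sum, Real.exp_sum]
  refine Finset.prod_congr rfl fun i _ => ?_
  rw [← Real.exp_nat_mul]
  ring_nf

lemma mpForm_nonneg {m : ℕ} (x : Fin m → ℕ) : 0 ≤ mpForm x :=
  Finset.sum_nonneg fun i _ => mul_nonneg (Nat.cast_nonneg _) (Real.log_natCast_nonneg _)

lemma mpForm_injective {m : ℕ} : Function.Injective (mpForm (m := m)) := by
  intro x y h
  have hN : ∏ i : Fin m, Nat.nth Nat.Prime i ^ x i = ∏ i : Fin m, Nat.nth Nat.Prime i ^ y i := by
    have h1 := congrArg (fun t => Real.exp (1 * t)) h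
    beta_reduce at h1
    rw [mpForm_exp, mpForm_exp] at h1
    simp only [one_mul] at h1
    have h2 : ∀ i : Fin m, Real.exp (Real.log (Nat.nth Nat.Prime i)) = (Nat.nth Nat.Prime i : ℝ) :=
      fun i => Real.exp_log (by exact_mod_cast (mpPrime i).pos)
    simp only [h2] at h1
    exact_mod_cast h1
  have hf : ∀ (x : Fin m → ℕ) (j : Fin m),
      (∏ i : Fin m, Nat.nth Nat.Prime i ^ x i).factorization (Nat.nth Nat.Prime j) = x j := by
    intro x j
    rw [Nat.factorization_prod fun (i : Fin m) _ => pow_ne_zero _ (mpPrime i).ne_zero, Finsupp.finset_sum_apply,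
      Finset.sum_eq_single j]
    · rw [(mpPrime j).factorization_pow]; simp
    · intro i _ hij
      rw [(mpPrime i).factorization_pow, Finsupp.single_apply, if_neg]
      intro he
      exact hij (Fin.ext (Nat.nth_injective Nat.infinite_setOf_prime he))
    · simp
  funext j
  rw [← hf x j, hN, hf y j]

/-- Lemma A.2 (`MomentProblem`): joint factorial moments which agree and do not grow
too fast determine the law of a `ℤ_{≥0}^m`-valued random vector. -/
theorem stmt16 (m : ℕ) {Ω₁ Ω₂ : Type*} [MeasurableSpace Ω₁] [MeasurableSpace Ω₂]
    (P₁ : Measure Ω₁) (P₂ : Measure Ω₂)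
    [IsProbabilityMeasure P₁] [IsProbabilityMeasure P₂]
    (X : Ω₁ → Fin m → ℕ) (Y : Ω₂ → Fin m → ℕ)
    (hX : Measurable X) (hY : Measurable Y)
    (a : ℝ) (ha : 0 < a) (c : ℕ → ℝ) (hc : ∀ n, 0 ≤ c n)
    (hsum : Summable fun n => c n / (n.factorial : ℝ) * a ^ n)
    (hmom : ∀ n : Fin m → ℕ,
      (∫⁻ ω, ∏ i, ((X ω i).descFactorial (n i) : ℝ≥0∞) ∂P₁) =
        (∫⁻ ω, ∏ i, ((Y ω i).descFactorial (n i) : ℝ≥0∞) ∂P₂) ∧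
      (∫⁻ ω, ∏ i, ((X ω i).descFactorial (n i) : ℝ≥0∞) ∂P₁) ≤
        ENNReal.ofReal (c (∑ i, n i))) :
    Measure.map (fun ω i => (X ω i : ℝ)) P₁ =
      Measure.map (fun ω i => (Y ω i : ℝ)) P₂ := by
  have hform : Measurable (mpForm (m := m)) := measurable_of_countable _
  -- choose `ε`
  obtain ⟨ε, hε, hεb⟩ : ∃ ε > 0, ∀ s, 0 < s → s < ε → ∀ i : Fin m,
      Real.exp (s * Real.log (Nat.nth Nat.Prime i)) - 1 ≤ a / (m + 1) := by
    have hev : ∀ᶠ s : ℝ in nhds 0, ∀ i : Fin m,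
        Real.exp (s * Real.log (Nat.nth Nat.Prime i)) - 1 < a / (m + 1) := by
      refine Filter.eventually_all.2 fun i => ?_
      have hcont : Continuous fun s : ℝ =>
        Real.exp (s * Real.log (Nat.nth Nat.Prime i)) - 1 := by fun_prop
      refine (hcont.tendsto 0).eventually_lt_const ?_
      simp only [zero_mul, Real.exp_zero, sub_self]
      positivity
    obtain ⟨ε, hε, h⟩ := Metric.eventually_nhds_iff.1 hev
    refine ⟨ε, hε, fun s hs hs' i => (h ?_ i).le⟩
    rw [Real.dist_eq, sub_zero, abs_of_pos hs]
    exact hs'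
  have hexp : ∀ s, 0 < s → ∀ x : Fin m → ℕ, ENNReal.ofReal (Real.exp (s * mpForm x)) =
      ∏ i : Fin m, (1 + ENNReal.ofReal (Real.exp (s * Real.log (Nat.nth Nat.Prime i)) - 1)) ^ x i := by
    intro s hs x
    rw [mpForm_exp, ENNReal.ofReal_prod_of_nonneg fun i _ => by positivity]
    refine Finset.prod_congr rfl fun i _ => ?_
    have h0 : 0 ≤ Real.exp (s * Real.log (Nat.nth Nat.Prime i)) - 1 :=
      sub_nonneg.2 (Real.one_le_exp (mul_nonneg hs.le (Real.log_natCast_nonneg _)))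
    rw [← ENNReal.ofReal_one, ← ENNReal.ofReal_add zero_le_one h0, add_sub_cancel,
      ENNReal.ofReal_pow (Real.exp_pos _).le]
  have hmap : Measure.map (fun ω => mpForm (X ω)) P₁ = Measure.map (fun ω => mpForm (Y ω)) P₂ := by
    refine mp_oneDim P₁ P₂ _ _ (hform.comp hX) (hform.comp hY) (fun _ => mpForm_nonneg _)
      (fun _ => mpForm_nonneg _) ε hε ?_ ?_
    · intro s hs _
      simp_rw [hexp s hs]
      rw [mp_lintegral P₁ X hX, mp_lintegral P₂ Y hY]
      exact tsum_congr fun n => by rw [(hmom n).1]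
    · intro s hs hs'
      simp_rw [hexp s hs]
      rw [mp_lintegral P₁ X hX]
      refine ne_top_of_le_ne_top (mp_finite _ a ha c hc hsum ?_)
        (ENNReal.tsum_le_tsum fun n => mul_le_mul_right (hmom n).2 _)
      calc _ ≤ ∑ _i : Fin m, ENNReal.ofReal (a / (m + 1)) :=
            Finset.sum_le_sum fun i _ => ENNReal.ofReal_le_ofReal (hεb s hs hs' i)
        _ = ENNReal.ofReal (m * (a / (m + 1))) := by
            rw [ENNReal.ofReal_mul (Nat.cast_nonneg _)]; simp
        _ ≤ ENNReal.ofReal a := by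
            refine ENNReal.ofReal_le_ofReal ?_
            rw [mul_div_assoc', div_le_iff₀ (by positivity)]
            nlinarith
  have hlaw : Measure.map X P₁ = Measure.map Y P₂ := by
    refine Measure.ext_of_singleton fun x => ?_
    rw [Measure.map_apply hX (measurableSet_singleton x),
      Measure.map_apply hY (measurableSet_singleton x)]
    have h := congrArg (fun μ => μ {mpForm x}) hmap
    beta_reduce at h
    rw [Measure.map_apply (by fun_prop : Measurable fun ω => mpForm (X ω)) (measurableSet_singleton _),
      Measure.map_apply (by fun_prop : Measurable fun ω => mpForm (Y ω)) (measurableSet_singleton _)] at h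
    have e1 : (fun ω => mpForm (X ω)) ⁻¹' {mpForm x} = X ⁻¹' {x} := by
      ext ω; simp [mpForm_injective.eq_iff]
    have e2 : (fun ω => mpForm (Y ω)) ⁻¹' {mpForm x} = Y ⁻¹' {x} := by
      ext ω; simp [mpForm_injective.eq_iff]
    rwa [e1, e2] at h
  have hcast : Measurable fun (x : Fin m → ℕ) (i : Fin m) => (x i : ℝ) :=
    measurable_of_countable _
  have h := congrArg (Measure.map fun (x : Fin m → ℕ) (i : Fin m) => (x i : ℝ)) hlaw
  rwa [Measure.map_map hcast hX, Measure.map_map hcast hY] at h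
end
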